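/- For every n ≥ 1, the iterated commutator map cₙ : PU(2)ⁿ → PU(2), sending (g₁,…,gₙ) to cₙ(g₁,…,gₙ) where c₁(g₁) = g₁ and cₖ(g₁,…,gₖ) = [gₖ, cₖ₋₁(g₁,…,gₖ₋₁)] with [x,y] = xyx⁻¹y⁻¹, is a continuous map which is not null-homotopic. -/

import Mathlib

/-- The special unitary group `SU(n)`: the subgroup of the unitary group
`U(n) = Matrix.unitaryGroup (Fin n) ℂ` consisting of matrices of determinant `1`. -/
def SU (n : ℕ) : Subgroup (Matrix.unitaryGroup (Fin n) ℂ) where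
  carrier := {A | (A : Matrix (Fin n) (Fin n) ℂ).det = 1}
  mul_mem' := by
    intro a b ha hb
    simp only [Set.mem_setOf_eq] at *
    simp [Matrix.UnitaryGroup.mul_val, Matrix.det_mul, ha, hb]
  one_mem' := by simp
  inv_mem' := by
    intro a ha
    simp only [Set.mem_setOf_eq] at *
    show ((a⁻¹ : Matrix.unitaryGroup (Fin n) ℂ) : Matrix (Fin n) (Fin n) ℂ).det = 1
    rw [Matrix.UnitaryGroup.inv_val, Matrix.star_eq_conjTranspose, Matrix.det_conjTranspose, ha]
    simp

/-- The projective unitary group `PU(n)`: the quotient of `SU(n)` by its center,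
with the quotient topology. -/
abbrev PU (n : ℕ) := SU n ⧸ Subgroup.center (SU n)

/-- The iterated commutator `cₙ`:  `c₁(g₁) = g₁` and
`cₖ(g₁, …, gₖ) = [gₖ, cₖ₋₁(g₁, …, gₖ₋₁)]` where `[x,y] = x y x⁻¹ y⁻¹`. -/
def iteratedCommutator {G : Type*} [Group G] : (n : ℕ) → (Fin n → G) → G
  | 0, _ => 1
  | 1, g => g 0
  | (n + 2), g =>
      g (Fin.last (n + 1)) * iteratedCommutator (n + 1) (fun i => g i.castSucc) *
        (g (Fin.last (n + 1)))⁻¹ *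
          (iteratedCommutator (n + 1) (fun i => g i.castSucc))⁻¹

set_option linter.all false

namespace KT

open Matrix unitInterval

noncomputable section Framework

variable {X Y Z : Type} [TopologicalSpace X] [TopologicalSpace Y] [TopologicalSpace Z]

/-- A continuous family of invertible matrices, compatible with a relation. -/
structure Fam (r : X → X → Prop) (ι : Type) [Fintype ι] [DecidableEq ι] where
  f : X → Matrix ι ι ℂ
  cont : Continuous f
  unit : ∀ x, IsUnit (f x)
  rel : ∀ x y, r x y → f x = f y

attribute [fun_prop] Fam.cont

variable {r : X → X → Prop} {ι κ α β : Type} [Fintype ι] [DecidableEq ι] [Fintype κ]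
  [DecidableEq κ] [Fintype α] [DecidableEq α] [Fintype β] [DecidableEq β]

/-- relation on `I × X` -/
def rI (r : X → X → Prop) : I × X → I × X → Prop := fun p q => p.1 = q.1 ∧ r p.2 q.2

namespace Fam

theorem ext' {f g : Fam r ι} (h : ∀ x, f.f x = g.f x) : f = g := by
  cases f; cases g; simp only [Fam.mk.injEq]; exact funext h

instance : One (Fam r ι) := ⟨⟨fun _ => 1, continuous_const, fun _ => isUnit_one, fun _ _ _ => rfl⟩⟩

instance : Mul (Fam r ι) := ⟨fun a b => ⟨fun x => a.f x * b.f x, a.cont.matrix_mul b.cont,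
  fun x => (a.unit x).mul (b.unit x), fun x y h => by rw [a.rel x y h, b.rel x y h]⟩⟩

theorem continuous_inv_of {f : X → Matrix ι ι ℂ} (hf : Continuous f) (hu : ∀ x, IsUnit (f x)) :
    Continuous (fun x => (f x)⁻¹) := by
  simp only [Matrix.inv_def]
  simp only [Ring.inverse_eq_inv']
  have h : Continuous fun x => (f x).det⁻¹ :=
    hf.matrix_det.inv₀ (fun x => ((Matrix.isUnit_iff_isUnit_det _).1 (hu x)).ne_zero)
  exact h.smul hf.matrix_adjugate

theorem isUnit_inv {A : Matrix ι ι ℂ} (h : IsUnit A) : IsUnit A⁻¹ := by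
  rw [Matrix.isUnit_nonsing_inv_iff]; exact h

instance : Inv (Fam r ι) := ⟨fun a => ⟨fun x => (a.f x)⁻¹, continuous_inv_of a.cont a.unit,
  fun x => isUnit_inv (a.unit x), fun x y h => by rw [a.rel x y h]⟩⟩

@[simp] theorem one_f (x : X) : (1 : Fam r ι).f x = 1 := rfl
@[simp] theorem mul_f (a b : Fam r ι) (x : X) : (a * b).f x = a.f x * b.f x := rfl
@[simp] theorem inv_f (a : Fam r ι) (x : X) : (a⁻¹).f x = (a.f x)⁻¹ := rfl

@[simp] theorem mul_inv_f (a : Fam r ι) (x : X) : a.f x * (a.f x)⁻¹ = 1 :=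
  Matrix.mul_nonsing_inv _ ((Matrix.isUnit_iff_isUnit_det _).1 (a.unit x))
@[simp] theorem inv_mul_f (a : Fam r ι) (x : X) : (a.f x)⁻¹ * a.f x = 1 :=
  Matrix.nonsing_inv_mul _ ((Matrix.isUnit_iff_isUnit_det _).1 (a.unit x))

instance : Group (Fam r ι) where
  mul_assoc a b c := ext' fun x => by simp [Matrix.mul_assoc]
  one_mul a := ext' fun x => by simp
  mul_one a := ext' fun x => by simp
  inv_mul_cancel a := ext' fun x => by simp

theorem isUnit_fromBlocks {A : Matrix ι ι ℂ} {B : Matrix κ κ ℂ} (hA : IsUnit A) (hB : IsUnit B) :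
    IsUnit (fromBlocks A 0 0 B) := by
  rw [Matrix.isUnit_iff_isUnit_det, Matrix.det_fromBlocks_zero₂₁]
  exact ((Matrix.isUnit_iff_isUnit_det _).1 hA).mul ((Matrix.isUnit_iff_isUnit_det _).1 hB)

/-- block sum -/
def sum (a : Fam r ι) (b : Fam r κ) : Fam r (ι ⊕ κ) where
  f x := fromBlocks (a.f x) 0 0 (b.f x)
  cont := a.cont.matrix_fromBlocks continuous_const continuous_const b.cont
  unit x := isUnit_fromBlocks (a.unit x) (b.unit x)
  rel x y h := by rw [a.rel x y h, b.rel x y h]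

/-- reindexing -/
def re (e : ι ≃ κ) (a : Fam r ι) : Fam r κ where
  f x := Matrix.reindex e e (a.f x)
  cont := a.cont.matrix_reindex e e
  unit x := by
    have := (a.unit x).map (Matrix.reindexAlgEquiv ℂ ℂ e)
    simpa using this
  rel x y h := by rw [a.rel x y h]

/-- pull back -/
def comp {s : Y → Y → Prop} (a : Fam r ι) (φ : Y → X) (hφ : Continuous φ)
    (h : ∀ y y', s y y' → r (φ y) (φ y')) : Fam s ι where
  f y := a.f (φ y)
  cont := a.cont.comp hφ
  unit y := a.unit _
  rel x y hh := a.rel _ _ (h _ _ hh)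

@[simp] theorem sum_f (a : Fam r ι) (b : Fam r κ) (x : X) :
  (a.sum b).f x = fromBlocks (a.f x) 0 0 (b.f x) := rfl
@[simp] theorem re_f (e : ι ≃ κ) (a : Fam r ι) (x : X) :
  (a.re e).f x = Matrix.reindex e e (a.f x) := rfl
@[simp] theorem comp_f {s : Y → Y → Prop} (a : Fam r ι) (φ : Y → X) (hφ : Continuous φ)
    (h : ∀ y y', s y y' → r (φ y) (φ y')) (y : Y) : (a.comp φ hφ h).f y = a.f (φ y) := rfl

theorem sum_mul (a a' : Fam r ι) (b b' : Fam r κ) :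
    (a * a').sum (b * b') = a.sum b * a'.sum b' := ext' fun x => by
  simp [fromBlocks_multiply]

theorem sum_one : (1 : Fam r ι).sum (1 : Fam r κ) = 1 := ext' fun x => by simp

theorem re_mul (e : ι ≃ κ) (a b : Fam r ι) : (a * b).re e = a.re e * b.re e := ext' fun x => by
  simp

theorem re_one (e : ι ≃ κ) : (1 : Fam r ι).re e = 1 := ext' fun x => by simp

theorem sum_inv (a : Fam r ι) (b : Fam r κ) : (a.sum b)⁻¹ = a⁻¹.sum b⁻¹ := by
  symm; apply eq_inv_of_mul_eq_one_left; rw [← sum_mul]; simp [sum_one]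

theorem re_inv (e : ι ≃ κ) (a : Fam r ι) : (a.re e)⁻¹ = a⁻¹.re e := by
  symm; apply eq_inv_of_mul_eq_one_left; rw [← re_mul]; simp [re_one]

/-- homotopy of families -/
def Hmt (a b : Fam r ι) : Prop :=
  ∃ H : Fam (rI r) ι, (∀ x, H.f (0, x) = a.f x) ∧ ∀ x, H.f (1, x) = b.f x

theorem Hmt.refl (a : Fam r ι) : Hmt a a :=
  ⟨a.comp Prod.snd continuous_snd (fun _ _ h => h.2), fun _ => rfl, fun _ => rfl⟩

theorem Hmt.of_eq {a b : Fam r ι} (h : a = b) : Hmt a b := h ▸ Hmt.refl a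

theorem Hmt.symm {a b : Fam r ι} (h : Hmt a b) : Hmt b a := by
  obtain ⟨H, h0, h1⟩ := h
  refine ⟨H.comp (fun p => (σ p.1, p.2)) (by fun_prop) ?_, ?_, ?_⟩
  · rintro ⟨s, x⟩ ⟨t, y⟩ ⟨h1, h2⟩
    exact ⟨congrArg σ h1, h2⟩
  · intro x; simp [h1]
  · intro x; simp [h0]

theorem Hmt.mul {a b a' b' : Fam r ι} (h : Hmt a b) (h' : Hmt a' b') : Hmt (a * a') (b * b') := by
  obtain ⟨H, h0, h1⟩ := h
  obtain ⟨H', h0', h1'⟩ := h'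
  exact ⟨H * H', fun x => by simp [h0, h0'], fun x => by simp [h1, h1']⟩

theorem Hmt.trans {a b c : Fam r ι} (h : Hmt a b) (h' : Hmt b c) : Hmt a c := by
  -- a ~ b, so a = a * 1 ~ ..., using the pointwise group structure
  obtain ⟨H, h0, h1⟩ := h
  obtain ⟨H', h0', h1'⟩ := h'
  refine ⟨H * (b.comp Prod.snd continuous_snd (fun _ _ h => h.2))⁻¹ * H', fun x => ?_, fun x => ?_⟩
  · simp [h0, h0', Matrix.mul_assoc]
  · simp [h1, h1']

theorem Hmt.inv {a b : Fam r ι} (h : Hmt a b) : Hmt a⁻¹ b⁻¹ := by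
  obtain ⟨H, h0, h1⟩ := h
  exact ⟨H⁻¹, fun x => by simp [h0], fun x => by simp [h1]⟩

theorem Hmt.sum {a b : Fam r ι} {a' b' : Fam r κ} (h : Hmt a b) (h' : Hmt a' b') :
    Hmt (a.sum a') (b.sum b') := by
  obtain ⟨H, h0, h1⟩ := h
  obtain ⟨H', h0', h1'⟩ := h'
  exact ⟨H.sum H', fun x => by simp [h0, h0'], fun x => by simp [h1, h1']⟩

theorem Hmt.re {a b : Fam r ι} (e : ι ≃ κ) (h : Hmt a b) : Hmt (a.re e) (b.re e) := by
  obtain ⟨H, h0, h1⟩ := h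
  exact ⟨H.re e, fun x => by simp [h0], fun x => by simp [h1]⟩

theorem Hmt.comp {s : Y → Y → Prop} {a b : Fam r ι} (H : Hmt a b) (φ : Y → X) (hφ : Continuous φ)
    (h : ∀ y y', s y y' → r (φ y) (φ y')) : Hmt (a.comp φ hφ h) (b.comp φ hφ h) := by
  obtain ⟨H, h0, h1⟩ := H
  refine ⟨H.comp (fun p => (p.1, φ p.2)) (by fun_prop) ?_, ?_, ?_⟩
  · rintro ⟨s, x⟩ ⟨t, y⟩ ⟨h1, h2⟩
    exact ⟨h1, h _ _ h2⟩
  · intro x; simp [h0]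
  · intro x; simp [h1]

end Fam

/-- scalar two by two block matrices -/
def sm (ι : Type) [DecidableEq ι] (a b c d : ℂ) : Matrix (ι ⊕ ι) (ι ⊕ ι) ℂ :=
  fromBlocks (a • (1 : Matrix ι ι ℂ)) (b • (1 : Matrix ι ι ℂ)) (c • (1 : Matrix ι ι ℂ))
    (d • (1 : Matrix ι ι ℂ))

theorem sm_mul (a b c d a' b' c' d' : ℂ) : sm ι a b c d * sm ι a' b' c' d' =
    sm ι (a * a' + b * c') (a * b' + b * d') (c * a' + d * c') (c * b' + d * d') := by
  simp [sm, fromBlocks_multiply, smul_smul, ← add_smul, mul_comm]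

theorem sm_one : sm ι 1 0 0 1 = 1 := by simp [sm]

theorem sm_cont {a b c d : X → ℂ} (ha : Continuous a) (hb : Continuous b) (hc : Continuous c)
    (hd : Continuous d) : Continuous (fun x => sm ι (a x) (b x) (c x) (d x)) := by
  unfold sm
  exact (ha.smul continuous_const).matrix_fromBlocks (hb.smul continuous_const)
    (hc.smul continuous_const) (hd.smul continuous_const)

theorem isUnit_of_mul_eq_one {A B : Matrix ι ι ℂ} (h : A * B = 1) : IsUnit A :=
  (Matrix.isUnit_iff_isUnit_det _).2 (Matrix.isUnit_det_of_right_inverse h)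

/-- rotation family -/
noncomputable def rotF (r : X → X → Prop) (ι : Type) [Fintype ι] [DecidableEq ι] :
    Fam (rI r) (ι ⊕ ι) where
  f p := sm ι (Real.cos (Real.pi / 2 * p.1) : ℝ) (-(Real.sin (Real.pi / 2 * p.1) : ℝ))
    (Real.sin (Real.pi / 2 * p.1) : ℝ) (Real.cos (Real.pi / 2 * p.1) : ℝ)
  cont := by
    apply sm_cont <;> fun_prop
  unit p := by
    refine isUnit_of_mul_eq_one (B := sm ι (Real.cos (Real.pi / 2 * p.1) : ℝ)
      (Real.sin (Real.pi / 2 * p.1) : ℝ)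
      (-(Real.sin (Real.pi / 2 * p.1) : ℝ)) (Real.cos (Real.pi / 2 * p.1) : ℝ)) ?_
    rw [sm_mul, ← sm_one]
    have h : ((Real.cos (Real.pi / 2 * p.1) : ℝ) : ℂ) ^ 2
        + ((Real.sin (Real.pi / 2 * p.1) : ℝ) : ℂ) ^ 2 = 1 := by
      exact_mod_cast Real.cos_sq_add_sin_sq _
    congr 1 <;> first | linear_combination h | ring
  rel p q h := by rw [h.1]

namespace Fam

theorem whitehead (a b : Fam r ι) : Hmt (a.sum b) ((a * b).sum (1 : Fam r ι)) := by
  apply Hmt.symm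
  let q : Fam (rI r) ι := a.comp Prod.snd continuous_snd (fun _ _ h => h.2)
  let q' : Fam (rI r) ι := b.comp Prod.snd continuous_snd (fun _ _ h => h.2)
  refine ⟨q.sum 1 * (rotF r ι * q'.sum 1 * (rotF r ι)⁻¹), fun x => ?_, fun x => ?_⟩
  · have : (rotF r ι).f (0, x) = 1 := by simp [rotF, sm_one]
    simp [this, q, q', fromBlocks_multiply]
  · have h1 : (rotF r ι).f (1, x) = sm ι 0 (-1) 1 0 := by simp [rotF]
    have h2 : (sm ι 0 (-1) 1 0)⁻¹ = sm ι 0 1 (-1) 0 := by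
      apply Matrix.inv_eq_right_inv; rw [sm_mul]; simp [sm_one]
    simp only [mul_f, inv_f, h1, h2]
    simp [q, q', sm, fromBlocks_multiply]

/-- stably null -/
def N (a : Fam r ι) : Prop :=
  ∃ (α : Type) (_ : Fintype α) (_ : DecidableEq α), Hmt (a.sum (1 : Fam r α)) 1

theorem N.hmt {a b : Fam r ι} (h : Hmt a b) (hb : N b) : N a := by
  obtain ⟨α, i1, i2, H⟩ := hb
  exact ⟨α, i1, i2, (h.sum (Hmt.refl _)).trans H⟩

theorem N.one : N (1 : Fam r ι) := ⟨Unit, _, inferInstance, Hmt.of_eq sum_one⟩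

theorem N.re {a : Fam r ι} (e : ι ≃ κ) (h : N a) : N (a.re e) := by
  obtain ⟨α, i1, i2, H⟩ := h
  refine ⟨α, i1, i2, ?_⟩
  have := H.re (Equiv.sumCongr e (Equiv.refl α))
  rw [re_one] at this
  refine (Hmt.of_eq (ext' fun x => ?_)).trans this
  ext (i | i) (j | j) <;> simp

theorem re_re (e : ι ≃ κ) (e' : κ ≃ α) (a : Fam r ι) : (a.re e).re e' = a.re (e.trans e') :=
  ext' fun x => by ext; simp

theorem N.of_re {a : Fam r ι} (e : ι ≃ κ) (h : N (a.re e)) : N a := by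
  have := h.re e.symm
  rw [re_re] at this
  convert this
  exact ext' fun x => by ext; simp

theorem N.sum {a : Fam r ι} {b : Fam r κ} (h : N a) (h' : N b) : N (a.sum b) := by
  obtain ⟨α, i1, i2, H⟩ := h
  obtain ⟨β, j1, j2, H'⟩ := h'
  refine ⟨α ⊕ β, inferInstance, inferInstance, ?_⟩
  have := (H.sum H').re (Equiv.sumSumSumComm ι α κ β)
  rw [sum_one, re_one] at this
  refine (Hmt.of_eq (ext' fun x => ?_)).trans this
  ext ((i | i) | (i | i)) ((j | j) | (j | j)) <;> simp [Matrix.one_apply]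

theorem N.of_sum_one {a : Fam r ι} (h : N (a.sum (1 : Fam r κ))) : N a := by
  obtain ⟨α, i1, i2, H⟩ := h
  refine ⟨κ ⊕ α, inferInstance, inferInstance, ?_⟩
  have := H.re (Equiv.sumAssoc ι κ α)
  rw [re_one] at this
  refine (Hmt.of_eq (ext' fun x => ?_)).trans this
  ext (i | (i | i)) (j | (j | j)) <;> simp [Matrix.one_apply]

theorem N.inv {a : Fam r ι} (h : N a) : N a⁻¹ := by
  obtain ⟨α, i1, i2, H⟩ := h
  refine ⟨α, i1, i2, ?_⟩
  have := H.inv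
  rwa [sum_inv, inv_one, inv_one] at this

theorem N.self (a : Fam r ι) : N (a.sum a⁻¹) :=
  N.hmt (whitehead _ _) (by rw [mul_inv_cancel, sum_one]; exact N.one)

theorem N.self' (a : Fam r ι) : N (a⁻¹.sum a) :=
  N.hmt (whitehead _ _) (by rw [inv_mul_cancel, sum_one]; exact N.one)

/-- If `a ⊕ b` and `b` are null then so is `a`. -/
theorem N.cancel {a : Fam r ι} {b : Fam r κ} (h : N (a.sum b)) (h' : N b) : N a := by
  obtain ⟨β, j1, j2, H'⟩ := h'
  have h1 : N ((a.sum b).sum (1 : Fam r β)) := h.sum N.one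
  have h2 : N (a.sum (b.sum (1 : Fam r β))) := by
    have := h1.re (Equiv.sumAssoc ι κ β)
    convert this
    refine (ext' fun x => ?_)
    ext (i | (i | i)) (j | (j | j)) <;> simp [Matrix.one_apply]
  exact N.of_sum_one (N.hmt ((Hmt.refl a).sum H'.symm) h2)

end Fam

/-- bundled objects -/
structure Obj (r : X → X → Prop) where
  ι : Type
  i1 : Fintype ι
  i2 : DecidableEq ι
  a : Fam r ι

attribute [instance] Obj.i1 Obj.i2

open Fam

theorem N_trans {a : Fam r ι} {b : Fam r κ} {c : Fam r α} (h : N (a.sum b⁻¹)) (h' : N (b.sum c⁻¹)) :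
    N (a.sum c⁻¹) := by
  refine N.cancel (b := b⁻¹.sum b) ?_ (N.self' b)
  let e : (ι ⊕ κ) ⊕ (κ ⊕ α) ≃ (ι ⊕ α) ⊕ (κ ⊕ κ) :=
    ((Equiv.refl _).sumCongr (Equiv.sumComm κ α)).trans (Equiv.sumSumSumComm ι κ α κ)
  have := (h.sum h').re e
  convert this
  refine (ext' fun x => ?_)
  ext ((i | i) | (i | i)) ((j | j) | (j | j)) <;> simp [e]

theorem N_symm {a : Fam r ι} {b : Fam r κ} (h : N (a.sum b⁻¹)) : N (b.sum a⁻¹) := by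
  have := h.inv.re (Equiv.sumComm _ _)
  rw [sum_inv, inv_inv] at this
  convert this
  refine (ext' fun x => ?_)
  ext (i | i) (j | j) <;> simp

theorem N_add {a : Fam r ι} {b : Fam r κ} {a' : Fam r α} {b' : Fam r β} (h : N (a.sum b⁻¹))
    (h' : N (a'.sum b'⁻¹)) : N ((a.sum a').sum (b.sum b')⁻¹) := by
  have := (h.sum h').re (Equiv.sumSumSumComm ι κ α β)
  rw [sum_inv]
  convert this
  refine (ext' fun x => ?_)
  ext ((i | i) | (i | i)) ((j | j) | (j | j)) <;> simp

instance objSetoid (r : X → X → Prop) : Setoid (Obj r) where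
  r A B := N (A.a.sum B.a⁻¹)
  iseqv := ⟨fun A => N.self _, fun h => N_symm h, fun h hh => N_trans h hh⟩

/-- The group `K`. -/
def K (r : X → X → Prop) : Type 1 := Quotient (objSetoid r)

/-- the class of a family -/
def cls (a : Fam r ι) : K r := Quotient.mk (objSetoid r) ⟨ι, inferInstance, inferInstance, a⟩

theorem cls_eq_iff {a : Fam r ι} {b : Fam r κ} : cls a = cls b ↔ N (a.sum b⁻¹) := by
  constructor
  · intro h; exact Quotient.exact h
  · intro h; exact Quotient.sound (s := objSetoid r) h

theorem cls_of_hmt {a b : Fam r ι} (h : Hmt a b) : cls a = cls b :=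
  cls_eq_iff.2 (N.hmt (h.sum (Hmt.refl _)) (N.self b))

theorem cls_re (e : ι ≃ κ) (a : Fam r ι) : cls (a.re e) = cls a := by
  refine cls_eq_iff.2 ?_
  have := (N.self a).re (Equiv.sumCongr e (Equiv.refl _))
  convert this
  refine (ext' fun x => ?_)
  ext (i | i) (j | j) <;> simp

theorem ind {p : K r → Prop} (h : ∀ (ι : Type) [Fintype ι] [DecidableEq ι] (a : Fam r ι), p (cls a)) :
    ∀ k, p k := fun k => Quotient.inductionOn k fun A => h A.ι A.a

instance : Add (K r) := ⟨Quotient.map₂ (fun A B => ⟨A.ι ⊕ B.ι, inferInstance, inferInstance,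
  A.a.sum B.a⟩) fun _ _ h _ _ h' => N_add h h'⟩
instance : Neg (K r) := ⟨Quotient.map (fun A => ⟨A.ι, inferInstance, inferInstance, A.a⁻¹⟩)
  fun A B (h : N _) => by
    have := h.inv; rw [sum_inv] at this; exact this⟩
instance : Zero (K r) := ⟨cls (1 : Fam r Empty)⟩

theorem cls_sum (a : Fam r ι) (b : Fam r κ) : cls (a.sum b) = cls a + cls b := rfl
theorem cls_inv (a : Fam r ι) : cls (a⁻¹) = - cls a := rfl
theorem zero_def : (0 : K r) = cls (1 : Fam r Empty) := rfl

theorem cls_one : cls (1 : Fam r ι) = 0 := by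
  rw [zero_def, cls_eq_iff, inv_one, sum_one]; exact N.one

theorem cls_add_comm (a : Fam r ι) (b : Fam r κ) : cls a + cls b = cls b + cls a := by
  rw [← cls_sum, ← cls_re (Equiv.sumComm ι κ), ← cls_sum]
  congr 1
  refine (ext' fun x => ?_)
  ext (i | i) (j | j) <;> simp

theorem cls_add_assoc (a : Fam r ι) (b : Fam r κ) (c : Fam r α) :
    cls a + cls b + cls c = cls a + (cls b + cls c) := by
  rw [← cls_sum, ← cls_sum, ← cls_re (Equiv.sumAssoc ι κ α), ← cls_sum, ← cls_sum]
  congr 1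
  refine (ext' fun x => ?_)
  ext (i | (i | i)) (j | (j | j)) <;> simp

theorem cls_zero_add (a : Fam r ι) : 0 + cls a = cls a := by
  rw [zero_def, ← cls_sum, ← cls_re (Equiv.emptySum Empty ι)]
  congr 1

theorem cls_eq_zero_iff {a : Fam r ι} : cls a = 0 ↔ N a := by
  rw [zero_def, cls_eq_iff, inv_one]
  exact ⟨fun h => N.of_sum_one h, fun h => h.sum N.one⟩

instance : AddCommGroup (K r) where
  add_assoc := by
    intro a b c
    induction a using ind
    induction b using ind
    induction c using ind
    exact cls_add_assoc _ _ _
  zero_add := by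
    intro a
    induction a using ind
    exact cls_zero_add _
  add_zero := by
    intro a
    induction a using ind
    rw [zero_def, cls_add_comm]; exact cls_zero_add _
  add_comm := by
    intro a b
    induction a using ind
    induction b using ind
    exact cls_add_comm _ _
  neg_add_cancel := by
    intro a
    induction a using ind
    rw [← cls_inv, ← cls_sum]; exact cls_eq_zero_iff.2 (N.self' _)
  nsmul := nsmulRec
  zsmul := zsmulRec

theorem cls_sum_one (a : Fam r ι) : cls (a.sum (1 : Fam r κ)) = cls a := by
  rw [cls_sum, cls_one, add_zero]

theorem cls_one_sum (a : Fam r ι) : cls ((1 : Fam r κ).sum a) = cls a := by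
  rw [cls_sum, cls_one, zero_add]

theorem cls_mul (a b : Fam r ι) : cls (a * b) = cls a + cls b := by
  rw [← cls_sum, cls_of_hmt (whitehead a b), cls_sum_one]

theorem N_comp {s : Y → Y → Prop} {a : Fam r ι} (h : N a) (φ : Y → X) (hφ : Continuous φ)
    (hr : ∀ y y', s y y' → r (φ y) (φ y')) : N (a.comp φ hφ hr) := by
  obtain ⟨α, i1, i2, H⟩ := h
  exact ⟨α, i1, i2, H.comp φ hφ hr⟩

/-- pullback -/
def K.map {s : Y → Y → Prop} (φ : Y → X) (hφ : Continuous φ)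
    (hr : ∀ y y', s y y' → r (φ y) (φ y')) : K r →+ K s where
  toFun := Quotient.map (fun A => ⟨A.ι, inferInstance, inferInstance, A.a.comp φ hφ hr⟩)
    fun A B (h : N _) => N_comp h φ hφ hr
  map_zero' := rfl
  map_add' := by
    intro a b
    induction a using ind
    induction b using ind
    rfl

theorem K.map_cls {s : Y → Y → Prop} (φ : Y → X) (hφ : Continuous φ)
    (hr : ∀ y y', s y y' → r (φ y) (φ y')) (a : Fam r ι) :
    K.map φ hφ hr (cls a) = cls (a.comp φ hφ hr) := rfl

end Framework
end KT

namespace KT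

open Matrix unitInterval Filter Topology
open scoped Kronecker Matrix.Norms.L2Operator

noncomputable section Quant

variable {ι : Type} [Fintype ι] [DecidableEq ι]

/-- index set of sample points -/
abbrev Rho (m : ℕ) := Fin (m * m + 1 + m) × Fin (m * m + 1)

/-- sample heights -/
def tt (m : ℕ) (r : ℕ) : I := Set.projIcc (0 : ℝ) 1 zero_le_one (r / ((m * m + 1 + m : ℕ) : ℝ))

/-- sample points on the circle -/
def zz (m : ℕ) (a : ℕ) : Circle := Circle.exp (2 * Real.pi * a / ((m * m + 1 : ℕ) : ℝ))

/-- sample points -/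
def pt (m : ℕ) (x : Rho m) : I × Circle := (tt m x.1, zz m x.2)

/-- normalisation constant -/
def cst (m : ℕ) : ℂ := ((1 / Real.sqrt ((m * m + 1 : ℕ) * m) : ℝ) : ℂ)

/-- matrices with orthogonal columns -/
def colM (m : ℕ) (J : ℤ) (c : Fin (m * m + 1) → ℕ → ℂ) :
    Matrix (Rho m) (Fin (m * m + 1)) ℂ :=
  Matrix.of fun x k => cst m * ((zz m x.2 : ℂ) ^ ((k : ℤ) + J) * c k x.1)

theorem zz_zpow (m a : ℕ) (j : ℤ) : ((zz m a : Circle) : ℂ) ^ j =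
    (Complex.exp (2 * Real.pi * Complex.I * j / ((m * m + 1 : ℕ) : ℂ))) ^ a := by
  rw [zz, Circle.coe_exp, ← Complex.exp_int_mul, ← Complex.exp_nat_mul]
  congr 1
  push_cast
  ring

theorem root_ne_one (n : ℕ) (hn : 0 < n) (j : ℤ) (hj : j ≠ 0) (hj' : |j| < n) :
    Complex.exp (2 * Real.pi * Complex.I * j / (n : ℂ)) ≠ 1 := by
  intro h
  rw [Complex.exp_eq_one_iff] at h
  obtain ⟨k, hk⟩ := h
  have hpi : (2 * Real.pi * Complex.I : ℂ) ≠ 0 := Complex.two_pi_I_ne_zero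
  have hn' : (n : ℂ) ≠ 0 := by exact_mod_cast hn.ne'
  have : (j : ℂ) = k * n := by
    field_simp at hk
    rw [hk]; ring
  have h2 : j = k * n := by exact_mod_cast this
  have : (n : ℤ) ∣ j := ⟨k, by rw [h2]; ring⟩
  exact hj (Int.eq_zero_of_abs_lt_dvd this hj')

theorem root_pow (n : ℕ) (hn : 0 < n) (j : ℤ) :
    Complex.exp (2 * Real.pi * Complex.I * j / (n : ℂ)) ^ n = 1 := by
  rw [← Complex.exp_nat_mul, Complex.exp_eq_one_iff]
  refine ⟨j, ?_⟩
  have hn' : (n : ℂ) ≠ 0 := by exact_mod_cast hn.ne'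
  field_simp

theorem sum_zz (m : ℕ) (j : ℤ) (hj : |j| < (m * m + 1 : ℕ)) :
    ∑ a : Fin (m * m + 1), ((zz m a : Circle) : ℂ) ^ j = if j = 0 then ((m * m + 1 : ℕ) : ℂ) else 0 := by
  split_ifs with h
  · subst h; simp
  · simp only [zz_zpow]
    rw [Fin.sum_univ_eq_sum_range (fun a => Complex.exp _ ^ a)]
    have h1 := root_ne_one (m * m + 1) (Nat.succ_pos _) j h hj
    have h2 := root_pow (m * m + 1) (Nat.succ_pos _) j
    have h3 := mul_neg_geom_sum (Complex.exp (2 * Real.pi * Complex.I * j / ((m * m + 1 : ℕ) : ℂ))) (m * m + 1)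
    rw [h2, sub_self] at h3
    exact (mul_eq_zero.1 h3).resolve_left (sub_ne_zero.2 (Ne.symm h1))

theorem cst_sq (m : ℕ) (hm : 0 < m) : star (cst m) * cst m * ((m * m + 1 : ℕ) : ℂ) = ((1 / (m : ℝ) : ℝ) : ℂ) := by
  have h : star (cst m) = cst m := by simp [cst, Complex.conj_ofReal]
  rw [h, cst]
  have h0 : (0 : ℝ) < m := by exact_mod_cast hm
  have h1 : (0 : ℝ) < ((m * m + 1 : ℕ) : ℝ) := by positivity
  have h2 := Real.mul_self_sqrt (mul_pos h1 h0).le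
  have h3 : Real.sqrt (((m * m + 1 : ℕ) : ℝ) * m) ≠ 0 := (Real.sqrt_pos.2 (mul_pos h1 h0)).ne'
  have : (1 / Real.sqrt ((m * m + 1 : ℕ) * m) : ℝ) * (1 / Real.sqrt ((m * m + 1 : ℕ) * m) : ℝ) * ((m * m + 1 : ℕ) : ℝ) = 1 / m := by
    rw [div_mul_div_comm, h2]; field_simp
  exact_mod_cast this

theorem colM_gram (m : ℕ) (hm : 0 < m) (J : ℤ) (c : Fin (m * m + 1) → ℕ → ℂ) :
    (colM m J c)ᴴ * colM m J c = diagonal fun k =>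
      (((1 / (m : ℝ)) * ∑ r : Fin (m * m + 1 + m), ‖c k r‖ ^ 2 : ℝ) : ℂ) := by
  ext k l
  rw [Matrix.mul_apply, Fintype.sum_prod_type]
  have key : ∀ (r : Fin (m * m + 1 + m)) (a : Fin (m * m + 1)),
      (colM m J c)ᴴ k (r, a) * colM m J c (r, a) l =
      star (cst m) * cst m * (star (c k r) * c l r) * (zz m a : ℂ) ^ ((l : ℤ) - k) := by
    intro r a
    have hz : (zz m a : ℂ) ≠ 0 := Circle.coe_ne_zero _
    have hs : star ((zz m a : ℂ)) = (zz m a : ℂ)⁻¹ := by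
      rw [← Circle.coe_inv, Circle.coe_inv_eq_conj]; rfl
    simp only [colM, Matrix.conjTranspose_apply, Matrix.of_apply, star_mul', star_zpow₀, hs]
    rw [show ((l : ℤ) - k) = -((k : ℤ) + J) + ((l : ℤ) + J) by ring, zpow_add₀ hz (-((k : ℤ) + J)), _root_.inv_zpow']
    generalize (zz m a : ℂ) ^ (-((k : ℤ) + J)) = A
    generalize (zz m a : ℂ) ^ ((l : ℤ) + J) = B
    ring
  simp only [key, ← Finset.mul_sum]
  have hlt : |((l : ℤ) - k)| < (m * m + 1 : ℕ) := by
    have := l.2; have := k.2; rw [abs_lt]; omega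
  rw [sum_zz m _ hlt]
  by_cases hkl : k = l
  · subst hkl
    simp only [sub_self, if_true, diagonal_apply_eq]
    push_cast
    rw [Finset.mul_sum]
    refine Finset.sum_congr rfl fun r _ => ?_
    have h1 := cst_sq m hm
    push_cast at h1
    rw [← h1]
    have h2 : star (c k r) * c k r = ((‖c k r‖ : ℝ) : ℂ) ^ 2 := by
      rw [mul_comm]; exact RCLike.mul_conj _
    rw [← h2]; ring
  · have : ((l : ℤ) - k) ≠ 0 := by
      intro h; apply hkl; ext; omega
    simp [this, hkl]

theorem norm_col_le (m : ℕ) (hm : 0 < m) (J : ℤ) (c : Fin (m * m + 1) → ℕ → ℂ) (ε : ℝ) (hε : 0 ≤ ε)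
    (h : ∀ k, ∑ r : Fin (m * m + 1 + m), ‖c k r‖ ^ 2 ≤ m * ε ^ 2) :
    ‖(1 : Matrix ι ι ℂ) ⊗ₖ colM m J c‖ ≤ ε := by
  have h0 : (0 : ℝ) < m := by exact_mod_cast hm
  have h1 := l2_opNorm_conjTranspose_mul_self ((1 : Matrix ι ι ℂ) ⊗ₖ colM m J c)
  rw [conjTranspose_kronecker, ← mul_kronecker_mul, conjTranspose_one, one_mul, colM_gram m hm,
    ← diagonal_one, diagonal_kronecker_diagonal, l2_opNorm_diagonal] at h1
  have h2 : ‖(1 : Matrix ι ι ℂ) ⊗ₖ colM m J c‖ * ‖(1 : Matrix ι ι ℂ) ⊗ₖ colM m J c‖ ≤ ε * ε := by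
    rw [← diagonal_one, ← h1]
    rw [pi_norm_le_iff_of_nonneg (by positivity)]
    rintro ⟨i, k⟩
    rw [one_mul, Complex.norm_real, Real.norm_of_nonneg (by positivity)]
    have := h k
    rw [one_div, inv_mul_le_iff₀ h0]
    nlinarith
  exact abs_le_of_sq_le_sq' (by nlinarith) hε |>.2

/-- window indicator -/
def win (m : ℕ) (k : ℤ) (r : ℕ) : ℂ := if k ≤ r ∧ (r : ℤ) < k + m then 1 else 0

/-- the scalar isometry -/
def V0 (m : ℕ) : Matrix (Rho m) (Fin (m * m + 1)) ℂ := colM m 0 fun k r => win m k r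

theorem card_win (m : ℕ) (k : Fin (m * m + 1)) :
    ∑ r : Fin (m * m + 1 + m), ‖win m k r‖ ^ 2 = m := by
  have : ∀ r : Fin (m * m + 1 + m), ‖win m k r‖ ^ 2 = if ((k : ℕ) ≤ r ∧ (r : ℕ) < k + m) then 1 else 0 := by
    intro r
    have : ((k : ℤ) ≤ ((r : ℕ) : ℤ) ∧ ((r : ℕ) : ℤ) < (k : ℤ) + m) ↔ ((k : ℕ) ≤ r ∧ (r : ℕ) < k + m) := by omega
    simp only [win, this]
    split_ifs <;> simp
  simp only [this]
  rw [Fin.sum_univ_eq_sum_range (fun r => if ((k : ℕ) ≤ r ∧ r < k + m) then (1 : ℝ) else 0), Finset.sum_boole]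
  have : Finset.filter (fun r => (k : ℕ) ≤ r ∧ r < k + m) (Finset.range (m * m + 1 + m)) = Finset.Ico (k : ℕ) (k + m) := by
    ext r; have := k.2; simp; omega
  rw [this]; simp

theorem V0_iso (m : ℕ) (hm : 0 < m) : (V0 m)ᴴ * V0 m = 1 := by
  rw [V0, colM_gram m hm]
  simp only [card_win]
  rw [← diagonal_one]
  congr 1; ext k
  have h0 : (m : ℝ) ≠ 0 := by exact_mod_cast hm.ne'
  rw [one_div, inv_mul_cancel₀ h0]; simp

/-- weighted shift -/
def shf (m : ℕ) (J : ℤ) (d : Fin (m * m + 1) → ℂ) : Matrix (Fin (m * m + 1)) (Fin (m * m + 1)) ℂ :=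
  Matrix.of fun l k => if (l : ℤ) = k + J then d k else 0

theorem V0_shf (m : ℕ) (J : ℤ) (d : Fin (m * m + 1) → ℂ)
    (hd : ∀ k : Fin (m * m + 1), ¬ (0 ≤ (k : ℤ) + J ∧ (k : ℤ) + J < (m * m + 1 : ℕ)) → d k = 0) :
    V0 m * shf m J d = colM m J fun k r => d k * win m (k + J) r := by
  ext x k
  rw [Matrix.mul_apply]
  by_cases h : (0 ≤ (k : ℤ) + J ∧ (k : ℤ) + J < (m * m + 1 : ℕ))
  · obtain ⟨l, hl⟩ : ∃ l : Fin (m * m + 1), (l : ℤ) = k + J :=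
      ⟨⟨((k : ℤ) + J).toNat, by omega⟩, by simp; omega⟩
    rw [Finset.sum_eq_single l]
    · simp only [V0, colM, shf, Matrix.of_apply, ← hl, if_true, add_zero]
      ring
    · intro b _ hb
      have : (b : ℤ) ≠ k + J := by
        intro h; apply hb; ext; omega
      simp [shf, this]
    · simp
  · simp only [colM, shf, Matrix.of_apply, hd k h]
    simp

/-- multiplication operator -/
def DD (m : ℕ) (F : I × Circle → Matrix ι ι ℂ) : Matrix (ι × Rho m) (ι × Rho m) ℂ :=
  blockDiagonal fun x => F (pt m x)

/-- the isometry -/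
def VV (ι : Type) [DecidableEq ι] (m : ℕ) : Matrix (ι × Rho m) (ι × Fin (m * m + 1)) ℂ :=
  (1 : Matrix ι ι ℂ) ⊗ₖ V0 m

theorem DD_scalar (m : ℕ) (f : I × Circle → ℂ) :
    DD m (fun y => f y • (1 : Matrix ι ι ℂ)) = (1 : Matrix ι ι ℂ) ⊗ₖ diagonal fun x => f (pt m x) := by
  ext ⟨i, x⟩ ⟨j, y⟩
  simp only [DD, blockDiagonal_apply, kronecker_apply, diagonal_apply, Matrix.smul_apply, smul_eq_mul]
  split_ifs <;> ring

theorem diag_V0 (m : ℕ) (J : ℤ) (f : I → ℂ) :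
    (diagonal fun x => f (pt m x).1 * ((pt m x).2 : ℂ) ^ J) * V0 m =
      colM m J fun k r => f (tt m r) * win m k r := by
  ext x k
  rw [diagonal_mul]
  simp only [V0, colM, Matrix.of_apply, pt, add_zero]
  rw [zpow_add₀ (Circle.coe_ne_zero _)]
  ring

theorem sum_windiff (m : ℕ) (k J : ℤ) (hJ : |J| ≤ 1) :
    ∑ r : Fin (m * m + 1 + m), ‖win m k r - win m (k + J) r‖ ^ 2 ≤ 2 := by
  have h1 : ∀ r : Fin (m * m + 1 + m), ‖win m k r - win m (k + J) r‖ ^ 2 ≤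
      (if ((r : ℕ) : ℤ) = min k (k + J) then 1 else 0) + (if ((r : ℕ) : ℤ) = min k (k + J) + m then 1 else 0) := by
    intro r
    rw [abs_le] at hJ
    simp only [win]
    split_ifs <;> first | omega | norm_num
  refine (Finset.sum_le_sum fun r _ => h1 r).trans ?_
  rw [Finset.sum_add_distrib, Finset.sum_boole, Finset.sum_boole]
  have h2 : ∀ a : ℤ, ((Finset.univ.filter fun r : Fin (m * m + 1 + m) => ((r : ℕ) : ℤ) = a).card : ℝ) ≤ 1 := by
    intro a
    have : (Finset.univ.filter fun r : Fin (m * m + 1 + m) => ((r : ℕ) : ℤ) = a).card ≤ 1 := by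
      rw [Finset.card_le_one]
      intro x hx y hy
      simp at hx hy
      ext; omega
    exact_mod_cast this
  have := h2 (min k (k + J)); have := h2 (min k (k + J) + m)
  linarith

theorem shift_est (m : ℕ) (hm : 0 < m) (J : ℤ) (hJ : |J| ≤ 1) (f : I → ℂ)
    (d : Fin (m * m + 1) → ℂ)
    (hd : ∀ k : Fin (m * m + 1), ¬ (0 ≤ (k : ℤ) + J ∧ (k : ℤ) + J < (m * m + 1 : ℕ)) → d k = 0)
    (M ε : ℝ) (hM : ∀ k, ‖d k‖ ≤ M)
    (hε : ∀ (k : Fin (m * m + 1)) (r : ℕ), (k : ℕ) ≤ r → r < k + m → ‖f (tt m r) - d k‖ ≤ ε)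
    (ε' : ℝ) (hε' : 0 ≤ ε') (hh : 2 * ε ^ 2 + 4 * M ^ 2 / m ≤ ε' ^ 2) :
    ‖DD m (fun y => (f y.1 * (y.2 : ℂ) ^ J) • (1 : Matrix ι ι ℂ)) * VV ι m -
      VV ι m * ((1 : Matrix ι ι ℂ) ⊗ₖ shf m J d)‖ ≤ ε' := by
  have h0 : (0 : ℝ) < m := by exact_mod_cast hm
  rw [DD_scalar (f := fun y => f y.1 * (y.2 : ℂ) ^ J), VV, ← mul_kronecker_mul, ← mul_kronecker_mul, one_mul, diag_V0, V0_shf m J d hd]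
  have : (1 : Matrix ι ι ℂ) ⊗ₖ (colM m J fun k r => f (tt m r) * win m k r) -
      (1 : Matrix ι ι ℂ) ⊗ₖ (colM m J fun k r => d k * win m (k + J) r) =
      (1 : Matrix ι ι ℂ) ⊗ₖ (colM m J fun k r => f (tt m r) * win m k r - d k * win m (k + J) r) := by
    ext ⟨i, x⟩ ⟨j, k⟩
    simp only [Matrix.sub_apply, kronecker_apply, colM, Matrix.of_apply]
    ring
  rw [this]
  refine norm_col_le m hm J _ ε' hε' fun k => ?_
  have hb : ∀ r : Fin (m * m + 1 + m), ‖f (tt m r) * win m k r - d k * win m (k + J) r‖ ^ 2 ≤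
      2 * ε ^ 2 * ‖win m k r‖ ^ 2 + 2 * M ^ 2 * ‖win m k r - win m (k + J) r‖ ^ 2 := by
    intro r
    have e1 : f (tt m r) * win m k r - d k * win m (k + J) r =
      (f (tt m r) - d k) * win m k r + d k * (win m k r - win m (k + J) r) := by ring
    have e2 : ‖(f (tt m r) - d k) * win m k r‖ ≤ ε * ‖win m k r‖ := by
      rw [norm_mul]
      by_cases h : ((k : ℤ) ≤ ((r : ℕ) : ℤ) ∧ ((r : ℕ) : ℤ) < (k : ℤ) + m)
      · exact mul_le_mul_of_nonneg_right (hε k r (by omega) (by omega)) (norm_nonneg _)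
      · rw [win, if_neg h]; simp
    have e3 : ‖d k * (win m k r - win m (k + J) r)‖ ≤ M * ‖win m k r - win m (k + J) r‖ := by
      rw [norm_mul]; exact mul_le_mul_of_nonneg_right (hM k) (norm_nonneg _)
    rw [e1]
    have e4 := norm_add_le ((f (tt m r) - d k) * win m k r) (d k * (win m k r - win m (k + J) r))
    have p1 := norm_nonneg ((f (tt m r) - d k) * win m k r)
    have p2 := norm_nonneg (d k * (win m k r - win m (k + J) r))
    have p3 := norm_nonneg ((f (tt m r) - d k) * win m k r + d k * (win m k r - win m (k + J) r))
    have e5 : ‖(f (tt m r) - d k) * win m k r + d k * (win m k r - win m (k + J) r)‖ ≤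
       ε * ‖win m k r‖ + M * ‖win m k r - win m (k + J) r‖ := by linarith
    calc _ ≤ (ε * ‖win m k r‖ + M * ‖win m k r - win m (k + J) r‖) ^ 2 :=
          pow_le_pow_left₀ p3 e5 2
      _ ≤ _ := by nlinarith [sq_nonneg (ε * ‖win m k r‖ - M * ‖win m k r - win m (k + J) r‖)]
  refine (Finset.sum_le_sum fun r _ => hb r).trans ?_
  rw [Finset.sum_add_distrib, ← Finset.mul_sum, ← Finset.mul_sum, card_win]
  have h3 := sum_windiff m k J hJ
  have h4 : 2 * M ^ 2 * ∑ r : Fin (m * m + 1 + m), ‖win m k r - win m (k + J) r‖ ^ 2 ≤ 2 * M ^ 2 * 2 :=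
    mul_le_mul_of_nonneg_left h3 (by positivity)
  have h5 : m * (2 * ε ^ 2 + 4 * M ^ 2 / m) ≤ m * ε' ^ 2 := mul_le_mul_of_nonneg_left hh h0.le
  rw [mul_add, mul_div_cancel₀ _ h0.ne'] at h5
  linarith

end Quant
end KT

namespace KT

open Matrix unitInterval Filter Topology
open scoped Kronecker Matrix.Norms.L2Operator

noncomputable section Quant2

variable {ι : Type} [Fintype ι] [DecidableEq ι]

/-- compression -/
def Phi (m : ℕ) (F : I × Circle → Matrix ι ι ℂ) :
    Matrix (ι × Fin (m * m + 1)) (ι × Fin (m * m + 1)) ℂ := (VV ι m)ᴴ * DD m F * VV ι m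

/-- defect -/
def del (m : ℕ) (F : I × Circle → Matrix ι ι ℂ) : ℝ := ‖DD m F * VV ι m - VV ι m * Phi m F‖

theorem VV_iso (m : ℕ) (hm : 0 < m) : (VV ι m)ᴴ * VV ι m = 1 := by
  rw [VV, conjTranspose_kronecker, ← mul_kronecker_mul, V0_iso m hm]; simp

theorem norm_VV (m : ℕ) (hm : 0 < m) : ‖VV ι m‖ ≤ 1 := by
  have h := l2_opNorm_conjTranspose_mul_self (VV ι m)
  rw [VV_iso m hm, ← diagonal_one, l2_opNorm_diagonal] at h
  have h1 : ‖VV ι m‖ * ‖VV ι m‖ ≤ 1 := by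
    rw [← h]; rw [pi_norm_le_iff_of_nonneg zero_le_one]; simp
  nlinarith [norm_nonneg (VV ι m)]

theorem norm_VVt (m : ℕ) (hm : 0 < m) : ‖(VV ι m)ᴴ‖ ≤ 1 := by
  rw [l2_opNorm_conjTranspose]; exact norm_VV m hm

/-- complementary projection -/
def QQ (ι : Type) [Fintype ι] [DecidableEq ι] (m : ℕ) : Matrix (ι × Rho m) (ι × Rho m) ℂ :=
  1 - VV ι m * (VV ι m)ᴴ

theorem QQ_VV (m : ℕ) (hm : 0 < m) : QQ ι m * VV ι m = 0 := by
  rw [QQ, Matrix.sub_mul, Matrix.one_mul, Matrix.mul_assoc, VV_iso m hm, Matrix.mul_one, sub_self]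

theorem norm_QQ (m : ℕ) (hm : 0 < m) : ‖QQ ι m‖ ≤ 1 := by
  have h := l2_opNorm_conjTranspose_mul_self (QQ ι m)
  have h1 : (QQ ι m)ᴴ = QQ ι m := by simp [QQ]
  have h2 : QQ ι m * QQ ι m = QQ ι m := by
    conv_lhs => enter [2]; rw [QQ]
    rw [Matrix.mul_sub, Matrix.mul_one, ← Matrix.mul_assoc, QQ_VV m hm, Matrix.zero_mul, sub_zero]
  rw [h1, h2] at h
  nlinarith [norm_nonneg (QQ ι m)]

theorem del_eq (m : ℕ) (F : I × Circle → Matrix ι ι ℂ) : del m F = ‖QQ ι m * (DD m F * VV ι m)‖ := by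
  rw [del, QQ, Phi, Matrix.sub_mul, Matrix.one_mul]; simp only [Matrix.mul_assoc]

theorem del_le_of (m : ℕ) (hm : 0 < m) (F : I × Circle → Matrix ι ι ℂ) (T : Matrix (ι × Fin (m * m + 1)) (ι × Fin (m * m + 1)) ℂ) (ε : ℝ)
    (h : ‖DD m F * VV ι m - VV ι m * T‖ ≤ ε) : del m F ≤ ε := by
  rw [del_eq]
  have : QQ ι m * (DD m F * VV ι m) = QQ ι m * (DD m F * VV ι m - VV ι m * T) := by
    rw [Matrix.mul_sub, ← Matrix.mul_assoc _ (VV ι m), QQ_VV m hm, Matrix.zero_mul, sub_zero]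
  rw [this]
  calc _ ≤ ‖QQ ι m‖ * ‖DD m F * VV ι m - VV ι m * T‖ := l2_opNorm_mul _ _
    _ ≤ 1 * ε := mul_le_mul (norm_QQ m hm) h (norm_nonneg _) zero_le_one
    _ = ε := one_mul _

theorem phi_sub_le (m : ℕ) (hm : 0 < m) (F : I × Circle → Matrix ι ι ℂ) (T : Matrix (ι × Fin (m * m + 1)) (ι × Fin (m * m + 1)) ℂ) (ε : ℝ)
    (h : ‖DD m F * VV ι m - VV ι m * T‖ ≤ ε) : ‖Phi m F - T‖ ≤ ε := by
  have : Phi m F - T = (VV ι m)ᴴ * (DD m F * VV ι m - VV ι m * T) := by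
    rw [Matrix.mul_sub, ← Matrix.mul_assoc _ (VV ι m), VV_iso m hm, Matrix.one_mul, Phi, Matrix.mul_assoc]
  rw [this]
  calc _ ≤ ‖(VV ι m)ᴴ‖ * ‖DD m F * VV ι m - VV ι m * T‖ := l2_opNorm_mul _ _
    _ ≤ 1 * ε := mul_le_mul (norm_VVt m hm) h (norm_nonneg _) zero_le_one
    _ = ε := one_mul _

theorem DD_mul (m : ℕ) (F G : I × Circle → Matrix ι ι ℂ) : DD m (fun y => F y * G y) = DD m F * DD m G := by
  rw [DD, DD, DD, blockDiagonal_mul]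
theorem DD_add (m : ℕ) (F G : I × Circle → Matrix ι ι ℂ) : DD m (fun y => F y + G y) = DD m F + DD m G := by
  rw [DD, DD, DD, ← blockDiagonal_add]; rfl
theorem DD_sub (m : ℕ) (F G : I × Circle → Matrix ι ι ℂ) : DD m (fun y => F y - G y) = DD m F - DD m G := by
  rw [DD, DD, DD, ← blockDiagonal_sub]; rfl

theorem Phi_add (m : ℕ) (F G : I × Circle → Matrix ι ι ℂ) : Phi m (fun y => F y + G y) = Phi m F + Phi m G := by
  simp only [Phi, DD_add, Matrix.mul_add, Matrix.add_mul]

theorem del_add (m : ℕ) (F G : I × Circle → Matrix ι ι ℂ) : del m (fun y => F y + G y) ≤ del m F + del m G := by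
  rw [del_eq, del_eq, del_eq, DD_add, Matrix.add_mul, Matrix.mul_add]
  exact norm_add_le _ _

theorem norm_mul3 {a b c : Type} [Fintype a] [Fintype b] [Fintype c] [DecidableEq b] [DecidableEq c] [DecidableEq a]
    (A : Matrix a b ℂ) (B : Matrix b c ℂ) {x y : ℝ} (hA : ‖A‖ ≤ x) (hB : ‖B‖ ≤ y) : ‖A * B‖ ≤ x * y :=
  (l2_opNorm_mul A B).trans (mul_le_mul hA hB (norm_nonneg _) ((norm_nonneg _).trans hA))

theorem del_mul (m : ℕ) (hm : 0 < m) (F G : I × Circle → Matrix ι ι ℂ) :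
    del m (fun y => F y * G y) ≤ del m F * ‖DD m G‖ + ‖DD m F‖ * del m G := by
  have e : QQ ι m * (DD m (fun y => F y * G y) * VV ι m) =
      (QQ ι m * (DD m F * VV ι m)) * ((VV ι m)ᴴ * (DD m G * VV ι m)) +
      QQ ι m * (DD m F * (QQ ι m * (DD m G * VV ι m))) := by
    conv_rhs => enter [2, 2, 2]; rw [QQ]
    rw [DD_mul, Matrix.sub_mul, Matrix.one_mul, Matrix.mul_sub, Matrix.mul_sub]
    simp only [Matrix.mul_assoc]
    abel
  rw [del_eq, e]
  refine (norm_add_le _ _).trans (add_le_add ?_ ?_)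
  · refine norm_mul3 _ _ (del_eq m F).ge ?_
    have := norm_mul3 _ _ (norm_VVt (ι := ι) m hm) (norm_mul3 _ _ (le_refl ‖DD m G‖) (norm_VV (ι := ι) m hm))
    simpa using this
  · have := norm_mul3 _ _ (norm_QQ (ι := ι) m hm) (norm_mul3 _ _ (le_refl ‖DD m F‖) (del_eq m G).ge)
    simpa using this

theorem phi_mul (m : ℕ) (hm : 0 < m) (F G : I × Circle → Matrix ι ι ℂ) :
    ‖Phi m (fun y => F y * G y) - Phi m F * Phi m G‖ ≤ ‖DD m F‖ * del m G := by
  have e : Phi m (fun y => F y * G y) - Phi m F * Phi m G =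
      (VV ι m)ᴴ * (DD m F * (QQ ι m * (DD m G * VV ι m))) := by
    rw [QQ, Matrix.sub_mul, Matrix.one_mul, Matrix.mul_sub, Matrix.mul_sub, Phi, Phi, Phi, DD_mul]
    simp only [Matrix.mul_assoc]
  rw [e]
  have := norm_mul3 _ _ (norm_VVt (ι := ι) m hm) (norm_mul3 _ _ (le_refl ‖DD m F‖) (del_eq m G).ge)
  simpa using this

theorem DD_const (m : ℕ) (G : Matrix ι ι ℂ) : DD m (fun _ => G) = G ⊗ₖ (1 : Matrix (Rho m) (Rho m) ℂ) := by
  rw [kronecker_one]; rfl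

theorem Phi_const (m : ℕ) (hm : 0 < m) (G : Matrix ι ι ℂ) :
    Phi m (fun _ => G) = G ⊗ₖ (1 : Matrix (Fin (m * m + 1)) (Fin (m * m + 1)) ℂ) := by
  rw [Phi, DD_const, VV, conjTranspose_kronecker, ← mul_kronecker_mul, ← mul_kronecker_mul]
  simp [V0_iso m hm]

theorem del_const (m : ℕ) (hm : 0 < m) (G : Matrix ι ι ℂ) : del m (fun _ => G) = 0 := by
  rw [del, Phi_const m hm, DD_const, VV, ← mul_kronecker_mul, ← mul_kronecker_mul]
  simp

theorem norm_DD_scalar_le (m : ℕ) (f : I × Circle → ℂ) (M : ℝ) (hM : 0 ≤ M) (h : ∀ y, ‖f y‖ ≤ M) :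
    ‖DD m (fun y => f y • (1 : Matrix ι ι ℂ))‖ ≤ M := by
  rw [DD_scalar, ← diagonal_one, diagonal_kronecker_diagonal, l2_opNorm_diagonal,
    pi_norm_le_iff_of_nonneg hM]
  rintro ⟨i, x⟩
  simpa using h _

theorem norm_single_kron (n : Type) [Fintype n] [DecidableEq n] (i j : ι) :
    ‖(Matrix.single i j (1 : ℂ)) ⊗ₖ (1 : Matrix n n ℂ)‖ ≤ 1 := by
  have h := l2_opNorm_conjTranspose_mul_self ((Matrix.single i j (1 : ℂ)) ⊗ₖ (1 : Matrix n n ℂ))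
  rw [conjTranspose_kronecker, ← mul_kronecker_mul, conjTranspose_single] at h
  have e : Matrix.single j i (star (1 : ℂ)) * Matrix.single i j 1 = diagonal (Pi.single j (1 : ℂ)) := by
    rw [Matrix.single_mul_single_same, star_one, one_mul]
    ext a b
    simp only [Matrix.single_apply, diagonal_apply, Pi.single_apply]
    clear h
    grind
  rw [e, conjTranspose_one, one_mul, ← diagonal_one, diagonal_kronecker_diagonal, l2_opNorm_diagonal] at h
  have h1 : ‖(Matrix.single i j (1 : ℂ)) ⊗ₖ (1 : Matrix n n ℂ)‖ * ‖(Matrix.single i j (1 : ℂ)) ⊗ₖ (1 : Matrix n n ℂ)‖ ≤ 1 := by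
    rw [← diagonal_one, ← h, pi_norm_le_iff_of_nonneg zero_le_one]
    rintro ⟨a, b⟩
    by_cases hab : a = j <;> simp [Pi.single_apply, hab]
  nlinarith [norm_nonneg ((Matrix.single i j (1 : ℂ)) ⊗ₖ (1 : Matrix n n ℂ))]

theorem norm_kron_one_le (n : Type) [Fintype n] [DecidableEq n] (G : Matrix ι ι ℂ) :
    ‖G ⊗ₖ (1 : Matrix n n ℂ)‖ ≤ ∑ i, ∑ j, ‖G i j‖ := by
  have : G ⊗ₖ (1 : Matrix n n ℂ) = ∑ i, ∑ j, G i j • ((Matrix.single i j (1 : ℂ)) ⊗ₖ (1 : Matrix n n ℂ)) := by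
    conv_lhs => rw [matrix_eq_sum_single G]
    ext ⟨a, b⟩ ⟨c, d⟩
    simp only [kronecker_apply, Matrix.sum_apply, Matrix.smul_apply, Finset.sum_mul, smul_eq_mul]
    refine Finset.sum_congr rfl fun i _ => Finset.sum_congr rfl fun j _ => ?_
    simp [Matrix.single_apply]
  rw [this]
  refine (norm_sum_le _ _).trans (Finset.sum_le_sum fun i _ => (norm_sum_le _ _).trans (Finset.sum_le_sum fun j _ => ?_))
  rw [norm_smul]
  exact mul_le_of_le_one_right (norm_nonneg _) (norm_single_kron n i j)

variable {W : Type}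

/-- asymptotically compatible families -/
structure Nice (F : W → I × Circle → Matrix ι ι ℂ) : Prop where
  bdd : ∃ M : ℝ, ∀ m w, ‖DD m (F w)‖ ≤ M
  asym : ∀ ε : ℝ, 0 < ε → ∀ᶠ m : ℕ in atTop, ∀ w, del m (F w) ≤ ε

theorem Nice.add {F G : W → I × Circle → Matrix ι ι ℂ} (hF : Nice F) (hG : Nice G) :
    Nice (fun w y => F w y + G w y) := by
  constructor
  · obtain ⟨M, hM⟩ := hF.bdd
    obtain ⟨M', hM'⟩ := hG.bdd
    exact ⟨M + M', fun m w => by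
      rw [DD_add]; exact (norm_add_le _ _).trans (add_le_add (hM m w) (hM' m w))⟩
  · intro ε hε
    filter_upwards [hF.asym (ε / 2) (half_pos hε), hG.asym (ε / 2) (half_pos hε)] with m h1 h2 w
    have := del_add m (F w) (G w)
    linarith [h1 w, h2 w]

theorem Nice.mul {F G : W → I × Circle → Matrix ι ι ℂ} (hF : Nice F) (hG : Nice G) :
    Nice (fun w y => F w y * G w y) := by
  obtain ⟨M, hM⟩ := hF.bdd
  obtain ⟨M', hM'⟩ := hG.bdd
  constructor
  · exact ⟨M * M', fun m w => by
      rw [DD_mul]; exact norm_mul3 _ _ (hM m w) (hM' m w)⟩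
  · intro ε hε
    have p1 : 0 < 2 * (|M| + 1) := by positivity
    have p2 : 0 < 2 * (|M'| + 1) := by positivity
    filter_upwards [hF.asym (ε / (2 * (|M'| + 1))) (by positivity), hG.asym (ε / (2 * (|M| + 1))) (by positivity),
      eventually_gt_atTop 0] with m h1 h2 hm w
    have := del_mul m hm (F w) (G w)
    have a1 : del m (F w) * ‖DD m (G w)‖ ≤ (ε / (2 * (|M'| + 1))) * (|M'| + 1) :=
      mul_le_mul (h1 w) ((hM' m w).trans (by linarith [le_abs_self M'])) (norm_nonneg _) (by positivity)
    have a2 : ‖DD m (F w)‖ * del m (G w) ≤ (|M| + 1) * (ε / (2 * (|M| + 1))) :=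
      mul_le_mul ((hM m w).trans (by linarith [le_abs_self M])) (h2 w) (norm_nonneg _) (by positivity)
    have e1 : (ε / (2 * (|M'| + 1))) * (|M'| + 1) = ε / 2 := by field_simp
    have e2 : (|M| + 1) * (ε / (2 * (|M| + 1))) = ε / 2 := by field_simp
    linarith

theorem Nice.const {G : W → Matrix ι ι ℂ} (M : ℝ) (h : ∀ w i j, ‖G w i j‖ ≤ M) :
    Nice (fun w _ => G w) := by
  constructor
  · refine ⟨∑ i : ι, ∑ j : ι, M, fun m w => ?_⟩
    rw [DD_const]
    exact (norm_kron_one_le _ _).trans (Finset.sum_le_sum fun i _ => Finset.sum_le_sum fun j _ => h w i j)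
  · intro ε hε
    filter_upwards [eventually_gt_atTop 0] with m hm w
    rw [del_const m hm]; exact hε.le

theorem Nice.limit {F : W → I × Circle → Matrix ι ι ℂ}
    (h : ∀ ε : ℝ, 0 < ε → ∃ G : W → I × Circle → Matrix ι ι ℂ, Nice G ∧
      ∀ m w, ‖DD m (fun y => F w y - G w y)‖ ≤ ε) : Nice F := by
  constructor
  · obtain ⟨G, hG, hh⟩ := h 1 one_pos
    obtain ⟨M, hM⟩ := hG.bdd
    refine ⟨1 + M, fun m w => ?_⟩
    have := DD_add m (fun y => F w y - G w y) (G w)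
    simp only [sub_add_cancel] at this
    rw [show F w = fun y => F w y from rfl, this]
    exact (norm_add_le _ _).trans (add_le_add (hh m w) (hM m w))
  · intro ε hε
    obtain ⟨G, hG, hh⟩ := h (ε / 2) (half_pos hε)
    filter_upwards [hG.asym (ε / 2) (half_pos hε), eventually_gt_atTop 0] with m h1 hm w
    have := del_add m (fun y => F w y - G w y) (G w)
    simp only [sub_add_cancel] at this
    have h2 : del m (fun y => F w y - G w y) ≤ ε / 2 := by
      rw [del_eq]
      have := norm_mul3 _ _ (norm_QQ (ι := ι) m hm) (norm_mul3 _ _ (hh m w) (norm_VV (ι := ι) m hm))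
      simpa using this
    rw [show F w = fun y => F w y from rfl]
    linarith [h1 w]

theorem isUnit_of_norm_sub_one_lt {A : Matrix ι ι ℂ} (h : ‖1 - A‖ < 1) : IsUnit A := by
  have := isUnit_one_sub_of_norm_lt_one h
  simpa using this

/-- asymptotic invertibility -/
theorem Nice.unit {F G : W → I × Circle → Matrix ι ι ℂ} (hF : Nice F) (hG : Nice G)
    (hFG : ∀ w y, F w y * G w y = 1) :
    ∃ ε : ℝ, 0 < ε ∧ ∀ᶠ m : ℕ in atTop, ∀ w T, ‖Phi m (G w) - T‖ ≤ ε → IsUnit T := by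
  obtain ⟨M, hM⟩ := hF.bdd
  have hp : 0 < |M| + 1 := by positivity
  refine ⟨1 / (4 * (|M| + 1)), by positivity, ?_⟩
  filter_upwards [hG.asym (1 / (4 * (|M| + 1))) (by positivity), eventually_gt_atTop 0] with m h1 hm w T hT
  have e1 := phi_mul m hm (F w) (G w)
  simp only [hFG] at e1
  rw [Phi_const m hm, one_kronecker_one] at e1
  have hMM : ‖DD m (F w)‖ ≤ |M| + 1 := (hM m w).trans (by linarith [le_abs_self M])
  have e2 : ‖1 - Phi m (F w) * Phi m (G w)‖ ≤ 1 / 4 := by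
    refine e1.trans ?_
    calc _ ≤ (|M| + 1) * (1 / (4 * (|M| + 1))) := mul_le_mul hMM (h1 w) (norm_nonneg _) hp.le
      _ = 1 / 4 := by field_simp
  have e3 : ‖Phi m (F w)‖ ≤ |M| + 1 := by
    have := norm_mul3 _ _ (norm_mul3 _ _ (norm_VVt (ι := ι) m hm) hMM) (norm_VV (ι := ι) m hm)
    simpa [Phi] using this
  have e4 : ‖Phi m (F w) * (Phi m (G w) - T)‖ ≤ 1 / 4 := by
    refine (norm_mul3 _ _ e3 hT).trans ?_
    have : (|M| + 1) * (1 / (4 * (|M| + 1))) = 1 / 4 := by field_simp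
    exact this.le
  have e5 : IsUnit (Phi m (F w) * T) := by
    apply isUnit_of_norm_sub_one_lt
    have : 1 - Phi m (F w) * T = (1 - Phi m (F w) * Phi m (G w)) + Phi m (F w) * (Phi m (G w) - T) := by
      noncomm_ring
    rw [this]
    refine (norm_add_le _ _).trans_lt ?_
    linarith
  rw [Matrix.isUnit_iff_isUnit_det] at e5 ⊢
  rw [Matrix.det_mul] at e5
  exact isUnit_of_mul_isUnit_right e5

end Quant2
end KT

namespace KT

open Matrix unitInterval Filter Topology
open scoped Kronecker Matrix.Norms.L2Operator

noncomputable section SW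

variable {ι : Type} [Fintype ι] [DecidableEq ι]

theorem dist_tt (m r s : ℕ) : dist (tt m r) (tt m s) ≤ |(r : ℝ) - s| / ((m * m + 1 + m : ℕ) : ℝ) := by
  have h : (0 : ℝ) < ((m * m + 1 + m : ℕ) : ℝ) := by positivity
  rw [Subtype.dist_eq, Real.dist_eq, tt, tt]
  refine (Set.abs_projIcc_sub_projIcc _).trans ?_
  rw [← sub_div, abs_div, abs_of_pos h]

theorem small_win : ∀ δ : ℝ, 0 < δ → ∀ᶠ m : ℕ in atTop, (2 * m + 1) / ((m * m + 1 + m : ℕ) : ℝ) < δ := by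
  intro δ hδ
  have h := (tendsto_const_div_atTop_nhds_zero_nat (3 : ℝ)).eventually (gt_mem_nhds hδ)
  filter_upwards [h, eventually_gt_atTop 0] with m h1 hm
  have h0 : (1 : ℝ) ≤ m := by exact_mod_cast hm
  refine lt_of_le_of_lt ?_ h1
  rw [div_le_div_iff₀ (by positivity) (by positivity)]
  push_cast
  nlinarith

theorem shift_ev (J : ℤ) (hJ : |J| ≤ 1) (f : I → ℂ) (hf : Continuous f) (ε : ℝ) (hε : 0 < ε) :
    ∀ᶠ m : ℕ in atTop, ∀ d : Fin (m * m + 1) → ℂ,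
      (∀ k : Fin (m * m + 1), ¬ (0 ≤ (k : ℤ) + J ∧ (k : ℤ) + J < (m * m + 1 : ℕ)) → d k = 0) →
      (∀ k : Fin (m * m + 1), ∃ y : I, dist y (tt m k) ≤ (m + 1) / ((m * m + 1 + m : ℕ) : ℝ) ∧ d k = f y) →
      ‖DD m (fun y => (f y.1 * (y.2 : ℂ) ^ J) • (1 : Matrix ι ι ℂ)) * VV ι m -
        VV ι m * ((1 : Matrix ι ι ℂ) ⊗ₖ shf m J d)‖ ≤ ε := by
  have huc := CompactSpace.uniformContinuous_of_continuous hf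
  rw [Metric.uniformContinuous_iff] at huc
  obtain ⟨δ, hδ, hu⟩ := huc (ε / 2) (half_pos hε)
  obtain ⟨M, hM⟩ : ∃ M : ℝ, ∀ x, ‖f x‖ ≤ M := by
    obtain ⟨M, hM⟩ := isCompact_univ.exists_bound_of_continuousOn hf.continuousOn
    exact ⟨M, fun x => hM x trivial⟩
  have h := (tendsto_const_div_atTop_nhds_zero_nat (4 * M ^ 2)).eventually (gt_mem_nhds (show 0 < ε ^ 2 / 2 by positivity))
  filter_upwards [small_win δ hδ, h, eventually_gt_atTop 0] with m h1 h2 hm d hd hy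
  refine shift_est m hm J hJ f d hd M (ε / 2) ?_ ?_ ε hε.le (by nlinarith)
  · intro k
    obtain ⟨y, -, h⟩ := hy k
    rw [h]; exact hM y
  · intro k r hr hr'
    obtain ⟨y, hy1, h⟩ := hy k
    rw [h, ← dist_eq_norm]
    refine (hu ?_).le
    refine lt_of_le_of_lt ?_ h1
    have h3 := dist_triangle (tt m r) (tt m k) y
    have h4 := dist_tt m r k
    rw [dist_comm] at hy1
    have h5 : |(r : ℝ) - (k : ℕ)| / ((m * m + 1 + m : ℕ) : ℝ) ≤ m / ((m * m + 1 + m : ℕ) : ℝ) := by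
      gcongr
      have a1 : ((k : ℕ) : ℝ) ≤ r := by exact_mod_cast hr
      have a2 : (r : ℝ) ≤ (k : ℕ) + m := by exact_mod_cast hr'.le
      rw [abs_le]; constructor <;> linarith [(Nat.cast_nonneg m : (0:ℝ) ≤ m)]
    have : (2 * m + 1) / ((m * m + 1 + m : ℕ) : ℝ) = m / ((m * m + 1 + m : ℕ) : ℝ) + (m + 1) / ((m * m + 1 + m : ℕ) : ℝ) := by
      rw [← add_div]; ring
    linarith

theorem tt_zero (m : ℕ) : tt m 0 = 0 := by
  ext; simp [tt, Set.coe_projIcc]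

theorem dist_one_tt (m : ℕ) : dist (1 : I) (tt m (m * m)) ≤ (m + 1) / ((m * m + 1 + m : ℕ) : ℝ) := by
  have h0 : (0 : ℝ) < ((m * m + 1 + m : ℕ) : ℝ) := by positivity
  have : (1 : I) = tt m (m * m + 1 + m) := by
    ext
    rw [tt, div_self h0.ne']
    simp [Set.coe_projIcc]
  rw [this]
  refine (dist_tt _ _ _).trans ?_
  gcongr
  push_cast
  rw [abs_le]; constructor <;> linarith [(Nat.cast_nonneg m : (0:ℝ) ≤ m)]

variable {W : Type} [TopologicalSpace W]

theorem nice_shift (J : ℤ) (hJ : |J| ≤ 1) (f : I → ℂ) (hf : Continuous f) (h0 : J ≠ 0 → f 0 = 0 ∧ f 1 = 0) :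
    Nice (fun (_ : W) y => (f y.1 * (y.2 : ℂ) ^ J) • (1 : Matrix ι ι ℂ)) := by
  constructor
  · obtain ⟨M, hM⟩ : ∃ M : ℝ, ∀ x, ‖f x‖ ≤ M := by
      obtain ⟨M, hM⟩ := isCompact_univ.exists_bound_of_continuousOn hf.continuousOn
      exact ⟨M, fun x => hM x trivial⟩
    refine ⟨M, fun m w => norm_DD_scalar_le m _ M ((norm_nonneg _).trans (hM 0)) fun y => ?_⟩
    have hz : ‖(y.2 : ℂ)‖ = 1 := Circle.norm_coe _
    rw [norm_mul, norm_zpow, hz, _root_.one_zpow, mul_one]; exact hM y.1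
  · intro ε hε
    filter_upwards [shift_ev (ι := ι) J hJ f hf ε hε, eventually_gt_atTop 0] with m h hm w
    let d : Fin (m * m + 1) → ℂ := fun k =>
      if (0 ≤ (k : ℤ) + J ∧ (k : ℤ) + J < (m * m + 1 : ℕ)) then f (tt m k) else 0
    refine del_le_of m hm _ _ _ (h d ?_ ?_)
    · intro k hk; exact if_neg hk
    · intro k
      by_cases hk : (0 ≤ (k : ℤ) + J ∧ (k : ℤ) + J < (m * m + 1 : ℕ))
      · exact ⟨tt m k, by rw [dist_self]; positivity, if_pos hk⟩
      · have hJ0 : J ≠ 0 := by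
          rintro rfl
          have := k.2
          omega
        have hd0 : d k = 0 := if_neg hk
        have : (k : ℕ) = 0 ∨ (k : ℕ) = m * m := by
          have := k.2; rw [abs_le] at hJ
          omega
        rcases this with h | h
        · exact ⟨0, by rw [h, tt_zero, dist_self]; positivity, by rw [hd0, (h0 hJ0).1]⟩
        · exact ⟨1, by rw [h]; exact dist_one_tt m, by rw [hd0, (h0 hJ0).2]⟩

variable [CompactSpace W] [T2Space W]

/-- coordinates collapsing the poles -/
def phiW (p : W × (I × Circle)) : W × (ℝ × ℂ) :=
  (p.1, ((p.2.1 : ℝ), ((p.2.1 : ℝ) * (1 - (p.2.1 : ℝ)) : ℝ) * (p.2.2 : ℂ)))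

theorem phiW_cont : Continuous (phiW (W := W)) := by
  unfold phiW; fun_prop

instance : CompactSpace (Set.range (phiW (W := W))) :=
  isCompact_iff_compactSpace.1 (isCompact_range phiW_cont)

/-- surjection on the image -/
def psiW : C(W × (I × Circle), Set.range (phiW (W := W))) :=
  ⟨Set.rangeFactorization phiW, phiW_cont.subtype_mk _⟩

@[simp] theorem psiW_coe (p : W × (I × Circle)) : (psiW p).1 = phiW p := rfl

theorem Nice.scl {F : W → I × Circle → Matrix ι ι ℂ} (hF : Nice F) {G : W → I × Circle → Matrix ι ι ℂ}
    (h : ∀ w y, F w y = G w y) : Nice G := by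
  have : F = G := by funext w y; exact h w y
  exact this ▸ hF

theorem bound_of_compact {f : W → ℂ} (hf : Continuous f) : ∃ M : ℝ, ∀ x, ‖f x‖ ≤ M := by
  obtain ⟨M, hM⟩ := isCompact_univ.exists_bound_of_continuousOn hf.continuousOn
  exact ⟨M, fun x => hM x trivial⟩

theorem nice_scalar_const (f : W → ℂ) (hf : Continuous f) :
    Nice (fun (w : W) (_ : I × Circle) => f w • (1 : Matrix ι ι ℂ)) := by
  obtain ⟨M, hM⟩ := bound_of_compact hf
  refine Nice.const |M| fun w i j => ?_
  have := (hM w).trans (le_abs_self M)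
  by_cases h : i = j
  · subst h; simpa using this
  · simp [h]

variable (W ι) in
/-- the star algebra of good functions -/
def AA : StarSubalgebra ℂ C(Set.range (phiW (W := W)), ℂ) where
  carrier := {g | Nice (fun (w : W) y => g (psiW (w, y)) • (1 : Matrix ι ι ℂ)) ∧
    Nice (fun (w : W) y => star (g (psiW (w, y))) • (1 : Matrix ι ι ℂ))}
  mul_mem' := by
    rintro a b ⟨h1, h2⟩ ⟨h3, h4⟩
    exact ⟨(h1.mul h3).scl fun w y => by simp [smul_smul, mul_comm],
      (h2.mul h4).scl fun w y => by simp [smul_smul, mul_comm]⟩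
  add_mem' := by
    rintro a b ⟨h1, h2⟩ ⟨h3, h4⟩
    exact ⟨(h1.add h3).scl fun w y => by simp [add_smul],
      (h2.add h4).scl fun w y => by simp [add_smul]⟩
  algebraMap_mem' := by
    intro c
    exact ⟨(nice_scalar_const (fun _ => c) continuous_const).scl fun w y => by simp [Algebra.algebraMap_eq_smul_one],
      (nice_scalar_const (fun _ => star c) continuous_const).scl fun w y => by simp [Algebra.algebraMap_eq_smul_one]⟩
  star_mem' := by
    rintro a ⟨h1, h2⟩
    exact ⟨h2.scl fun w y => by simp, h1.scl fun w y => by simp⟩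

theorem AA_closed : (AA ι W).topologicalClosure ≤ AA ι W := by
  intro g hg
  have hg' : g ∈ closure ((AA ι W : StarSubalgebra ℂ _) : Set C(Set.range (phiW (W := W)), ℂ)) := hg
  rw [Metric.mem_closure_iff] at hg'
  constructor
  · refine Nice.limit fun ε hε => ?_
    obtain ⟨b, hb, hd⟩ := hg' ε hε
    refine ⟨_, hb.1, fun m w => ?_⟩
    simp only [← sub_smul]
    refine norm_DD_scalar_le m (fun y => g (psiW (w, y)) - b (psiW (w, y))) ε hε.le fun y => ?_
    rw [← dist_eq_norm]
    exact (ContinuousMap.dist_apply_le_dist _).trans hd.le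
  · refine Nice.limit fun ε hε => ?_
    obtain ⟨b, hb, hd⟩ := hg' ε hε
    refine ⟨_, hb.2, fun m w => ?_⟩
    simp only [← sub_smul]
    refine norm_DD_scalar_le m (fun y => star (g (psiW (w, y))) - star (b (psiW (w, y)))) ε hε.le fun y => ?_
    rw [← star_sub, norm_star, ← dist_eq_norm]
    exact (ContinuousMap.dist_apply_le_dist _).trans hd.le

theorem AA_sep : (AA ι W).SeparatesPoints := by
  rintro ⟨x, hx⟩ ⟨y, hy⟩ hxy
  have hne : x ≠ y := fun h => hxy (Subtype.ext h)
  obtain ⟨p, rfl⟩ := hx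
  obtain ⟨q, rfl⟩ := hy
  by_cases h1 : p.1 = q.1
  · by_cases h2 : p.2.1 = q.2.1
    · have h3 : (phiW p).2.2 ≠ (phiW q).2.2 := by
        intro h
        apply hne
        refine Prod.ext h1 (Prod.ext ?_ h)
        simp [phiW, h2]
      let g : C(Set.range (phiW (W := W)), ℂ) := ⟨fun z => z.1.2.2, by fun_prop⟩
      refine ⟨g, ⟨g, ⟨?_, ?_⟩, rfl⟩, h3⟩
      · have := nice_shift (W := W) (ι := ι) 1 (by norm_num) (fun t => ((t : ℝ) * (1 - (t : ℝ)) : ℝ)) (by fun_prop) (by intro _; simp)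
        exact this.scl fun w y => by simp [g, phiW]
      · have := nice_shift (W := W) (ι := ι) (-1) (by norm_num) (fun t => ((t : ℝ) * (1 - (t : ℝ)) : ℝ)) (by fun_prop) (by intro _; simp)
        exact this.scl fun w y => by
          simp [g, phiW, ← Circle.coe_inv_eq_conj]
    · have h3 : (((p.2.1 : ℝ)) : ℂ) ≠ ((q.2.1 : ℝ) : ℂ) := by
        intro h; apply h2; ext; exact_mod_cast h
      let g : C(Set.range (phiW (W := W)), ℂ) := ⟨fun z => ((z.1.2.1 : ℝ) : ℂ), by fun_prop⟩
      have := nice_shift (W := W) (ι := ι) 0 (by norm_num) (fun t => ((t : ℝ) : ℂ)) (by fun_prop) (by simp)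
      refine ⟨g, ⟨g, ⟨?_, ?_⟩, rfl⟩, h3⟩
      · exact this.scl fun w y => by simp [g, phiW]
      · exact this.scl fun w y => by simp [g, phiW]
  · obtain ⟨f, h0, h1', -⟩ := exists_continuous_zero_one_of_isClosed (isClosed_singleton (x := p.1)) (isClosed_singleton (x := q.1))
      (by simpa using h1)
    have e0 : f p.1 = 0 := h0 rfl
    have e1 : f q.1 = 1 := h1' rfl
    let g : C(Set.range (phiW (W := W)), ℂ) := ⟨fun z => ((f z.1.1 : ℝ) : ℂ), by fun_prop⟩
    have := nice_scalar_const (W := W) (ι := ι) (fun w => ((f w : ℝ) : ℂ)) (by fun_prop)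
    refine ⟨g, ⟨g, ⟨?_, ?_⟩, rfl⟩, ?_⟩
    · exact this.scl fun w y => by simp [g, phiW]
    · exact this.scl fun w y => by simp [g, phiW]
    · simp [g, phiW, e0, e1]

theorem AA_top (g : C(Set.range (phiW (W := W)), ℂ)) : g ∈ AA ι W := by
  apply AA_closed
  rw [ContinuousMap.starSubalgebra_topologicalClosure_eq_top_of_separatesPoints _ AA_sep]
  trivial

theorem psiW_quot : IsQuotientMap (psiW (W := W)) := by
  refine IsClosedMap.isQuotientMap (psiW.continuous.isClosedMap) psiW.continuous ?_
  exact Set.rangeFactorization_surjective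

theorem nice_scalar (f : W → I × Circle → ℂ) (hf : Continuous fun p : W × (I × Circle) => f p.1 p.2)
    (h0 : ∀ w z z', f w (0, z) = f w (0, z')) (h1 : ∀ w z z', f w (1, z) = f w (1, z')) :
    Nice (fun w y => f w y • (1 : Matrix ι ι ℂ)) := by
  have hfac : Function.FactorsThrough (⟨_, hf⟩ : C(W × (I × Circle), ℂ)) (psiW (W := W)) := by
    rintro ⟨w, t, z⟩ ⟨w', t', z'⟩ h
    have h' : phiW (w, t, z) = phiW (w', t', z') := congrArg Subtype.val h
    simp only [phiW, Prod.mk.injEq] at h'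
    obtain ⟨rfl, h2, h3⟩ := h'
    have h2' : t = t' := Subtype.ext h2
    subst h2'
    by_cases ht0 : t = 0
    · subst ht0; exact h0 _ _ _
    by_cases ht1 : t = 1
    · subst ht1; exact h1 _ _ _
    have : (((t : ℝ) * (1 - (t : ℝ)) : ℝ) : ℂ) ≠ 0 := by
      have a : (t : ℝ) ≠ 0 := fun h => ht0 (Subtype.ext h)
      have b : 1 - (t : ℝ) ≠ 0 := fun h => ht1 (Subtype.ext (by simpa using (sub_eq_zero.1 h).symm))
      exact_mod_cast mul_ne_zero a b
    have := mul_left_cancel₀ this h3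
    rw [Circle.ext this]
  let g := psiW_quot.lift (⟨_, hf⟩ : C(W × (I × Circle), ℂ)) hfac
  refine (AA_top (ι := ι) g).1.scl fun w y => ?_
  congr 1
  have := psiW_quot.lift_comp (⟨_, hf⟩ : C(W × (I × Circle), ℂ)) hfac
  exact congrArg (fun k => k (w, y)) this

/-- every pole-constant continuous family is nice -/
theorem nice_all (F : W → I × Circle → Matrix ι ι ℂ) (hF : Continuous fun p : W × (I × Circle) => F p.1 p.2)
    (h0 : ∀ w z z', F w (0, z) = F w (0, z')) (h1 : ∀ w z z', F w (1, z) = F w (1, z')) :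
    Nice F := by
  have hsum : ∀ (s : Finset (ι × ι)), Nice (fun w y => ∑ p ∈ s, (F w y p.1 p.2 • (1 : Matrix ι ι ℂ)) * Matrix.single p.1 p.2 (1 : ℂ)) := by
    intro s
    induction s using Finset.induction_on with
    | empty => 
      simp only [Finset.sum_empty]
      exact Nice.const 0 (by simp)
    | insert a s ha ih =>
      simp only [Finset.sum_insert ha]
      refine Nice.add (Nice.mul (nice_scalar (fun w y => F w y a.1 a.2) ?_ ?_ ?_) (Nice.const (G := fun _ => Matrix.single a.1 a.2 (1:ℂ)) 1 ?_)) ih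
      · exact hF.matrix_elem _ _
      · intro w z z'; rw [h0 w z z']
      · intro w z z'; rw [h1 w z z']
      · intro w i j
        rw [Matrix.single_apply]; split_ifs <;> simp
  refine (hsum Finset.univ).scl fun w y => ?_
  rw [Fintype.sum_prod_type]
  conv_rhs => rw [matrix_eq_sum_single (F w y)]
  simp

end SW
end KT

namespace KT

open Matrix unitInterval Filter Topology Fam
open scoped Kronecker Matrix.Norms.L2Operator

noncomputable section Iso

variable {X : Type} [TopologicalSpace X] {r : X → X → Prop}
variable {ι κ n : Type} [Fintype ι] [DecidableEq ι] [Fintype κ] [DecidableEq κ] [Fintype n] [DecidableEq n]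

/-- corner embedding along an isometry -/
def Fam.cor (v : Fam r κ) (W : Matrix ι κ ℂ) (hW : Wᵀ * W = 1) : Fam r ι where
  f x := 1 + W * (v.f x - 1) * Wᵀ
  cont := by
    have := v.cont
    exact continuous_const.add ((continuous_const.matrix_mul (this.sub continuous_const)).matrix_mul continuous_const)
  unit x := by
    apply isUnit_of_mul_eq_one (B := 1 + W * ((v.f x)⁻¹ - 1) * Wᵀ)
    have e : (W * (v.f x - 1) * Wᵀ) * (W * ((v.f x)⁻¹ - 1) * Wᵀ) = W * ((v.f x - 1) * ((v.f x)⁻¹ - 1)) * Wᵀ := by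
      calc _ = W * (v.f x - 1) * (Wᵀ * W) * ((v.f x)⁻¹ - 1) * Wᵀ := by simp only [Matrix.mul_assoc]
        _ = _ := by rw [hW, Matrix.mul_one]; simp only [Matrix.mul_assoc]
    have e2 : (v.f x - 1) * ((v.f x)⁻¹ - 1) = - (v.f x - 1) - ((v.f x)⁻¹ - 1) := by
      rw [sub_mul, mul_sub, mul_sub, mul_inv_f]; simp
    rw [add_mul, mul_add, mul_add, e, e2]
    simp only [Matrix.mul_sub, Matrix.sub_mul, Matrix.mul_neg, Matrix.neg_mul, Matrix.one_mul, Matrix.mul_one]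
    abel
  rel x y h := by rw [v.rel x y h]

theorem cls_cor (v : Fam r κ) (W : Matrix ι κ ℂ) (hW : Wᵀ * W = 1) : cls (v.cor W hW) = cls v := by
  let U : Matrix (ι ⊕ κ) (ι ⊕ κ) ℂ := fromBlocks (1 - W * Wᵀ) W Wᵀ 0
  have h1 : (1 - W * Wᵀ) * W = 0 := by
    rw [Matrix.sub_mul, Matrix.one_mul, Matrix.mul_assoc, hW, Matrix.mul_one, sub_self]
  have h2 : Wᵀ * (1 - W * Wᵀ) = 0 := by
    rw [Matrix.mul_sub, Matrix.mul_one, ← Matrix.mul_assoc, hW, Matrix.one_mul, sub_self]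
  have h3 : (1 - W * Wᵀ) * (1 - W * Wᵀ) = 1 - W * Wᵀ := by
    rw [Matrix.mul_sub, ← Matrix.mul_assoc (1 - W * Wᵀ), h1]; simp
  have hU : U * U = 1 := by
    simp only [U, fromBlocks_multiply, h1, h2, h3, hW]
    simp
  let u : Fam r (ι ⊕ κ) := ⟨fun _ => U, continuous_const, fun _ => isUnit_of_mul_eq_one hU, fun _ _ _ => rfl⟩
  have huu : u * u = 1 := ext' fun x => hU
  have key : (v.cor W hW).sum (1 : Fam r κ) = u * (1 : Fam r ι).sum v * u := by
    refine ext' fun x => ?_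
    simp only [sum_f, mul_f, one_f, u, U, fromBlocks_multiply, Fam.cor]
    rw [fromBlocks_inj]
    refine ⟨?_, ?_, ?_, ?_⟩
    · simp only [Matrix.mul_one, Matrix.mul_zero, add_zero, zero_add, h3]
      simp only [Matrix.mul_sub, Matrix.sub_mul, Matrix.mul_one]
      abel
    · simp [h1]
    · simp [h2]
    · simp [hW]
  rw [← cls_sum_one (κ := κ) (v.cor W hW), key, cls_mul, cls_mul, cls_one_sum]
  have : cls u + cls u = 0 := by rw [← cls_mul, huu, cls_one]
  rw [add_comm (cls u), add_assoc, this, add_zero]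

/-- block diagonal with `u` on the positions in `A` -/
def Fam.bl (u : Fam r ι) (A : Finset n) : Fam r (ι × n) where
  f x := blockDiagonal fun k => if k ∈ A then u.f x else 1
  cont := by
    refine Continuous.matrix_blockDiagonal (continuous_pi fun k => ?_)
    split_ifs
    · exact u.cont
    · exact continuous_const
  unit x := by
    apply isUnit_of_mul_eq_one (B := blockDiagonal fun k => if k ∈ A then (u.f x)⁻¹ else 1)
    rw [← blockDiagonal_mul]
    rw [← blockDiagonal_one]
    congr 1
    funext k
    split_ifs <;> simp
  rel x y h := by rw [u.rel x y h]

theorem cls_bl (u : Fam r ι) (A : Finset n) : cls (u.bl A) = A.card • cls u := by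
  induction A using Finset.induction_on with
  | empty =>
    have : u.bl (∅ : Finset n) = 1 := ext' fun x => by
      simp only [Fam.bl, Finset.notMem_empty, if_false, one_f]
      exact blockDiagonal_one
    rw [this, cls_one]; simp
  | insert a A ha ih =>
    have h1 : u.bl (insert a A) = u.bl {a} * u.bl A := ext' fun x => by
      simp only [Fam.bl, mul_f]
      rw [← blockDiagonal_mul]
      congr 1
      funext k
      by_cases h : k = a
      · subst h; simp [ha]
      · simp [h]
    let W : Matrix (ι × n) ι ℂ := Matrix.of fun p j => if p.1 = j ∧ p.2 = a then 1 else 0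
    have hW : Wᵀ * W = 1 := by
      ext i j
      simp only [W, Matrix.mul_apply, Fintype.sum_prod_type, transpose_apply, Matrix.of_apply, ite_and, Matrix.one_apply]
      simp [eq_comm]
    have h2 : u.bl {a} = u.cor W hW := ext' fun x => by
      ext ⟨i, k⟩ ⟨j, l⟩
      simp only [Fam.bl, Fam.cor, W, Matrix.add_apply, Matrix.mul_apply, transpose_apply, Matrix.of_apply, ite_and, blockDiagonal_apply, Finset.mem_singleton]
      by_cases hk : k = a <;> by_cases hl : l = a
      · subst hk; subst hl
        simp [Matrix.sub_apply, Matrix.one_apply]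
      · subst hk; simp [hl, Ne.symm hl, Matrix.one_apply]
      · simp [hk, hl, Matrix.one_apply]
      · simp [hk, hl, Matrix.one_apply]
        split_ifs <;> simp_all
    rw [h1, cls_mul, ih, h2, cls_cor, Finset.card_insert_of_notMem ha, add_comm, succ_nsmul]

end Iso

end KT

namespace KT

open Matrix unitInterval Filter Topology Fam
open scoped Kronecker Matrix.Norms.L2Operator

noncomputable section KPhi

variable {X : Type} [TopologicalSpace X] {r : X → X → Prop}
variable {ι κ n : Type} [Fintype ι] [DecidableEq ι] [Fintype κ] [DecidableEq κ] [Fintype n] [DecidableEq n]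

/-- relation on the cylinder collapsing the ends -/
def rC (r : X → X → Prop) : X × (I × Circle) → X × (I × Circle) → Prop := fun p q =>
  (p.1 = q.1 ∨ r p.1 q.1) ∧ p.2.1 = q.2.1 ∧ (p.2.2 = q.2.2 ∨ p.2.1 = 0 ∨ p.2.1 = 1)

/-- symbol at a parameter -/
def Fam.sy (a : Fam (rC r) ι) (x : X) : I × Circle → Matrix ι ι ℂ := fun y => a.f (x, y)

theorem Fam.sy_mul (a b : Fam (rC r) ι) (x : X) : (a * b).sy x = fun y => a.sy x y * b.sy x y := rfl

theorem Fam.sy_nice [CompactSpace X] [T2Space X] (a : Fam (rC r) ι) : Nice a.sy := by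
  refine nice_all _ a.cont ?_ ?_
  · intro w z z'; exact a.rel _ _ ⟨Or.inl rfl, rfl, Or.inr (Or.inl rfl)⟩
  · intro w z z'; exact a.rel _ _ ⟨Or.inl rfl, rfl, Or.inr (Or.inr rfl)⟩

theorem Phi_cont (m : ℕ) (a : Fam (rC r) ι) : Continuous fun x => Phi m (a.sy x) := by
  unfold Phi DD
  refine (continuous_const.matrix_mul ?_).matrix_mul continuous_const
  refine Continuous.matrix_blockDiagonal (continuous_pi fun k => ?_)
  exact a.cont.comp (by fun_prop)

/-- quantization -/
def Fam.Q (m : ℕ) (a : Fam (rC r) ι) (h : ∀ x, IsUnit (Phi m (a.sy x))) : Fam r (ι × Fin (m * m + 1)) where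
  f x := Phi m (a.sy x)
  cont := Phi_cont m a
  unit := h
  rel x y hr := by
    have : a.sy x = a.sy y := funext fun z => a.rel _ _ ⟨Or.inr hr, rfl, Or.inl rfl⟩
    rw [this]

open Classical in
/-- class of the quantization -/
def kPhi (m : ℕ) (a : Fam (rC r) ι) : K r :=
  if h : ∀ x, IsUnit (Phi m (a.sy x)) then cls (a.Q m h) else 0

theorem kPhi_eq (m : ℕ) (a : Fam (rC r) ι) (h : ∀ x, IsUnit (Phi m (a.sy x))) : kPhi m a = cls (a.Q m h) := by
  rw [kPhi, dif_pos h]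

variable [CompactSpace X] [T2Space X]

theorem Fam.sy_unit (a : Fam (rC r) ι) :
    ∃ ε : ℝ, 0 < ε ∧ ∀ᶠ m : ℕ in atTop, ∀ x T, ‖Phi m (a.sy x) - T‖ ≤ ε → IsUnit T :=
  Nice.unit (a⁻¹).sy_nice a.sy_nice fun x y => inv_mul_f a (x, y)

theorem ev_unit (a : Fam (rC r) ι) : ∀ᶠ m : ℕ in atTop, ∀ x, IsUnit (Phi m (a.sy x)) := by
  obtain ⟨ε, hε, h⟩ := a.sy_unit
  filter_upwards [h] with m hm x
  exact hm x _ (by simpa using hε.le)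

theorem kPhi_near (a : Fam (rC r) ι) :
    ∃ ε : ℝ, 0 < ε ∧ ∀ᶠ m : ℕ in atTop, ∀ T : Fam r (ι × Fin (m * m + 1)),
      (∀ x, ‖Phi m (a.sy x) - T.f x‖ ≤ ε) → kPhi m a = cls T := by
  obtain ⟨ε, hε, h⟩ := a.sy_unit
  refine ⟨ε, hε, ?_⟩
  filter_upwards [h, ev_unit a] with m hm hu T hT
  rw [kPhi_eq m a hu]
  apply cls_of_hmt
  refine ⟨⟨fun p => (((1 - (p.1 : ℝ) : ℝ)) : ℂ) • Phi m (a.sy p.2) + (((p.1 : ℝ)) : ℂ) • T.f p.2, ?_, ?_, ?_⟩, ?_, ?_⟩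
  · have h1 := (Phi_cont m a).comp (continuous_snd (X := I) (Y := X))
    have h2 := T.cont.comp (continuous_snd (X := I) (Y := X))
    have c1 : Continuous fun p : I × X => (((1 - (p.1 : ℝ) : ℝ)) : ℂ) := by fun_prop
    have c2 : Continuous fun p : I × X => (((p.1 : ℝ) : ℝ) : ℂ) := by fun_prop
    exact (c1.smul h1).add (c2.smul h2)
  · rintro ⟨t, x⟩
    refine hm x _ ?_
    have : Phi m (a.sy x) - ((((1 - (t : ℝ) : ℝ)) : ℂ) • Phi m (a.sy x) + (((t : ℝ)) : ℂ) • T.f x) =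
      (((t : ℝ)) : ℂ) • (Phi m (a.sy x) - T.f x) := by
      push_cast
      rw [sub_smul, smul_sub, one_smul]; abel
    simp only
    rw [this, norm_smul, Complex.norm_real, Real.norm_of_nonneg t.2.1]
    exact (mul_le_of_le_one_left (norm_nonneg _) t.2.2).trans (hT x)
  · rintro ⟨t, x⟩ ⟨t', x'⟩ ⟨h1, h2⟩
    simp only at h1 h2
    subst h1
    have : a.sy x = a.sy x' := funext fun z => a.rel _ _ ⟨Or.inr h2, rfl, Or.inl rfl⟩
    simp only [this, T.rel _ _ h2]
  · intro x; simp [Fam.Q]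
  · intro x; simp

theorem kPhi_mul (a b : Fam (rC r) ι) : ∀ᶠ m : ℕ in atTop, kPhi m (a * b) = kPhi m a + kPhi m b := by
  obtain ⟨ε, hε, h⟩ := kPhi_near (a * b)
  obtain ⟨M, hM⟩ := a.sy_nice.bdd
  have hp : 0 < |M| + 1 := by positivity
  filter_upwards [h, ev_unit a, ev_unit b, b.sy_nice.asym (ε / (|M| + 1)) (by positivity), eventually_gt_atTop 0] with m hm ha hb h1 hm0
  rw [kPhi_eq m a ha, kPhi_eq m b hb, ← cls_mul]
  refine hm _ fun x => ?_
  refine (phi_mul m hm0 (a.sy x) (b.sy x)).trans ?_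
  have hMM : ‖DD m (a.sy x)‖ ≤ |M| + 1 := (hM m x).trans (by linarith [le_abs_self M])
  calc _ ≤ (|M| + 1) * (ε / (|M| + 1)) := mul_le_mul hMM (h1 x) (norm_nonneg _) hp.le
    _ = ε := by field_simp

theorem kPhi_hmt {a b : Fam (rC r) ι} (h : Hmt a b) : ∀ᶠ m : ℕ in atTop, kPhi m a = kPhi m b := by
  obtain ⟨H, h0, h1⟩ := h
  let H' : Fam (rC (rI r)) ι := H.comp (fun p => (p.1.1, (p.1.2, p.2))) (by fun_prop) (by
    rintro ⟨⟨s, x⟩, t, z⟩ ⟨⟨s', x'⟩, t', z'⟩ ⟨h1, h2, h3⟩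
    simp only at h1 h2 h3
    simp only [rI, rC]
    rcases h1 with h | h
    · simp only [Prod.mk.injEq] at h
      exact ⟨h.1, Or.inl h.2, h2, h3⟩
    · exact ⟨h.1, Or.inr h.2, h2, h3⟩)
  filter_upwards [ev_unit a, ev_unit b, ev_unit H'] with m ha hb hH
  rw [kPhi_eq m a ha, kPhi_eq m b hb]
  apply cls_of_hmt
  refine ⟨H'.Q m hH, fun x => ?_, fun x => ?_⟩
  · change Phi m (H'.sy (0, x)) = Phi m (a.sy x)
    congr 1; funext y; exact h0 _
  · change Phi m (H'.sy (1, x)) = Phi m (b.sy x)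
    congr 1; funext y; exact h1 _

/-- constant symbol -/
def Fam.cs (u : Fam r ι) : Fam (rC r) ι where
  f p := u.f p.1
  cont := u.cont.comp continuous_fst
  unit p := u.unit _
  rel p q h := by
    rcases h.1 with h | h
    · rw [h]
    · rw [u.rel _ _ h]

theorem kPhi_cs (u : Fam r ι) : ∀ᶠ m : ℕ in atTop, kPhi m u.cs = (m * m + 1) • cls u := by
  filter_upwards [ev_unit u.cs, eventually_gt_atTop 0] with m h hm
  rw [kPhi_eq m _ h]
  have : u.cs.Q m h = u.bl (Finset.univ : Finset (Fin (m * m + 1))) := ext' fun x => by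
    change Phi m (fun _ => u.f x) = blockDiagonal (fun k : Fin (m * m + 1) => if k ∈ Finset.univ then u.f x else 1)
    rw [Phi_const m hm, kronecker_one]
    simp
  rw [this, cls_bl]
  simp

theorem Phi_apply (m : ℕ) (F : I × Circle → Matrix ι ι ℂ) (i j : ι) (k l : Fin (m * m + 1)) :
    Phi m F (i, k) (j, l) = ∑ x, star (V0 m x k) * F (pt m x) i j * V0 m x l := by
  have h1 : ∀ y, ((VV ι m)ᴴ * DD m F) (i, k) (j, y) = star (V0 m y k) * F (pt m y) i j := by
    intro y
    rw [Matrix.mul_apply, Fintype.sum_prod_type, Finset.sum_eq_single i, Finset.sum_eq_single y]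
    · simp [VV, DD, blockDiagonal_apply, kronecker_apply]
    · intro b _ hb; simp [DD, blockDiagonal_apply, hb]
    · simp
    · intro b _ hb
      refine Finset.sum_eq_zero fun x _ => ?_
      simp [VV, kronecker_apply, Matrix.one_apply, hb]
    · simp
  have h2 : ∀ j' y, j' ≠ j → VV ι m (j', y) (j, l) = 0 := by
    intro j' y hj; simp [VV, kronecker_apply, Matrix.one_apply, hj]
  rw [Phi, Matrix.mul_apply, Fintype.sum_prod_type, Finset.sum_eq_single j]
  · refine Finset.sum_congr rfl fun y _ => ?_
    rw [h1]
    simp [VV, kronecker_apply]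
  · intro b _ hb
    refine Finset.sum_eq_zero fun x _ => ?_
    rw [h2 b x hb, mul_zero]
  · simp

theorem kPhi_sum_one (a : Fam (rC r) ι) : ∀ᶠ m : ℕ in atTop, kPhi m (a.sum (1 : Fam (rC r) κ)) = kPhi m a := by
  filter_upwards [ev_unit a, ev_unit (a.sum (1 : Fam (rC r) κ)), eventually_gt_atTop 0] with m h h' hm
  rw [kPhi_eq m _ h, kPhi_eq m _ h']
  have : (a.sum (1 : Fam (rC r) κ)).Q m h' = ((a.Q m h).sum (1 : Fam r (κ × Fin (m * m + 1)))).re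
      (Equiv.sumProdDistrib ι κ (Fin (m * m + 1))).symm := ext' fun x => by
    ext ⟨i, k⟩ ⟨j, l⟩
    simp only [re_f, sum_f, reindex_apply, submatrix_apply, Equiv.symm_symm, one_f]
    change Phi m _ _ _ = _
    rw [Phi_apply]
    rcases i with i | i <;> rcases j with j | j
    · simp only [Equiv.sumProdDistrib_apply_left, fromBlocks_apply₁₁, Fam.sy, sum_f]
      exact (Phi_apply m (a.sy x) i j k l).symm
    · simp [Equiv.sumProdDistrib_apply_left, Equiv.sumProdDistrib_apply_right, Fam.sy]
    · simp [Equiv.sumProdDistrib_apply_left, Equiv.sumProdDistrib_apply_right, Fam.sy]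
    · simp only [Equiv.sumProdDistrib_apply_right, fromBlocks_apply₂₂, Fam.sy, sum_f, one_f]
      have := Phi_apply m (fun _ => (1 : Matrix κ κ ℂ)) i j k l
      rw [Phi_const m hm, one_kronecker_one] at this
      exact this.symm
  rw [this, cls_re, cls_sum_one]

end KPhi

end KT

namespace KT

open Matrix unitInterval Filter Topology Fam
open scoped Kronecker Matrix.Norms.L2Operator

noncomputable section Bott

variable {X : Type} [TopologicalSpace X] {r : X → X → Prop}
variable {ι : Type} [Fintype ι] [DecidableEq ι]

theorem DD_sum {β : Type} (s : Finset β) (m : ℕ) (F : β → I × Circle → Matrix ι ι ℂ) :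
    DD m (fun y => ∑ b ∈ s, F b y) = ∑ b ∈ s, DD m (F b) := by
  classical
  ext ⟨i, x⟩ ⟨j, y⟩
  rw [Matrix.sum_apply]
  simp only [DD, blockDiagonal_apply, Matrix.sum_apply]
  split_ifs <;> simp

/-- row embeddings -/
def eR (ι : Type) [DecidableEq ι] : Fin 2 → Matrix (ι ⊕ ι) ι ℂ := ![fromRows 1 0, fromRows 0 1]

theorem eR_mul (b b' : Fin 2) : (eR ι b)ᵀ * eR ι b' = if b = b' then 1 else 0 := by
  fin_cases b <;> fin_cases b' <;> simp [eR, transpose_fromRows, fromCols_mul_fromRows]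

variable (v : Fin 2 → I → ℝ)

/-- discrete isometry pieces -/
def Sv (m : ℕ) (b : Fin 2) : Matrix (Fin (m * m + 1)) (Fin (m * m)) ℂ :=
  Matrix.of fun l k => if (l : ℕ) + b = k + 1 then ((v b (tt m k) : ℝ) : ℂ) else 0

open Classical in
/-- weights -/
def dv (m : ℕ) (b b' : Fin 2) (l : Fin (m * m + 1)) : ℂ :=
  if h : ∃ k : Fin (m * m), (l : ℕ) + b' = k + 1 then ((v b (tt m h.choose) * v b' (tt m h.choose) : ℝ) : ℂ) else 0

theorem dv_of (m : ℕ) (b b' : Fin 2) (l : Fin (m * m + 1)) (k : Fin (m * m)) (h : (l : ℕ) + b' = k + 1) :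
    dv v m b b' l = ((v b (tt m k) * v b' (tt m k) : ℝ) : ℂ) := by
  have hex : ∃ k : Fin (m * m), (l : ℕ) + b' = k + 1 := ⟨k, h⟩
  have : hex.choose = k := by
    have := hex.choose_spec
    ext; omega
  rw [dv, dif_pos hex, this]

theorem Sv_mul (m : ℕ) (b b' : Fin 2) : Sv v m b * (Sv v m b')ᵀ = shf m ((b' : ℤ) - b) (dv v m b b') := by
  ext l l'
  rw [Matrix.mul_apply]
  by_cases h : ∃ k : Fin (m * m), (l' : ℕ) + b' = k + 1
  · obtain ⟨k, hk⟩ := h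
    rw [Finset.sum_eq_single k]
    · simp only [Sv, transpose_apply, Matrix.of_apply, hk, if_true, shf, dv_of v m b b' l' k hk]
      have : ((l : ℕ) + (b : ℕ) = k + 1) ↔ ((l : ℤ) = (l' : ℤ) + ((b' : ℕ) - (b : ℕ) : ℤ)) := by omega
      simp only [this]
      split_ifs <;> simp
    · intro k' _ hk'
      have : ¬ ((l' : ℕ) + b' = k' + 1) := by
        intro h; apply hk'; ext; omega
      simp [Sv, this]
    · simp
  · rw [shf, Matrix.of_apply, dv, dif_neg h]
    simp only [ite_self]
    refine Finset.sum_eq_zero fun k _ => ?_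
    have : ¬ ((l' : ℕ) + b' = k + 1) := fun hk => h ⟨k, hk⟩
    simp [Sv, this]

theorem Sv_iso (hv : ∀ t, v 0 t ^ 2 + v 1 t ^ 2 = 1) (m : ℕ) :
    (Sv v m 0)ᵀ * Sv v m 0 + (Sv v m 1)ᵀ * Sv v m 1 = 1 := by
  have key : ∀ b, (Sv v m b)ᵀ * Sv v m b = diagonal fun k : Fin (m * m) => ((v b (tt m k) ^ 2 : ℝ) : ℂ) := by
    intro b
    ext k k'
    rw [Matrix.mul_apply]
    have hl : (k : ℕ) + 1 - b < m * m + 1 := by omega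
    rw [Finset.sum_eq_single ⟨(k : ℕ) + 1 - b, hl⟩]
    · have h1 : (k : ℕ) + 1 - (b : ℕ) + b = k + 1 := by omega
      simp only [Sv, transpose_apply, Matrix.of_apply, h1, if_true]
      by_cases h : k = k'
      · subst h; simp [sq]
      · have : ¬ ((k : ℕ) + 1 = k' + 1) := by intro h'; apply h; ext; omega
        have h2 : ¬ ((k : ℕ) = k') := by omega
        simp [h2, h]
    · intro l _ hl
      have : ¬ ((l : ℕ) + b = k + 1) := by intro h; apply hl; ext; simp; omega
      simp [Sv, this]
    · simp
  rw [key, key, diagonal_add, ← diagonal_one]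
  congr 1
  funext k
  exact_mod_cast hv (tt m k)

variable (ι) in
/-- the isometry -/
def Wv (m : ℕ) : Matrix ((ι ⊕ ι) × Fin (m * m + 1)) (ι × Fin (m * m)) ℂ := ∑ b, eR ι b ⊗ₖ Sv v m b

theorem Wv_tr (m : ℕ) : (Wv ι v m)ᵀ = ∑ b, (eR ι b)ᵀ ⊗ₖ (Sv v m b)ᵀ := by
  rw [Wv, transpose_sum]; rfl

theorem Wv_iso (hv : ∀ t, v 0 t ^ 2 + v 1 t ^ 2 = 1) (m : ℕ) : (Wv ι v m)ᵀ * Wv ι v m = 1 := by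
  rw [Wv_tr, Wv]
  simp only [Fin.sum_univ_two, Matrix.add_mul, Matrix.mul_add, ← mul_kronecker_mul, eR_mul]
  have := Sv_iso v hv m
  simp only [if_true, zero_kronecker, add_zero, zero_add, show ¬ ((0 : Fin 2) = 1) by decide, show ¬ ((1 : Fin 2) = 0) by decide, if_false]
  rw [← kronecker_add, this, one_kronecker_one]

variable [CompactSpace X] [T2Space X]

theorem kPhi_PU (hvc : ∀ b, Continuous (v b)) (hv : ∀ t, v 0 t ^ 2 + v 1 t ^ 2 = 1) (hv0 : v 0 0 = 0) (hv1 : v 1 1 = 0)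
    (u : Fam r ι) (a : Fam (rC r) (ι ⊕ ι))
    (ha : ∀ x t z, a.f (x, (t, z)) = 1 + ∑ p : Fin 2 × Fin 2,
      ((((v p.1 t * v p.2 t : ℝ)) : ℂ) * (z : ℂ) ^ ((p.2 : ℤ) - p.1)) • (eR ι p.1 * (u.f x - 1) * (eR ι p.2)ᵀ)) :
    ∀ᶠ m : ℕ in atTop, kPhi m a = (m * m) • cls u := by
  obtain ⟨ε, hε, hnear⟩ := kPhi_near a
  let G : Fin 2 × Fin 2 → X → Matrix (ι ⊕ ι) (ι ⊕ ι) ℂ := fun p x => eR ι p.1 * (u.f x - 1) * (eR ι p.2)ᵀ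
  have hGc : ∀ p, Continuous (G p) := fun p =>
    (continuous_const.matrix_mul (u.cont.sub continuous_const)).matrix_mul continuous_const
  have hB : ∀ p : Fin 2 × Fin 2, ∃ M : ℝ, ∀ x, ∑ i, ∑ j, ‖G p x i j‖ ≤ M := by
    intro p
    have hc : Continuous fun x => ∑ i, ∑ j, ‖G p x i j‖ :=
      continuous_finset_sum _ fun i _ => continuous_finset_sum _ fun j _ => ((hGc p).matrix_elem i j).norm
    obtain ⟨M, hM⟩ := isCompact_univ.exists_bound_of_continuousOn hc.continuousOn
    exact ⟨M, fun x => (le_abs_self _).trans (hM x trivial)⟩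
  choose M hM using hB
  have hs : ∀ p : Fin 2 × Fin 2, ∀ᶠ m : ℕ in atTop, 
      ‖DD m (fun y => ((fun t => (((v p.1 t * v p.2 t : ℝ)) : ℂ)) y.1 * (y.2 : ℂ) ^ ((p.2 : ℤ) - p.1)) • (1 : Matrix (ι ⊕ ι) (ι ⊕ ι) ℂ)) * VV (ι ⊕ ι) m -
        VV (ι ⊕ ι) m * ((1 : Matrix (ι ⊕ ι) (ι ⊕ ι) ℂ) ⊗ₖ shf m ((p.2 : ℤ) - p.1) (dv v m p.1 p.2))‖ ≤ ε / (4 * (|M p| + 1)) := by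
    rintro ⟨b, b'⟩
    have hJ : |((b' : ℕ) : ℤ) - ((b : ℕ) : ℤ)| ≤ 1 := by rw [abs_le]; omega
    have := shift_ev (ι := ι ⊕ ι) (((b' : ℕ) : ℤ) - ((b : ℕ) : ℤ)) hJ (fun t => (((v b t * v b' t : ℝ)) : ℂ))
      (by have := hvc b; have := hvc b'; fun_prop) (ε / (4 * (|M (b, b')| + 1))) (by positivity)
    filter_upwards [this] with m hm
    refine hm _ ?_ ?_
    · intro l hl
      rw [dv, dif_neg]
      rintro ⟨k, hk⟩
      apply hl
      have := k.2
      constructor <;> omega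
    · intro l
      by_cases h : ∃ k : Fin (m * m), (l : ℕ) + b' = k + 1
      · obtain ⟨k, hk⟩ := h
        refine ⟨tt m k, ?_, dv_of v m b b' l k hk⟩
        refine (dist_tt m k l).trans ?_
        gcongr
        have h1 : ((l : ℕ) : ℝ) + ((b' : ℕ) : ℝ) = (k : ℕ) + 1 := by exact_mod_cast hk
        have h2 : ((b' : ℕ) : ℝ) ≤ 1 := by have : (b' : ℕ) ≤ 1 := by omega
                                           exact_mod_cast this
        have h3 : (0 : ℝ) ≤ ((b' : ℕ) : ℝ) := by positivity
        have h4 : (0 : ℝ) ≤ (m : ℝ) := by positivity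
        rw [abs_le]; constructor <;> linarith
      · have hd : dv v m b b' l = 0 := by rw [dv, dif_neg h]
        have hb : (l : ℕ) + b' = 0 ∨ m * m < (l : ℕ) + b' := by
          by_contra hcon
          push Not at hcon
          exact h ⟨⟨(l : ℕ) + b' - 1, by omega⟩, by simp; omega⟩
        rcases hb with hb | hb
        · have e1 : b' = 0 := by ext; simp; omega
          have e2 : (l : ℕ) = 0 := by omega
          refine ⟨0, ?_, ?_⟩
          · rw [e2, tt_zero, dist_self]; positivity
          · rw [hd, e1, hv0]; simp
        · have e1 : b' = 1 := by ext; simp; omega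
          have e2 : (l : ℕ) = m * m := by omega
          refine ⟨1, ?_, ?_⟩
          · rw [e2]; exact dist_one_tt m
          · rw [hd, e1, hv1]; simp
  filter_upwards [hnear, eventually_all.2 hs, eventually_gt_atTop 0] with m hm hsm hm0
  have := hm ((u.bl (Finset.univ : Finset (Fin (m * m)))).cor (Wv ι v m) (Wv_iso v hv m)) ?_
  · rw [this, cls_cor, cls_bl]; simp
  intro x
  have hbl : (u.bl (Finset.univ : Finset (Fin (m * m)))).f x - 1 = (u.f x - 1) ⊗ₖ (1 : Matrix (Fin (m * m)) (Fin (m * m)) ℂ) := by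
    rw [kronecker_one]
    simp only [Fam.bl, Finset.mem_univ, if_true]
    rw [← blockDiagonal_one, ← blockDiagonal_sub]; rfl
  have hT : ((u.bl (Finset.univ : Finset (Fin (m * m)))).cor (Wv ι v m) (Wv_iso v hv m)).f x =
      1 + ∑ p : Fin 2 × Fin 2, ((1 : Matrix (ι ⊕ ι) (ι ⊕ ι) ℂ) ⊗ₖ shf m ((p.2 : ℤ) - p.1) (dv v m p.1 p.2)) *
        (G p x ⊗ₖ (1 : Matrix (Fin (m * m + 1)) (Fin (m * m + 1)) ℂ)) := by
    simp only [Fam.cor, hbl]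
    congr 1
    rw [Wv_tr, Wv, Matrix.sum_mul, Matrix.sum_mul, Fintype.sum_prod_type]
    refine Finset.sum_congr rfl fun b _ => ?_
    rw [Matrix.mul_sum]
    refine Finset.sum_congr rfl fun b' _ => ?_
    rw [← mul_kronecker_mul, ← mul_kronecker_mul, ← mul_kronecker_mul, Matrix.mul_one, Matrix.mul_one, Matrix.one_mul, Sv_mul]
  apply phi_sub_le m hm0
  rw [hT]
  have hDD : DD m (a.sy x) = 1 + ∑ p : Fin 2 × Fin 2,
      DD m (fun y => ((fun t => (((v p.1 t * v p.2 t : ℝ)) : ℂ)) y.1 * (y.2 : ℂ) ^ ((p.2 : ℤ) - p.1)) • (1 : Matrix (ι ⊕ ι) (ι ⊕ ι) ℂ)) *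
        (G p x ⊗ₖ (1 : Matrix (Rho m) (Rho m) ℂ)) := by
    have : a.sy x = fun y => (fun _ => (1 : Matrix (ι ⊕ ι) (ι ⊕ ι) ℂ)) y + (fun y => ∑ p : Fin 2 × Fin 2,
        (((fun t => (((v p.1 t * v p.2 t : ℝ)) : ℂ)) y.1 * (y.2 : ℂ) ^ ((p.2 : ℤ) - p.1)) • (1 : Matrix (ι ⊕ ι) (ι ⊕ ι) ℂ)) * G p x) y := by
      funext y
      rw [Fam.sy, ha]
      simp [G]
    rw [this, DD_add, DD_const, one_kronecker_one, DD_sum]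
    congr 1
    refine Finset.sum_congr rfl fun p _ => ?_
    rw [DD_mul (G := fun _ => G p x), DD_const]
  have hcomm : ∀ p, (G p x ⊗ₖ (1 : Matrix (Rho m) (Rho m) ℂ)) * VV (ι ⊕ ι) m = VV (ι ⊕ ι) m * (G p x ⊗ₖ (1 : Matrix (Fin (m * m + 1)) (Fin (m * m + 1)) ℂ)) := by
    intro p
    rw [VV, ← mul_kronecker_mul, ← mul_kronecker_mul]; simp
  have hfin : DD m (a.sy x) * VV (ι ⊕ ι) m - VV (ι ⊕ ι) m * (1 + ∑ p : Fin 2 × Fin 2, ((1 : Matrix (ι ⊕ ι) (ι ⊕ ι) ℂ) ⊗ₖ shf m ((p.2 : ℤ) - p.1) (dv v m p.1 p.2)) *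
        (G p x ⊗ₖ (1 : Matrix (Fin (m * m + 1)) (Fin (m * m + 1)) ℂ))) = ∑ p : Fin 2 × Fin 2,
      (DD m (fun y => ((fun t => (((v p.1 t * v p.2 t : ℝ)) : ℂ)) y.1 * (y.2 : ℂ) ^ ((p.2 : ℤ) - p.1)) • (1 : Matrix (ι ⊕ ι) (ι ⊕ ι) ℂ)) * VV (ι ⊕ ι) m -
        VV (ι ⊕ ι) m * ((1 : Matrix (ι ⊕ ι) (ι ⊕ ι) ℂ) ⊗ₖ shf m ((p.2 : ℤ) - p.1) (dv v m p.1 p.2))) * (G p x ⊗ₖ (1 : Matrix (Fin (m * m + 1)) (Fin (m * m + 1)) ℂ)) := by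
    rw [hDD, Matrix.add_mul, Matrix.mul_add, Matrix.one_mul, Matrix.mul_one, add_sub_add_left_eq_sub,
      Matrix.sum_mul, Matrix.mul_sum, ← Finset.sum_sub_distrib]
    refine Finset.sum_congr rfl fun p _ => ?_
    rw [Matrix.sub_mul, Matrix.mul_assoc, hcomm, Matrix.mul_assoc, Matrix.mul_assoc]
  rw [hfin]
  have hle : ∀ p ∈ (Finset.univ : Finset (Fin 2 × Fin 2)), ‖(DD m (fun y => ((fun t => (((v p.1 t * v p.2 t : ℝ)) : ℂ)) y.1 * (y.2 : ℂ) ^ ((p.2 : ℤ) - p.1)) • (1 : Matrix (ι ⊕ ι) (ι ⊕ ι) ℂ)) * VV (ι ⊕ ι) m -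
        VV (ι ⊕ ι) m * ((1 : Matrix (ι ⊕ ι) (ι ⊕ ι) ℂ) ⊗ₖ shf m ((p.2 : ℤ) - p.1) (dv v m p.1 p.2))) * (G p x ⊗ₖ (1 : Matrix (Fin (m * m + 1)) (Fin (m * m + 1)) ℂ))‖ ≤ ε / 4 := by
    intro p _
    refine (norm_mul3 _ _ (hsm p) (((norm_kron_one_le _ _).trans (hM p x)).trans ((le_abs_self _).trans (le_add_of_nonneg_right zero_le_one)))).trans ?_
    have hp : 0 < |M p| + 1 := by positivity
    apply le_of_eq; field_simp
  refine (norm_sum_le_of_le _ hle).trans ?_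
  simp
  linarith

end Bott

end KT

namespace KT

open Matrix unitInterval Filter Topology Fam
open ComplexConjugate

noncomputable section Geom

/-- unit sphere in two-dimensional complex space -/
abbrev Q3 : Type := {p : ℂ × ℂ // ‖p.1‖ ^ 2 + ‖p.2‖ ^ 2 = 1}

/-- unit sphere in three-dimensional real space -/
abbrev S2 : Type := {p : ℂ × ℝ // ‖p.1‖ ^ 2 + p.2 ^ 2 = 1}

def k0 : Q3 := ⟨(0, 1), by simp⟩

def ell (v : ℂ × ℂ) : ℝ := Real.sqrt (‖v.1‖ ^ 2 + ‖v.2‖ ^ 2)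

theorem ell_pos {v : ℂ × ℂ} (h : v ≠ 0) : 0 < ell v := by
  apply Real.sqrt_pos.2
  rcases v with ⟨a, b⟩
  by_cases ha : a = 0
  · have hb : b ≠ 0 := by rintro rfl; exact h (by rw [ha]; rfl)
    have : 0 < ‖b‖ := norm_pos_iff.2 hb
    simp only; positivity
  · have : 0 < ‖a‖ := norm_pos_iff.2 ha
    simp only; positivity

theorem ell_sq (v : ℂ × ℂ) : ell v ^ 2 = ‖v.1‖ ^ 2 + ‖v.2‖ ^ 2 := Real.sq_sqrt (by positivity)

theorem ell_cont : Continuous ell := by unfold ell; fun_prop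

open Classical in
/-- normalization -/
def nQ (v : ℂ × ℂ) : Q3 := if h : v ≠ 0 then ⟨(v.1 / (ell v : ℂ), v.2 / (ell v : ℂ)), by
    have := ell_pos h
    simp only [norm_div, div_pow, Complex.norm_real, Real.norm_eq_abs, sq_abs, ell_sq]
    rw [← add_div, ← ell_sq]; field_simp⟩ else k0

theorem nQ_val {v : ℂ × ℂ} (h : v ≠ 0) : (nQ v).1 = (v.1 / (ell v : ℂ), v.2 / (ell v : ℂ)) := by
  rw [nQ, dif_pos h]

theorem nQ_cont {Y : Type} [TopologicalSpace Y] {v : Y → ℂ × ℂ} (hv : Continuous v) (h : ∀ y, v y ≠ 0) :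
    Continuous fun y => nQ (v y) := by
  refine continuous_induced_rng.2 ?_
  have : (Subtype.val ∘ fun y => nQ (v y)) = fun y => ((v y).1 / (ell (v y) : ℂ), (v y).2 / (ell (v y) : ℂ)) := by
    funext y; exact nQ_val (h y)
  rw [this]
  have hl : Continuous fun y => ((ell (v y) : ℝ) : ℂ) := Complex.continuous_ofReal.comp (ell_cont.comp hv)
  have hne : ∀ y, ((ell (v y) : ℝ) : ℂ) ≠ 0 := fun y => by exact_mod_cast (ell_pos (h y)).ne'
  exact ((continuous_fst.comp hv).div hl hne).prodMk ((continuous_snd.comp hv).div hl hne)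

theorem Q3.ne (q : Q3) : q.1 ≠ 0 := by
  intro h; have := q.2; rw [h] at this; simp at this

theorem nQ_self (q : Q3) : nQ q.1 = q := by
  apply Subtype.ext
  rw [nQ_val q.ne]
  have : ell q.1 = 1 := by rw [ell, q.2]; simp
  rw [this]; simp

theorem ell_neg (v : ℂ × ℂ) : ell (-v) = ell v := by simp [ell]

theorem nQ_neg (v : ℂ × ℂ) : (nQ (-v)).1 = (nQ v).1 ∨ (nQ (-v)).1 = -(nQ v).1 := by
  by_cases h : v = 0
  · left; rw [h]; simp
  · right
    rw [nQ_val h, nQ_val (neg_ne_zero.2 h), ell_neg]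
    simp [neg_div]

theorem nQ_axis {b : ℝ} (h : b ≠ 0) : (nQ (0, (b : ℂ))).1 = k0.1 ∨ (nQ (0, (b : ℂ))).1 = -k0.1 := by
  rw [nQ_val (by simpa using h)]
  have : ell (0, (b : ℂ)) = |b| := by simp [ell, Real.sqrt_sq_eq_abs]
  rw [this]
  rcases lt_or_gt_of_ne h with h' | h'
  · right; rw [abs_of_neg h']; simp [k0, h, div_neg]
  · left; rw [abs_of_pos h']; simp [k0, h]

variable {X Y : Type} [TopologicalSpace X] [TopologicalSpace Y] {r : X → X → Prop} {s : Y → Y → Prop}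
variable {ι κ n : Type} [Fintype ι] [DecidableEq ι] [Fintype κ] [DecidableEq κ] [Fintype n] [DecidableEq n]

/-- relation on `X × Q3` -/
def rQ (r : X → X → Prop) : X × Q3 → X × Q3 → Prop := fun p q =>
  (p.1 = q.1 ∨ r p.1 q.1) ∧ (q.2.1 = p.2.1 ∨ q.2.1 = -p.2.1)

/-- relation on `X × S2` -/
def rS (r : X → X → Prop) : X × S2 → X × S2 → Prop := fun p q =>
  (p.1 = q.1 ∨ r p.1 q.1) ∧ (q.2.1 = p.2.1 ∨ q.2.1 = -p.2.1)

theorem inv_neg_of {A : Matrix ι ι ℂ} (h : IsUnit A) : (-A)⁻¹ = -A⁻¹ := by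
  apply Matrix.inv_eq_right_inv
  rw [neg_mul_neg]; exact Matrix.mul_nonsing_inv _ ((Matrix.isUnit_iff_isUnit_det _).1 h)

/-- conjugated family -/
def Fam.cj (g : Y → Matrix ι ι ℂ) (hg : Continuous g) (hu : ∀ y, IsUnit (g y))
    (hr : ∀ y y', s y y' → g y' = g y ∨ g y' = -g y) (A : Fam s ι) : Fam s ι where
  f y := g y * A.f y * (g y)⁻¹
  cont := (hg.matrix_mul A.cont).matrix_mul (continuous_inv_of hg hu)
  unit y := ((hu y).mul (A.unit y)).mul (isUnit_inv (hu y))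
  rel y y' h := by
    rw [← A.rel y y' h]
    rcases hr y y' h with h | h
    · rw [h]
    · rw [h, inv_neg_of (hu y)]; simp

/-- scalar block matrix -/
def gh (ι : Type) [DecidableEq ι] (v : ℂ × ℂ) : Matrix (ι ⊕ ι) (ι ⊕ ι) ℂ := sm ι v.1 (-conj v.2) v.2 (conj v.1)

theorem gh_cont : Continuous (gh ι) := by
  unfold gh; apply sm_cont <;> fun_prop

theorem gh_neg (v : ℂ × ℂ) : gh ι (-v) = - gh ι v := by
  simp [gh, sm, fromBlocks_neg]

/-- the adjoint -/
def ghi (ι : Type) [DecidableEq ι] (v : ℂ × ℂ) : Matrix (ι ⊕ ι) (ι ⊕ ι) ℂ := sm ι (conj v.1) (conj v.2) (-v.2) v.1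

theorem gh_mul (v : ℂ × ℂ) : gh ι v * ghi ι v = ((ell v ^ 2 : ℝ) : ℂ) • (1 : Matrix (ι ⊕ ι) (ι ⊕ ι) ℂ) := by
  rw [gh, ghi, sm_mul, ← sm_one]
  have : ((ell v ^ 2 : ℝ) : ℂ) = v.1 * conj v.1 + v.2 * conj v.2 := by
    rw [ell_sq, Complex.mul_conj, Complex.mul_conj]; simp [Complex.normSq_eq_norm_sq]
  rw [this]
  simp only [sm, fromBlocks_smul, smul_smul, ← add_smul]
  congr 1 <;> · congr 1; ring

theorem gh_unit {v : ℂ × ℂ} (h : v ≠ 0) : IsUnit (gh ι v) := by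
  have hp : ((ell v ^ 2 : ℝ) : ℂ) ≠ 0 := by exact_mod_cast (pow_pos (ell_pos h) 2).ne'
  refine isUnit_of_mul_eq_one (B := ((ell v ^ 2 : ℝ) : ℂ)⁻¹ • ghi ι v) ?_
  rw [Matrix.mul_smul, gh_mul, smul_smul, inv_mul_cancel₀ hp, one_smul]

theorem gh_inv (q : ℂ × ℂ) (h : ‖q.1‖ ^ 2 + ‖q.2‖ ^ 2 = 1) : (gh ι q)⁻¹ = ghi ι q := by
  apply Matrix.inv_eq_right_inv
  rw [gh_mul, ell_sq, h]; simp

theorem gh_comm (a : ℂ) (A : Matrix ι ι ℂ) : gh ι (a, 0) * fromBlocks A 0 0 1 = fromBlocks A 0 0 1 * gh ι (a, 0) := by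
  simp [gh, sm, fromBlocks_multiply]

/-- inclusion -/
def inS (w : S2) : ℂ × ℂ := (w.1.1, (w.1.2 : ℂ))

theorem inS_cont : Continuous inS := by unfold inS; fun_prop

theorem inS_mem (w : S2) : ‖(inS w).1‖ ^ 2 + ‖(inS w).2‖ ^ 2 = 1 := by
  simp [inS]; exact w.2

def iS (w : S2) : Q3 := ⟨inS w, inS_mem w⟩

theorem iS_cont : Continuous iS := inS_cont.subtype_mk _

theorem inS_rel {w w' : S2} (h : w'.1 = w.1 ∨ w'.1 = -w.1) : inS w' = inS w ∨ inS w' = -inS w := by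
  rcases h with h | h
  · left; simp [inS, h]
  · right; simp [inS, h]

theorem inS_ne (w : S2) : inS w ≠ 0 := (iS w).ne

/-- first deformation -/
def gam (t : I) (w : S2) : ℂ × ℂ :=
  (((1 - (t : ℝ) : ℝ) : ℂ) * w.1.1, (((1 - (t : ℝ)) * w.1.2 + t : ℝ) : ℂ) + ((t * (1 - t) : ℝ) : ℂ) * Complex.I)

theorem gam_ne (t : I) (w : S2) : gam t w ≠ 0 := by
  intro h
  have h1 := congrArg Prod.fst h
  have h2 := congrArg Prod.snd h
  simp only [gam, Prod.fst_zero, Prod.snd_zero] at h1 h2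
  have h3 := congrArg Complex.im h2
  have h4 := congrArg Complex.re h2
  simp only [Complex.add_im, Complex.ofReal_im, Complex.mul_im, Complex.ofReal_re, Complex.I_im, Complex.I_re, Complex.add_re, Complex.mul_re, Complex.zero_re, Complex.zero_im] at h3 h4
  have h5 : (t : ℝ) * (1 - t) = 0 := by linarith
  have h6 : (1 - (t : ℝ)) * w.1.2 + t = 0 := by linarith
  rcases mul_eq_zero.1 h5 with h | h
  · rw [h] at h1 h6
    have := w.2
    simp at h1 h6
    rw [h1, h6] at this; simp at this
  · have : (t : ℝ) = 1 := by linarith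
    rw [this] at h6; simp at h6

theorem gam_cont : Continuous fun p : I × S2 => gam p.1 p.2 := by unfold gam; fun_prop

theorem gam_zero (w : S2) : gam 0 w = inS w := by simp [gam, inS]

theorem gam_one (w : S2) : gam 1 w = k0.1 := by simp [gam, k0]

/-- the second deformation, acting on the first coordinate -/
def rt (t : I) (w : S2) : ℂ × ℂ := ((((1 - (t : ℝ)) + t * max 0 (1 / 2 - |w.1.2|) : ℝ) : ℂ) * w.1.1, (w.1.2 : ℂ))

/-- the third deformation, acting on the second coordinate -/
def rt' (t : I) (w : S2) : ℂ × ℂ := (w.1.1, ((((1 - (t : ℝ)) + t * max 0 (|w.1.2| - 1 / 2)) * w.1.2 : ℝ) : ℂ))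

theorem fac_pos (t : I) {m : ℝ} (hm : 0 < m) : 0 < (1 - (t : ℝ)) + t * m := by
  have h0 := t.2.1
  have h1 := t.2.2
  rcases eq_or_lt_of_le h0 with h | h
  · rw [← h]; simp
  · have : 0 < (t : ℝ) * m := mul_pos h hm
    linarith

theorem rt_ne (t : I) (w : S2) : rt t w ≠ 0 := by
  intro h
  have h1 := congrArg Prod.fst h
  have h2 := congrArg Prod.snd h
  simp only [rt, Prod.fst_zero, Prod.snd_zero] at h1 h2
  have hb : w.1.2 = 0 := by exact_mod_cast h2
  rw [hb] at h1
  have hf := fac_pos t (m := max 0 (1 / 2 - |(0 : ℝ)|)) (by simp)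
  have ha : w.1.1 = 0 := by
    rcases mul_eq_zero.1 h1 with h | h
    · exact absurd (by exact_mod_cast h) hf.ne'
    · exact h
  have := w.2
  rw [ha, hb] at this; simp at this

theorem rt'_ne (t : I) (w : S2) : rt' t w ≠ 0 := by
  intro h
  have h1 := congrArg Prod.fst h
  have h2 := congrArg Prod.snd h
  simp only [rt', Prod.fst_zero, Prod.snd_zero] at h1 h2
  have hw := w.2
  rw [h1] at hw
  simp at hw
  have hb : |w.1.2| = 1 := by rcases hw with h | h <;> simp [h]
  rw [hb] at h2
  have hf := fac_pos t (m := max 0 (1 - 1 / 2)) (by norm_num)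
  have h3 : ((1 - (t : ℝ)) + t * max 0 (1 - 1 / 2)) * w.1.2 = 0 := by exact_mod_cast h2
  rcases mul_eq_zero.1 h3 with h | h
  · exact hf.ne' h
  · rw [h] at hb; simp at hb

theorem rt_cont : Continuous fun p : I × S2 => rt p.1 p.2 := by unfold rt; fun_prop
theorem rt'_cont : Continuous fun p : I × S2 => rt' p.1 p.2 := by unfold rt'; fun_prop

theorem rt_rel (t : I) {w w' : S2} (h : w'.1 = w.1 ∨ w'.1 = -w.1) : rt t w' = rt t w ∨ rt t w' = -rt t w := by
  rcases h with h | h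
  · left; simp [rt, h]
  · right; simp [rt, h]

theorem rt'_rel (t : I) {w w' : S2} (h : w'.1 = w.1 ∨ w'.1 = -w.1) : rt' t w' = rt' t w ∨ rt' t w' = -rt' t w := by
  rcases h with h | h
  · left; simp [rt', h]
  · right; simp [rt', h]

theorem nQ_rel {v v' : ℂ × ℂ} (h : v' = v ∨ v' = -v) : (nQ v').1 = (nQ v).1 ∨ (nQ v').1 = -(nQ v).1 := by
  rcases h with rfl | rfl
  · left; rfl
  · exact nQ_neg v

theorem rt_zero (w : S2) : rt 0 w = inS w := by simp [rt, inS]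
theorem rt'_zero (w : S2) : rt' 0 w = inS w := by simp [rt', inS]

theorem dichot (w : S2) : (∃ b : ℝ, b ≠ 0 ∧ rt 1 w = (0, (b : ℂ))) ∨ (∃ a : ℂ, rt' 1 w = (a, 0)) := by
  rcases le_total (1 / 2) |w.1.2| with h | h
  · left
    refine ⟨w.1.2, ?_, ?_⟩
    · intro h'; rw [h'] at h; norm_num at h
    · simp only [rt, Set.Icc.coe_one, sub_self, zero_add, one_mul]
      rw [max_eq_left (by linarith)]; simp
  · right
    refine ⟨w.1.1, ?_⟩
    simp only [rt', Set.Icc.coe_one, sub_self, zero_add, one_mul]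
    rw [max_eq_left (by linarith)]; simp

end Geom
end KT

namespace KT

open Matrix unitInterval Filter Topology Fam
open ComplexConjugate

noncomputable section LemG

variable {X Y : Type} [TopologicalSpace X] [TopologicalSpace Y] {r : X → X → Prop} {s : Y → Y → Prop}
variable {ι κ n : Type} [Fintype ι] [DecidableEq ι] [Fintype κ] [DecidableEq κ] [Fintype n] [DecidableEq n]

/-- restriction to the two-sphere -/
def Fam.onS (f : Fam (rQ r) ι) : Fam (rS r) ι :=
  f.comp (fun p => (p.1, iS p.2)) (continuous_fst.prodMk (iS_cont.comp continuous_snd))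
    (fun p q h => ⟨h.1, inS_rel h.2⟩)

/-- conjugation by the tautological family -/
def Fam.gc (F : Fam (rS r) (ι ⊕ ι)) : Fam (rS r) (ι ⊕ ι) :=
  Fam.cj (fun p => gh ι (inS p.2)) (gh_cont.comp (inS_cont.comp continuous_snd)) (fun p => gh_unit (inS_ne _))
    (fun p q h => by
      rcases inS_rel h.2 with h | h
      · left; rw [h]
      · right; rw [h, gh_neg]) F

/-- the deformed family -/
def Fam.dt (f : Fam (rQ r) ι) : Fam (rI (rS r)) (ι ⊕ ι) :=
  (f.comp (s := rI (rS r)) (fun p => (p.2.1, nQ (rt p.1 p.2.2)))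
    ((continuous_fst.comp continuous_snd).prodMk (nQ_cont (rt_cont.comp
      (continuous_fst.prodMk (continuous_snd.comp continuous_snd))) (fun p => rt_ne _ _)))
    (fun p q h => ⟨h.2.1, by
      have := nQ_rel (rt_rel p.1 h.2.2)
      rwa [← h.1]⟩)).sum 1

theorem Fam.dt_f (f : Fam (rQ r) ι) (t : I) (x : X) (w : S2) :
    f.dt.f (t, (x, w)) = fromBlocks (f.f (x, nQ (rt t w))) 0 0 1 := rfl

theorem Fam.onS_f (f : Fam (rQ r) ι) (x : X) (w : S2) : f.onS.f (x, w) = f.f (x, iS w) := rfl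

theorem lemG_b (f : Fam (rQ r) ι) (hf : ∀ x, f.f (x, k0) = 1) :
    cls (f.onS.sum (1 : Fam (rS r) ι)).gc = cls (f.onS.sum (1 : Fam (rS r) ι)) := by
  let T : Fam (rS r) (ι ⊕ ι) := f.dt.comp (fun p => (1, p)) (by fun_prop) (fun p q h => ⟨rfl, h⟩)
  have hz : ∀ p : X × S2, f.dt.f (0, p) = (f.onS.sum (1 : Fam (rS r) ι)).f p := by
    rintro ⟨x, w⟩
    have : nQ (rt 0 w) = iS w := by rw [rt_zero]; exact nQ_self (iS w)
    rw [Fam.dt_f, this]; rfl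
  have h1 : Hmt (f.onS.sum (1 : Fam (rS r) ι)) T := ⟨f.dt, hz, fun p => rfl⟩
  have h2 : Hmt (f.onS.sum (1 : Fam (rS r) ι)).gc T := by
    refine ⟨Fam.cj (fun p => gh ι (rt' p.1 p.2.2)) (gh_cont.comp (rt'_cont.comp
      (continuous_fst.prodMk (continuous_snd.comp continuous_snd)))) (fun p => gh_unit (rt'_ne _ _)) ?_ f.dt, ?_, ?_⟩
    · intro p q h
      rw [← h.1]
      rcases rt'_rel p.1 h.2.2 with h | h
      · left; rw [h]
      · right; rw [h, gh_neg]
    · rintro ⟨x, w⟩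
      simp only [Fam.cj, Fam.gc, hz, rt'_zero]
    · rintro ⟨x, w⟩
      simp only [Fam.cj, T, comp_f]
      have hu := (Matrix.isUnit_iff_isUnit_det _).1 (gh_unit (ι := ι) (rt'_ne 1 w))
      rcases dichot w with ⟨b, hb, h⟩ | ⟨a, h⟩
      · have : f.f (x, nQ (rt 1 w)) = 1 := by
          rw [h, ← hf x]
          exact (f.rel (x, k0) (x, nQ (0, (b : ℂ))) ⟨Or.inl rfl, nQ_axis hb⟩).symm
        have h' : f.dt.f (1, (x, w)) = 1 := by
          rw [Fam.dt_f, this, fromBlocks_one]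
        rw [h', Matrix.mul_one, Matrix.mul_nonsing_inv _ hu]; exact h'.symm
      · have h' : f.dt.f (1, (x, w)) = fromBlocks (f.f (x, nQ (rt 1 w))) 0 0 1 := rfl
        have h3 : gh ι (rt' 1 w) * f.dt.f (1, (x, w)) = f.dt.f (1, (x, w)) * gh ι (rt' 1 w) := by
          rw [h', h, gh_comm]
        rw [h3, Matrix.mul_assoc, Matrix.mul_nonsing_inv _ hu, Matrix.mul_one]; rfl
  rw [cls_of_hmt h1, cls_of_hmt h2]

def negS (w : S2) : S2 := ⟨-w.1, by have := w.2; simpa using this⟩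

theorem negS_cont : Continuous negS := by
  unfold negS
  exact (continuous_subtype_val.neg).subtype_mk _

/-- the corner family -/
def Gt (f : Fam (rQ r) ι) (t : I) (x : X) (w : S2) : Matrix (ι ⊕ ι) (ι ⊕ ι) ℂ :=
  fromBlocks (f.f (x, nQ (gam t w))) 0 0 1

theorem Gt_cont (f : Fam (rQ r) ι) {Z : Type} [TopologicalSpace Z] {t : Z → I} {x : Z → X} {w : Z → S2}
    (ht : Continuous t) (hx : Continuous x) (hw : Continuous w) : Continuous fun z => Gt f (t z) (x z) (w z) := by
  unfold Gt
  refine Continuous.matrix_fromBlocks (f.cont.comp (hx.prodMk (nQ_cont (gam_cont.comp (ht.prodMk hw)) fun p => gam_ne _ _)))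
    continuous_const continuous_const continuous_const

def Mw (ι : Type) [DecidableEq ι] [Fintype ι] (w : S2) : Matrix ((ι ⊕ ι) ⊕ (ι ⊕ ι)) ((ι ⊕ ι) ⊕ (ι ⊕ ι)) ℂ :=
  fromBlocks 1 0 0 (gh ι (inS w)) * sm (ι ⊕ ι) 1 1 1 (-1)

theorem had_unit : IsUnit (sm κ 1 1 1 (-1)) := by
  refine isUnit_of_mul_eq_one (B := sm κ (1/2) (1/2) (1/2) (-(1/2))) ?_
  rw [sm_mul, ← sm_one]; norm_num

theorem swap_unit : IsUnit (sm κ 0 1 1 0) := by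
  refine isUnit_of_mul_eq_one (B := sm κ 0 1 1 0) ?_
  rw [sm_mul, ← sm_one]; norm_num

theorem Mw_unit (w : S2) : IsUnit (Mw ι w) := (isUnit_fromBlocks isUnit_one (gh_unit (inS_ne w))).mul had_unit

theorem Mw_cont : Continuous (Mw ι) := by
  unfold Mw
  exact (Continuous.matrix_fromBlocks continuous_const continuous_const continuous_const
    (gh_cont.comp inS_cont)).matrix_mul continuous_const

theorem Mw_neg {w w' : S2} (h : inS w' = -inS w) : Mw ι w' = Mw ι w * sm (ι ⊕ ι) 0 1 1 0 := by
  rw [Mw, Mw, h, gh_neg, Matrix.mul_assoc, sm_mul]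
  simp [sm, fromBlocks_multiply]

theorem conj_mul_right {M S D : Matrix ι ι ℂ} (hS : S * S = 1) : (M * S) * (S * D * S) * (M * S)⁻¹ = M * D * M⁻¹ := by
  rw [Matrix.mul_inv_rev, Matrix.inv_eq_right_inv hS]
  have : M * S * (S * D * S) * (S * M⁻¹) = M * (S * S) * D * (S * S) * M⁻¹ := by simp only [Matrix.mul_assoc]
  rw [this, hS]; simp

theorem lemG_a (f : Fam (rQ r) ι) (hf : ∀ x, f.f (x, k0) = 1) :
    cls (f.onS.sum (1 : Fam (rS r) ι)) + cls (f.onS.sum (1 : Fam (rS r) ι)).gc = 0 := by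
  have hGr : ∀ t x x' w w', (x = x' ∨ r x x') → w'.1 = w.1 → Gt f t x' w' = Gt f t x w := by
    intro t x x' w w' hx hw
    have hw' : w' = w := Subtype.ext hw
    rw [hw', Gt, Gt, f.rel (x, nQ (gam t w)) (x', nQ (gam t w)) ⟨hx, Or.inl rfl⟩]
  have hGu : ∀ t x w, IsUnit (Gt f t x w) := fun t x w => isUnit_fromBlocks (f.unit _) isUnit_one
  have hG0 : ∀ x w, Gt f 0 x w = (f.onS.sum (1 : Fam (rS r) ι)).f (x, w) := by
    intro x w
    have : nQ (gam 0 w) = iS w := by rw [gam_zero]; exact nQ_self (iS w)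
    rw [Gt, this]; rfl
  have hG1 : ∀ x w, Gt f 1 x w = 1 := by
    intro x w
    have : nQ (gam 1 w) = k0 := by rw [gam_one]; exact nQ_self k0
    simp [Gt, this, hf]
  have key : Hmt ((f.onS.sum (1 : Fam (rS r) ι)).sum (f.onS.sum (1 : Fam (rS r) ι)).gc) 1 := by
    refine ⟨⟨fun p => Mw ι p.2.2 * fromBlocks (Gt f p.1 p.2.1 p.2.2) 0 0 (Gt f p.1 p.2.1 (negS p.2.2)) * (Mw ι p.2.2)⁻¹, ?_, ?_, ?_⟩, ?_, ?_⟩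
    · have hM : Continuous fun p : I × (X × S2) => Mw ι p.2.2 := Mw_cont.comp (by fun_prop)
      refine (hM.matrix_mul ?_).matrix_mul (continuous_inv_of hM fun p => Mw_unit _)
      exact Continuous.matrix_fromBlocks (Gt_cont f (by fun_prop) (by fun_prop) (by fun_prop)) continuous_const continuous_const
        (Gt_cont f (by fun_prop) (by fun_prop) (negS_cont.comp (by fun_prop)))
    · intro p
      exact ((Mw_unit _).mul (isUnit_fromBlocks (hGu _ _ _) (hGu _ _ _))).mul (isUnit_inv (Mw_unit _))
    · rintro ⟨t, x, w⟩ ⟨t', x', w'⟩ ⟨h1, h2, h3⟩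
      simp only at h1 h2 h3 ⊢
      subst h1
      rcases h3 with h3 | h3
      · rw [hGr t x x' w w' h2 h3, hGr t x x' (negS w) (negS w') h2 (by simp [negS, h3])]
        have hw' : w' = w := Subtype.ext h3
        rw [hw']
      · rw [hGr t x x' (negS w) w' h2 h3, hGr t x x' w (negS w') h2 (by simp [negS, h3]),
          Mw_neg (w := w) (w' := w') (by simp [inS, h3])]
        rw [← conj_mul_right (M := Mw ι w) (S := sm (ι ⊕ ι) 0 1 1 0) (by rw [sm_mul, ← sm_one]; norm_num)]
        congr 2
        simp [sm, fromBlocks_multiply]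
    · rintro ⟨x, w⟩
      simp only [hG0]
      have e1 : (f.onS.sum (1 : Fam (rS r) ι)).f (x, negS w) = (f.onS.sum (1 : Fam (rS r) ι)).f (x, w) :=
        ((f.onS.sum (1 : Fam (rS r) ι)).rel (x, w) (x, negS w) ⟨Or.inl rfl, Or.inr rfl⟩).symm
      rw [e1]
      set A := (f.onS.sum (1 : Fam (rS r) ι)).f (x, w) with hA
      have hh := (Matrix.isUnit_iff_isUnit_det _).1 (had_unit (κ := ι ⊕ ι))
      have hc : sm (ι ⊕ ι) 1 1 1 (-1) * fromBlocks A 0 0 A = fromBlocks A 0 0 A * sm (ι ⊕ ι) 1 1 1 (-1) := by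
        simp [sm, fromBlocks_multiply]
      rw [Mw, Matrix.mul_inv_rev, Matrix.mul_assoc _ (sm _ _ _ _ _), hc]
      have hgi : (fromBlocks (1 : Matrix (ι ⊕ ι) (ι ⊕ ι) ℂ) 0 0 (gh ι (inS w)))⁻¹ = fromBlocks 1 0 0 (gh ι (inS w))⁻¹ := by
        apply Matrix.inv_eq_right_inv
        rw [fromBlocks_multiply, Matrix.mul_nonsing_inv _ ((Matrix.isUnit_iff_isUnit_det _).1 (gh_unit (inS_ne w)))]
        simp
      have : ∀ (g D S R: Matrix ((ι ⊕ ι) ⊕ (ι ⊕ ι)) ((ι ⊕ ι) ⊕ (ι ⊕ ι)) ℂ), S * S⁻¹ = 1 → g * (D * S) * (S⁻¹ * R) = g * D * R := by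
        intro g D S R h
        have : g * (D * S) * (S⁻¹ * R) = g * D * (S * S⁻¹) * R := by simp only [Matrix.mul_assoc]
        rw [this, h, Matrix.mul_one]
      rw [this _ _ _ _ (Matrix.mul_nonsing_inv _ hh), hgi]
      simp only [fromBlocks_multiply, Fam.gc, Fam.cj, sum_f]
      rw [hA]
      simp
    · rintro ⟨x, w⟩
      simp only [hG1, fromBlocks_one, Matrix.mul_one, one_f]
      exact Matrix.mul_nonsing_inv _ ((Matrix.isUnit_iff_isUnit_det _).1 (Mw_unit w))
  rw [← cls_sum, cls_of_hmt key, cls_one]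

theorem lemG (f : Fam (rQ r) ι) (hf : ∀ x, f.f (x, k0) = 1) : cls f.onS + cls f.onS = 0 := by
  have := lemG_a f hf
  rwa [lemG_b f hf, cls_sum_one] at this

end LemG
end KT

namespace KT

open Matrix unitInterval Filter Topology Fam
open ComplexConjugate

noncomputable section LemR

variable {X Y : Type} [TopologicalSpace X] [TopologicalSpace Y] {r : X → X → Prop} {s : Y → Y → Prop}
variable {ι κ n : Type} [Fintype ι] [DecidableEq ι] [Fintype κ] [DecidableEq κ] [Fintype n] [DecidableEq n]

/-- special unitary matrix attached to a vector -/
def su (v : ℂ × ℂ) : Matrix (Fin 2) (Fin 2) ℂ := !![v.1, -conj v.2; v.2, conj v.1]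

theorem su_cont : Continuous su := by
  refine continuous_matrix fun i j => ?_
  fin_cases i <;> fin_cases j <;> simp [su] <;> fun_prop

theorem su_neg (v : ℂ × ℂ) : su (-v) = - su v := by
  ext i j; fin_cases i <;> fin_cases j <;> simp [su]

theorem su_det (v : ℂ × ℂ) : (su v).det = ((ell v ^ 2 : ℝ) : ℂ) := by
  rw [su, Matrix.det_fin_two_of, ell_sq]
  push_cast
  rw [← Complex.mul_conj', ← Complex.mul_conj']; ring

theorem su_unit {v : ℂ × ℂ} (h : v ≠ 0) : IsUnit (su v) := by
  rw [Matrix.isUnit_iff_isUnit_det, su_det, isUnit_iff_ne_zero]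
  exact_mod_cast ne_of_gt (pow_pos (ell_pos h) 2)

/-- tensor flip -/
def Pi4 : Matrix (Fin 2 ⊕ Fin 2) (Fin 2 ⊕ Fin 2) ℂ :=
  fromBlocks !![1, 0; 0, 0] !![0, 0; 1, 0] !![0, 1; 0, 0] !![0, 0; 0, 1]

theorem Pi4_sq : Pi4 * Pi4 = 1 := by
  rw [Pi4, fromBlocks_multiply, ← fromBlocks_one]
  congr 1 <;> · ext i j; fin_cases i <;> fin_cases j <;> simp

theorem Pi4_gh (v : ℂ × ℂ) : Pi4 * gh (Fin 2) v * Pi4 = fromBlocks (su v) 0 0 (su v) := by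
  rw [Pi4, gh, sm, fromBlocks_multiply, fromBlocks_multiply]
  congr 1 <;> · ext i j; fin_cases i <;> fin_cases j <;> simp [su, Matrix.mul_apply, Fin.sum_univ_two]

def ePi (t : ℝ) : ℂ := Complex.exp (Real.pi * t * Complex.I)

/-- path from the identity to the flip -/
def Pit (t : ℝ) : Matrix (Fin 2 ⊕ Fin 2) (Fin 2 ⊕ Fin 2) ℂ := ((1 + ePi t) / 2) • 1 + ((1 - ePi t) / 2) • Pi4

theorem Pit_mul (t : ℝ) : Pit t * Pit (-t) = 1 := by
  have h : ePi t * ePi (-t) = 1 := by rw [ePi, ePi, ← Complex.exp_add]; simp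
  rw [Pit, Pit]
  simp only [Matrix.add_mul, Matrix.mul_add, Matrix.smul_mul, Matrix.mul_smul, Matrix.one_mul, Matrix.mul_one, Pi4_sq, smul_smul, smul_add]
  have : ∀ a b c d : ℂ, a + d = 1 → b + c = 0 → (a • (1 : Matrix (Fin 2 ⊕ Fin 2) (Fin 2 ⊕ Fin 2) ℂ) + b • Pi4) + (c • Pi4 + d • 1) = 1 := by
    intro a b c d h1 h2
    have : (a • (1 : Matrix (Fin 2 ⊕ Fin 2) (Fin 2 ⊕ Fin 2) ℂ) + b • Pi4) + (c • Pi4 + d • 1) = (a + d) • 1 + (b + c) • Pi4 := by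
      rw [add_smul, add_smul]; abel
    rw [this, h1, h2]; simp
  apply this
  · linear_combination (1 / 2) * h
  · linear_combination (-1 / 2) * h

theorem Pit_cont : Continuous Pit := by
  unfold Pit ePi
  fun_prop

theorem Pit_zero : Pit 0 = 1 := by simp [Pit, ePi]
theorem Pit_one : Pit 1 = Pi4 := by simp [Pit, ePi, Complex.exp_pi_mul_I]

/-- conjugation by the special unitary family -/
def Fam.sc (U : Fam (rS r) (Fin 2)) : Fam (rS r) (Fin 2) :=
  Fam.cj (fun p => su (inS p.2)) (su_cont.comp (inS_cont.comp continuous_snd)) (fun p => su_unit (inS_ne _))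
    (fun p q h => by
      rcases inS_rel h.2 with h | h
      · left; rw [h]
      · right; rw [h, su_neg]) U

theorem rho (U : Fam (rS r) (Fin 2)) : cls U.sc = cls (U.sum (1 : Fam (rS r) (Fin 2))).gc := by
  have hu : ∀ t, IsUnit (Pit t) := fun t => isUnit_of_mul_eq_one (Pit_mul t)
  have key : Hmt (U.sum (1 : Fam (rS r) (Fin 2))).gc (U.sc.sum (1 : Fam (rS r) (Fin 2))) := by
    refine ⟨Fam.cj (fun p => Pit p.1 * gh (Fin 2) (inS p.2.2) * Pit (-p.1)) ?_ ?_ ?_ 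
      ((U.sum (1 : Fam (rS r) (Fin 2))).comp Prod.snd continuous_snd (fun _ _ h => h.2)), ?_, ?_⟩
    · exact ((Pit_cont.comp (by fun_prop)).matrix_mul (gh_cont.comp (inS_cont.comp (by fun_prop)))).matrix_mul (Pit_cont.comp (by fun_prop))
    · intro p
      exact ((hu _).mul (gh_unit (inS_ne _))).mul (hu _)
    · intro p q h
      rw [← h.1]
      rcases inS_rel h.2.2 with h | h
      · left; rw [h]
      · right; rw [h, gh_neg]; simp
    · rintro ⟨x, w⟩
      simp only [Fam.cj, Fam.gc]
      simp [Pit_zero]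
    · rintro ⟨x, w⟩
      simp only [Fam.cj, Fam.sc]
      have h1 : Pit 1 * gh (Fin 2) (inS w) * Pit (-1) = fromBlocks (su (inS w)) 0 0 (su (inS w)) := by
        have : Pit (-1) = Pi4 := by
          have h := Pit_mul 1
          rw [Pit_one] at h
          calc Pit (-1) = Pi4 * (Pi4 * Pit (-1)) := by rw [← Matrix.mul_assoc, Pi4_sq, Matrix.one_mul]
            _ = Pi4 := by rw [h, Matrix.mul_one]
        rw [Pit_one, this, Pi4_gh]
      have hs := Matrix.mul_nonsing_inv _ ((Matrix.isUnit_iff_isUnit_det _).1 (su_unit (inS_ne w)))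
      have h2 : (fromBlocks (su (inS w)) 0 0 (su (inS w)))⁻¹ = fromBlocks (su (inS w))⁻¹ 0 0 (su (inS w))⁻¹ := by
        apply Matrix.inv_eq_right_inv
        simp [fromBlocks_multiply, hs]
      simp only [Set.Icc.coe_one, h1, h2]
      simp [fromBlocks_multiply, hs]
  rw [cls_of_hmt key, cls_sum_one]

theorem rQ_fst (hr : ∀ x, r x x) (p q : X × Q3) (h : rQ r p q) : r p.1 q.1 := by
  rcases h.1 with h | h
  · rw [h]; exact hr _
  · exact h

theorem rS_fst (hr : ∀ x, r x x) (p q : X × S2) (h : rS r p q) : r p.1 q.1 := by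
  rcases h.1 with h | h
  · rw [h]; exact hr _
  · exact h

theorem su_rQ (p q : X × Q3) (h : rQ r p q) : su q.2.1 = su p.2.1 ∨ su q.2.1 = -su p.2.1 := by
  rcases h.2 with h | h
  · left; rw [h]
  · right; rw [h, su_neg]

/-- the commutator family -/
def Fam.cE (hr : ∀ x, r x x) (u : Fam r (Fin 2)) : Fam (rQ r) (Fin 2) :=
  Fam.cj (s := rQ r) (fun p : X × Q3 => su p.2.1) (su_cont.comp (continuous_subtype_val.comp continuous_snd)) (fun p => su_unit p.2.ne)
    (su_rQ (r := r))
    (u.comp Prod.fst continuous_fst (rQ_fst hr)) *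
  (u.comp Prod.fst continuous_fst (rQ_fst hr))⁻¹

/-- pull back to `X × S2` -/
def Fam.pS (hr : ∀ x, r x x) (u : Fam r ι) : Fam (rS r) ι :=
  u.comp Prod.fst continuous_fst (rS_fst hr)

theorem null_B (hr : ∀ x, r x x) (u : Fam r (Fin 2)) (k : K (rQ r)) (hk : cls (u.cE hr) = k + k) :
    cls ((((u.pS hr).sum (1 : Fam (rS r) (Fin 2))).gc) * ((u.pS hr)⁻¹.sum (1 : Fam (rS r) (Fin 2)))) = 0 := by
  induction k using ind with
  | h ι f =>
  have hE : cls (u.cE hr).onS = 0 := by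
    let j : X → X × Q3 := fun x => (x, k0)
    have hj : Continuous j := by fun_prop
    have hjr : ∀ x y, r x y → rQ r (j x) (j y) := fun x y h => ⟨Or.inr h, Or.inl rfl⟩
    have hp : ∀ p q : X × Q3, rQ r p q → r p.1 q.1 := rQ_fst hr
    have h0 : cls (f.comp j hj hjr) + cls (f.comp j hj hjr) = 0 := by
      have h1 := congrArg (K.map j hj hjr) hk
      rw [map_add, K.map_cls, K.map_cls] at h1
      rw [← h1]
      let G : Fam r (Fin 2) := ⟨fun _ => su k0.1, continuous_const, fun _ => su_unit k0.ne, fun _ _ _ => rfl⟩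
      have : (u.cE hr).comp j hj hjr = G * u * G⁻¹ * u⁻¹ := rfl
      rw [this, cls_mul, cls_mul, cls_mul, cls_inv, cls_inv]; abel
    have h0' := congrArg (K.map Prod.fst continuous_fst hp) h0
    rw [map_add, K.map_cls, map_zero] at h0'
    set f0 := (f.comp j hj hjr).comp Prod.fst continuous_fst hp with hf0
    have hf' : ∀ x, (f * f0⁻¹).f (x, k0) = 1 := fun x => f.mul_inv_f (x, k0)
    have h2 := lemG _ hf'
    have h3 : cls (u.cE hr) = cls (f * f0⁻¹) + cls (f * f0⁻¹) := by
      rw [cls_mul, cls_inv, hk]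
      have : cls f + -cls f0 + (cls f + -cls f0) = cls f + cls f - (cls f0 + cls f0) := by abel
      rw [this, h0', sub_zero]
    have h4 := congrArg (K.map (s := rS r) (fun p : X × S2 => (p.1, iS p.2)) (continuous_fst.prodMk (iS_cont.comp continuous_snd))
      (fun p q h => ⟨h.1, inS_rel h.2⟩)) h3
    rw [map_add] at h4
    rw [← h2]; exact h4
  have h5 : (u.cE hr).onS = (u.pS hr).sc * (u.pS hr)⁻¹ := rfl
  rw [h5, cls_mul, cls_inv, rho] at hE
  rw [cls_mul, cls_sum_one, cls_inv, hE]

end LemR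
end KT

namespace KT

open Matrix unitInterval Filter Topology Fam
open ComplexConjugate

noncomputable section Step

variable {X Y : Type} [TopologicalSpace X] [TopologicalSpace Y] {r : X → X → Prop} {s : Y → Y → Prop}
variable {ι κ n : Type} [Fintype ι] [DecidableEq ι] [Fintype κ] [DecidableEq κ] [Fintype n] [DecidableEq n]

def w1 : S2 := ⟨(1, 0), by simp⟩

/-- spherical coordinates -/
def wS (θ : ℝ) (z : Circle) : S2 := ⟨((Real.sin θ : ℂ) * z, Real.cos θ), by
  simp only [norm_mul, Complex.norm_real, Circle.norm_coe, mul_one, Real.norm_eq_abs, sq_abs]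
  exact Real.sin_sq_add_cos_sq θ⟩

def th (t : I) : ℝ := Real.pi / 2 * min (2 * (t : ℝ)) 1

def ta (t : I) : I := Set.projIcc 0 1 zero_le_one (2 - 2 * (t : ℝ))

theorem th_cont : Continuous th := by unfold th; fun_prop
theorem ta_cont : Continuous ta := continuous_projIcc.comp (by fun_prop)
theorem wS_cont {Z : Type} [TopologicalSpace Z] {f : Z → ℝ} {g : Z → Circle} (hf : Continuous f) (hg : Continuous g) :
    Continuous fun z => wS (f z) (g z) := by
  unfold wS
  refine Continuous.subtype_mk ?_ _
  have : Continuous fun p => (g p : ℂ) := by fun_prop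
  fun_prop

theorem th_zero : th 0 = 0 := by simp [th]
theorem th_late {t : I} (h : 1 / 2 ≤ (t : ℝ)) : th t = Real.pi / 2 := by
  rw [th, min_eq_right (by linarith), mul_one]
theorem th_one : th 1 = Real.pi / 2 := th_late (by norm_num)
theorem ta_early {t : I} (h : (t : ℝ) ≤ 1 / 2) : ta t = 1 := Set.projIcc_of_right_le _ (by linarith)
theorem ta_one : ta 1 = 0 := Set.projIcc_of_le_left _ (by norm_num)

theorem wS_zero (z z' : Circle) : wS 0 z = wS 0 z' := by simp [wS]
theorem wS_late (z : Circle) : (wS (Real.pi / 2) z).1 = ((z : ℂ), 0) := by simp [wS]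

theorem im_zero (z : Circle) (h : (z : ℂ).im = 0) : (z : ℂ) = 1 ∨ (z : ℂ) = -1 := by
  have h1 := Circle.normSq_coe z
  rw [Complex.normSq_apply, h] at h1
  have h2 : ((z : ℂ).re - 1) * ((z : ℂ).re + 1) = 0 := by linarith
  rcases mul_eq_zero.1 h2 with h3 | h3
  · left; apply Complex.ext <;> simp [h]; linarith
  · right; apply Complex.ext <;> simp [h]; linarith

theorem exp_pi_im (z : Circle) : ((Circle.exp Real.pi * z : Circle) : ℂ) = -(z : ℂ) := by
  rw [Circle.coe_mul, Circle.coe_exp, Complex.exp_pi_mul_I]; ring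

variable (hr : ∀ x, r x x) (u : Fam r (Fin 2))

/-- the commutator in doubled form -/
def Bf : Fam (rS r) (Fin 2 ⊕ Fin 2) := 
  (((u.pS hr).sum (1 : Fam (rS r) (Fin 2))).gc) * ((u.pS hr)⁻¹.sum (1 : Fam (rS r) (Fin 2)))

theorem Bf_f (x : X) (w : S2) : (Bf hr u).f (x, w) =
    gh (Fin 2) (inS w) * fromBlocks (u.f x) 0 0 1 * (gh (Fin 2) (inS w))⁻¹ * fromBlocks (u.f x)⁻¹ 0 0 1 := rfl

theorem cj_axis (w : S2) (hw : w.1.2 = 0) (A : Matrix ι ι ℂ) :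
    gh ι (inS w) * fromBlocks A 0 0 1 * (gh ι (inS w))⁻¹ = fromBlocks A 0 0 1 := by
  have : inS w = (w.1.1, 0) := by simp [inS, hw]
  have hu := Matrix.mul_nonsing_inv _ ((Matrix.isUnit_iff_isUnit_det _).1 (gh_unit (ι := ι) (inS_ne w)))
  rw [this] at hu ⊢
  rw [gh_comm, Matrix.mul_assoc, hu, Matrix.mul_one]

theorem Bf_axis (x : X) (w : S2) (hw : w.1.2 = 0) : (Bf hr u).f (x, w) = 1 := by
  rw [Bf_f, cj_axis w hw, fromBlocks_multiply]
  simp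

def gw (y : I × Circle) : Matrix (Fin 2 ⊕ Fin 2) (Fin 2 ⊕ Fin 2) ℂ := gh (Fin 2) (inS (wS (th y.1) y.2))

theorem gw_cont : Continuous gw := by
  have h : Continuous fun y : I × Circle => wS (th y.1) y.2 :=
    wS_cont (th_cont.comp continuous_fst) continuous_snd
  exact gh_cont.comp (inS_cont.comp h)

theorem gw_unit (y : I × Circle) : IsUnit (gw y) := gh_unit (inS_ne _)

/-- the doubled conjugate on the cylinder -/
def PUf : Fam (rC r) (Fin 2 ⊕ Fin 2) where
  f p := gw p.2 * fromBlocks (u.f p.1) 0 0 1 * (gw p.2)⁻¹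
  cont := by
    have h : Continuous fun p : X × (I × Circle) => gw p.2 := gw_cont.comp continuous_snd
    refine (h.matrix_mul ?_).matrix_mul (continuous_inv_of h fun p => gw_unit p.2)
    exact Continuous.matrix_fromBlocks (u.cont.comp continuous_fst) continuous_const continuous_const continuous_const
  unit p := ((gw_unit p.2).mul (isUnit_fromBlocks (u.unit _) isUnit_one)).mul (isUnit_inv (gw_unit p.2))
  rel := by
    rintro ⟨x, t, z⟩ ⟨x', t', z'⟩ ⟨h1, h2, h3⟩
    simp only [gw] at h1 h2 h3 ⊢
    subst h2
    have hx : u.f x' = u.f x := by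
      rcases h1 with h | h
      · rw [h]
      · exact (u.rel _ _ h).symm
    rw [hx]
    rcases h3 with h | h | h
    · rw [h]
    · rw [h, th_zero, wS_zero z z']
    · rw [h, th_one, cj_axis _ (by rw [wS_late]), cj_axis _ (by rw [wS_late])]

def vv : Fin 2 → I → ℝ := ![fun t => Real.sin (th t), fun t => Real.cos (th t)]

theorem gh_corner (a b : ℂ) (A : Matrix (Fin 2) (Fin 2) ℂ) : gh (Fin 2) (a, b) * fromBlocks A 0 0 0 * ghi (Fin 2) (a, b) =
    fromBlocks ((a * conj a) • A) ((a * conj b) • A) ((b * conj a) • A) ((b * conj b) • A) := by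
  simp [gh, ghi, sm, fromBlocks_multiply, smul_smul, mul_comm]

theorem eR_corner (A : Matrix (Fin 2) (Fin 2) ℂ) (c : Fin 2 → Fin 2 → ℂ) :
    ∑ p : Fin 2 × Fin 2, c p.1 p.2 • (eR (Fin 2) p.1 * A * (eR (Fin 2) p.2)ᵀ) =
    fromBlocks (c 0 0 • A) (c 0 1 • A) (c 1 0 • A) (c 1 1 • A) := by
  rw [Fintype.sum_prod_type]
  simp only [Fin.sum_univ_two, eR]
  ext (i | i) (j | j) <;> simp [Matrix.fromRows_mul, transpose_fromRows, Matrix.mul_fromCols]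

theorem PUf_formula (x : X) (t : I) (z : Circle) : (PUf u).f (x, (t, z)) = 1 + ∑ p : Fin 2 × Fin 2,
      ((((vv p.1 t * vv p.2 t : ℝ)) : ℂ) * (z : ℂ) ^ ((p.2 : ℤ) - p.1)) • (eR (Fin 2) p.1 * (u.f x - 1) * (eR (Fin 2) p.2)ᵀ) := by
  have h0 : (PUf u).f (x, (t, z)) = gh (Fin 2) (inS (wS (th t) z)) * fromBlocks (u.f x) 0 0 1 * ghi (Fin 2) (inS (wS (th t) z)) := by
    rw [← gh_inv _ (inS_mem _)]; rfl
  have h1 : fromBlocks (u.f x) 0 0 1 = 1 + fromBlocks (u.f x - 1) 0 0 (0 : Matrix (Fin 2) (Fin 2) ℂ) := by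
    rw [← fromBlocks_one, fromBlocks_add]; simp
  rw [h0, h1, Matrix.mul_add, Matrix.add_mul, Matrix.mul_one, gh_mul, ell_sq, inS_mem, Complex.ofReal_one, one_smul]
  congr 1
  have hz : conj (z : ℂ) = (z : ℂ)⁻¹ := (Circle.coe_inv_eq_conj z).symm.trans (Circle.coe_inv z)
  have hzz : (z : ℂ) * (z : ℂ)⁻¹ = 1 := mul_inv_cancel₀ (Circle.coe_ne_zero z)
  rw [eR_corner (u.f x - 1) (fun b b' => (((vv b t * vv b' t : ℝ)) : ℂ) * (z : ℂ) ^ ((b' : ℤ) - (b : ℤ))), inS, gh_corner]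
  simp only [wS, vv, map_mul, hz, Complex.conj_ofReal]
  have e01 : ∀ a : ℂ, a = a := fun _ => rfl
  congr 1
  · congr 1; simp; linear_combination (Complex.sin (th t)) ^ 2 * hzz
  · congr 1; simp; ring
  · congr 1; simp; ring
  · congr 1; simp

end Step
end KT

namespace KT

open Matrix unitInterval Filter Topology Fam
open ComplexConjugate

noncomputable section Step2

variable {X : Type} [TopologicalSpace X] {r : X → X → Prop}
variable {κ : Type} [Fintype κ] [DecidableEq κ]

/-- halving of an even null family -/
theorem halve [CompactSpace X] [T2Space X] (C : Fam (rC r) κ) (h0 : ∀ x z, C.f (x, (0, z)) = 1) (h1 : ∀ x z, C.f (x, (1, z)) = 1)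
    (hp : ∀ (x : X) (t : I) (z : Circle), (z : ℂ).im = 0 → C.f (x, (t, z)) = 1)
    (hev : ∀ x t z, C.f (x, (t, Circle.exp Real.pi * z)) = C.f (x, (t, z))) :
    ∃ E : Fam (rC r) κ, ∀ᶠ m : ℕ in atTop, kPhi m C = kPhi m E + kPhi m E := by
  let E : Fam (rC r) κ := 
    { f := fun p => if 0 ≤ (p.2.2 : ℂ).im then C.f p else 1
      cont := by
        refine Continuous.if_le C.cont continuous_const continuous_const (by fun_prop) ?_
        rintro ⟨x, t, z⟩ h
        exact hp x t z h.symm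
      unit := fun p => by
        by_cases h : 0 ≤ (p.2.2 : ℂ).im
        · rw [if_pos h]; exact C.unit p
        · rw [if_neg h]; exact isUnit_one
      rel := by
        rintro ⟨x, t, z⟩ ⟨x', t', z'⟩ h
        have hC := C.rel _ _ h
        obtain ⟨ha, hb, hc⟩ := h
        simp only at ha hb hc ⊢
        subst hb
        rcases hc with hc | hc | hc
        · subst hc; rw [hC]
        · subst hc; simp [h0]
        · subst hc; simp [h1] }
  have hE : ∀ x t z, E.f (x, (t, z)) = if 0 ≤ (z : ℂ).im then C.f (x, (t, z)) else 1 := fun _ _ _ => rfl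
  have hE0 : ∀ x z, E.f (x, (0, z)) = 1 := fun x z => by simp [hE, h0]
  have hE1 : ∀ x z, E.f (x, (1, z)) = 1 := fun x z => by simp [hE, h1]
  -- rotations
  let R : Fam (rI (rC r)) κ := 
    { f := fun p => E.f (p.2.1, (p.2.2.1, Circle.exp (Real.pi * p.1) * p.2.2.2))
      cont := E.cont.comp (by fun_prop)
      unit := fun p => E.unit _
      rel := by
        rintro ⟨τ, x, t, z⟩ ⟨τ', x', t', z'⟩ ⟨hτ, ha, hb, hc⟩
        simp only at hτ ha hb hc ⊢
        subst hτ; subst hb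
        rcases hc with hc | hc | hc
        · subst hc
          exact E.rel _ _ ⟨ha, rfl, Or.inl rfl⟩
        · subst hc; simp [hE0]
        · subst hc; simp [hE1] }
  let E2 : Fam (rC r) κ := R.comp (fun p => (1, p)) (by fun_prop) (fun p q h => ⟨rfl, h⟩)
  have hEE : Hmt E E2 := ⟨R, fun p => by simp [R], fun p => rfl⟩
  have hE2 : ∀ x t z, E2.f (x, (t, z)) = if (z : ℂ).im ≤ 0 then C.f (x, (t, z)) else 1 := by
    intro x t z
    have : E2.f (x, (t, z)) = E.f (x, (t, Circle.exp Real.pi * z)) := by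
      have e : E2.f (x, (t, z)) = E.f (x, (t, Circle.exp (Real.pi * ((1 : I) : ℝ)) * z)) := rfl
      rw [e]; simp
    rw [this, hE, hev, exp_pi_im]; simp
  have hC : C = E * E2 := by
    refine ext' ?_
    rintro ⟨x, t, z⟩
    rw [mul_f, hE, hE2]
    rcases lt_trichotomy (z : ℂ).im 0 with h | h | h
    · rw [if_neg (by linarith), if_pos h.le, Matrix.one_mul]
    · rw [if_pos (by linarith), if_pos h.le, hp x t z h, Matrix.mul_one]
    · rw [if_pos h.le, if_neg (by linarith), Matrix.mul_one]
  refine ⟨E, ?_⟩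
  filter_upwards [kPhi_mul E E2, kPhi_hmt hEE] with m a b
  rw [hC, a, b]

theorem step [CompactSpace X] [T2Space X] (hr : ∀ x, r x x) (u : Fam r (Fin 2)) (k : K (rQ r)) (hk : cls (u.cE hr) = k + k) :
    ∃ k' : K r, cls u = k' + k' := by
  have hB : cls (Bf hr u) = 0 := null_B hr u k hk
  obtain ⟨α, _, _, F, hF0, hF1⟩ := cls_eq_zero_iff.1 hB
  let F1 : Fam (rI (rS r)) ((Fin 2 ⊕ Fin 2) ⊕ α) := F.comp (fun p => (p.1, (p.2.1, w1))) (by fun_prop)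
    (fun p q h => ⟨h.1, h.2.1, Or.inl rfl⟩)
  let G := F * F1⁻¹
  have hG : ∀ t x w, G.f (t, (x, w)) = F.f (t, (x, w)) * (F.f (t, (x, w1)))⁻¹ := fun _ _ _ => rfl
  have hG0 : ∀ x w, G.f (0, (x, w)) = fromBlocks ((Bf hr u).f (x, w)) 0 0 1 := by
    intro x w
    rw [hG, hF0, hF0, sum_f, sum_f, Bf_axis hr u x w1 rfl]
    simp
  have hG1 : ∀ x w, G.f (1, (x, w)) = 1 := by
    intro x w; rw [hG, hF1, hF1]; simp
  have hGw : ∀ t x, G.f (t, (x, w1)) = 1 := fun t x => F.mul_inv_f (t, (x, w1))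
  have hGr : ∀ t x x' w w', (x = x' ∨ r x x') → (w'.1 = w.1 ∨ w'.1 = -w.1) → G.f (t, (x, w)) = G.f (t, (x', w')) :=
    fun t x x' w w' h h' => G.rel _ _ ⟨rfl, h, h'⟩
  have hGa : ∀ x w, w.1.2 = 0 → G.f (0, (x, w)) = 1 := by
    intro x w hw; rw [hG0, Bf_axis hr u x w hw, fromBlocks_one]
  let H : Fam (rI (rC r)) ((Fin 2 ⊕ Fin 2) ⊕ α) := 
    { f := fun p => G.f (p.1 * ta p.2.2.1, (p.2.1, wS (th p.2.2.1) p.2.2.2))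
      cont := by
        refine G.cont.comp ?_
        have e1 : Continuous fun p : I × (X × (I × Circle)) => th p.2.2.1 := th_cont.comp (by fun_prop)
        have e2 : Continuous fun p : I × (X × (I × Circle)) => ta p.2.2.1 := ta_cont.comp (by fun_prop)
        have e3 : Continuous fun p : I × (X × (I × Circle)) => wS (th p.2.2.1) p.2.2.2 := wS_cont e1 (by fun_prop)
        fun_prop
      unit := fun p => G.unit _
      rel := by
        rintro ⟨τ, x, t, z⟩ ⟨τ', x', t', z'⟩ ⟨hτ, ha, hb, hc⟩
        simp only at hτ ha hb hc ⊢
        subst hτ; subst hb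
        rcases hc with hc | hc | hc
        · subst hc; exact hGr _ _ _ _ _ ha (Or.inl rfl)
        · subst hc
          rw [th_zero, wS_zero z z']; exact hGr _ _ _ _ _ ha (Or.inl rfl)
        · subst hc
          rw [ta_one, th_one, mul_zero, hGa _ _ (by rw [wS_late]), hGa _ _ (by rw [wS_late])] }
  have hH : ∀ τ x t z, H.f (τ, (x, (t, z))) = G.f (τ * ta t, (x, wS (th t) z)) := fun _ _ _ _ => rfl
  let C0 : Fam (rC r) ((Fin 2 ⊕ Fin 2) ⊕ α) := H.comp (fun p => (0, p)) (by fun_prop) (fun p q h => ⟨rfl, h⟩)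
  let C1 : Fam (rC r) ((Fin 2 ⊕ Fin 2) ⊕ α) := H.comp (fun p => (1, p)) (by fun_prop) (fun p q h => ⟨rfl, h⟩)
  have hC : Hmt C0 C1 := ⟨H, fun _ => rfl, fun _ => rfl⟩
  have hC1 : ∀ x t z, C1.f (x, (t, z)) = G.f (ta t, (x, wS (th t) z)) := by
    intro x t z
    have : C1.f (x, (t, z)) = G.f (1 * ta t, (x, wS (th t) z)) := rfl
    rw [this, one_mul]
  have hC1e : ∀ (x : X) (t : I) (z : Circle), (t : ℝ) ≤ 1 / 2 → C1.f (x, (t, z)) = 1 := by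
    intro x t z ht
    rw [hC1, ta_early ht, hG1]
  obtain ⟨E, hE⟩ := halve C1 (fun x z => hC1e x 0 z (by norm_num))
    (fun x z => by rw [hC1, ta_one, th_one, hGa _ _ (by rw [wS_late])])
    (fun x t z hz => by
      rcases le_total (t : ℝ) (1 / 2) with ht | ht
      · exact hC1e x t z ht
      · rw [hC1, th_late ht, ← hGw (ta t) x]
        symm
        apply hGr _ _ _ _ _ (Or.inl rfl)
        rw [wS_late]
        rcases im_zero z hz with h | h
        · left; rw [h]; rfl
        · right; rw [h]; simp [w1])
    (fun x t z => by
      rcases le_total (t : ℝ) (1 / 2) with ht | ht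
      · rw [hC1e x t _ ht, hC1e x t _ ht]
      · rw [hC1, hC1, th_late ht]
        symm
        apply hGr _ _ _ _ _ (Or.inl rfl)
        rw [wS_late, wS_late, exp_pi_im]
        right; simp)
  have hC0 : C0 = (PUf u).sum (1 : Fam (rC r) α) * (((u⁻¹).sum (1 : Fam r (Fin 2))).cs).sum (1 : Fam (rC r) α) := by
    rw [← sum_mul]
    refine ext' ?_
    rintro ⟨x, t, z⟩
    have : C0.f (x, (t, z)) = G.f (0 * ta t, (x, wS (th t) z)) := rfl
    rw [this, zero_mul, hG0, Bf_f, sum_f, mul_f, mul_one]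
    rfl
  have hPU := kPhi_PU vv (by
      intro b
      have := th_cont
      fin_cases b <;> simp only [vv] <;> simp <;> fun_prop) (fun t => Real.sin_sq_add_cos_sq (th t))
      (by simp [vv, th_zero]) (by simp [vv, th_one]) u (PUf u) (PUf_formula u)
  have hall := hPU.and (hE.and ((kPhi_hmt hC).and ((kPhi_mul ((PUf u).sum (1 : Fam (rC r) α)) ((((u⁻¹).sum (1 : Fam r (Fin 2))).cs).sum (1 : Fam (rC r) α))).and
    ((kPhi_sum_one (κ := α) (PUf u)).and ((kPhi_sum_one (κ := α) (((u⁻¹).sum (1 : Fam r (Fin 2))).cs)).and (kPhi_cs ((u⁻¹).sum (1 : Fam r (Fin 2)))))))))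
  obtain ⟨m, a1, a2, a3, a4, a5, a6, a7⟩ := hall.exists
  refine ⟨-kPhi m E, ?_⟩
  rw [hC0, a4, a5, a6, a1, a7, a2, cls_sum_one, cls_inv, add_smul, one_smul, smul_neg] at a3
  rw [← neg_add, ← a3]; abel

end Step2
end KT

namespace KT

open Matrix unitInterval Filter Topology Fam
open ComplexConjugate

noncomputable section Base

theorem sqrt_path (D : I × Circle → ℂ) (hD : Continuous D) (h0 : ∀ y, D y ≠ 0) (he : ∀ t z, D (t, -z) = D (t, z)) :
    ∃ s : Circle → ℂ, Continuous s ∧ (∀ z, s (-z) = s z) ∧ ∀ z, s z ^ 2 * D (1, z) = D (0, z) := by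
  let P : I → I → Prop := fun t t' => ∃ s : Circle → ℂ, Continuous s ∧ (∀ z, s (-z) = s z) ∧ ∀ z, s z ^ 2 * D (t', z) = D (t, z)
  have hsy : ∀ t t', P t t' → P t' t := by
    rintro t t' ⟨s, hs, hse, h⟩
    have hs0 : ∀ z, s z ≠ 0 := fun z hz => h0 (t, z) (by rw [← h z, hz]; simp)
    refine ⟨fun z => (s z)⁻¹, hs.inv₀ hs0, fun z => by simp only [hse], fun z => ?_⟩
    rw [← h z]
    have := hs0 z
    field_simp
  have htr : ∀ a b c, P a b → P b c → P a c := by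
    rintro a b c ⟨s, hs, hse, h⟩ ⟨s', hs', hse', h'⟩
    refine ⟨fun z => s z * s' z, hs.mul hs', fun z => by simp only [hse, hse'], fun z => ?_⟩
    rw [← h z, ← h' z]; ring
  have hloc : ∀ t, ∀ᶠ t' in 𝓝 t, P t t' := by
    intro t
    have hev : ∀ᶠ t' in 𝓝 t, ∀ z ∈ (Set.univ : Set Circle), ‖D (t, z) / D (t', z) - 1‖ < 1 := by
      apply isCompact_univ.eventually_forall_of_forall_eventually
      intro z _
      have hc : Continuous fun p : I × Circle => ‖D (t, p.2) / D (p.1, p.2) - 1‖ :=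
        (((hD.comp (by fun_prop)).div (hD.comp (by fun_prop)) (fun p => h0 _)).sub continuous_const).norm
      apply hc.continuousAt.eventually_lt continuousAt_const
      simp [div_self (h0 (t, z))]
    filter_upwards [hev] with t' ht'
    have hsl : ∀ z, D (t, z) / D (t', z) ∈ Complex.slitPlane := by
      intro z
      left
      have h1 := ht' z trivial
      have h2 := (Complex.abs_re_le_norm _).trans_lt h1
      rw [Complex.sub_re, Complex.one_re, abs_lt] at h2
      linarith [h2.1]
    have hq : Continuous fun z : Circle => D (t, z) / D (t', z) :=
      (hD.comp (by fun_prop)).div (hD.comp (by fun_prop)) (fun p => h0 _)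
    refine ⟨fun z => Complex.exp (Complex.log (D (t, z) / D (t', z)) / 2), ?_, ?_, ?_⟩
    · exact Complex.continuous_exp.comp ((hq.clog hsl).div_const 2)
    · intro z; simp only [he]
    · intro z
      rw [← Complex.exp_nat_mul]
      push_cast
      rw [mul_div_cancel₀ _ (two_ne_zero), Complex.exp_log (div_ne_zero (h0 _) (h0 _)), div_mul_cancel₀ _ (h0 _)]
  exact PreconnectedSpace.induction₂' P (fun t => (hloc t).mono fun t1 h => ⟨h, hsy _ _ h⟩) ⟨htr⟩ 0 1

/-- relation on the circle -/
def rB : Circle → Circle → Prop := fun z w => w = z ∨ w = -z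

def u0 : Fam rB (Fin 2) where
  f z := !![(z : ℂ) ^ 2, 0; 0, 1]
  cont := by
    refine continuous_matrix fun i j => ?_
    fin_cases i <;> fin_cases j <;> simp <;> fun_prop
  unit z := by
    rw [Matrix.isUnit_iff_isUnit_det, Matrix.det_fin_two_of]; simp
  rel z w h := by
    rcases h with rfl | rfl
    · rfl
    · simp

theorem u0_not : ¬ ∃ k : K rB, cls u0 = k + k := by
  rintro ⟨k, hk⟩
  induction k using ind with | h ι h => 
  rw [← cls_sum, cls_eq_iff] at hk
  obtain ⟨α, _, _, H, H0, H1⟩ := hk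
  have hd : ∀ z, (h.f z).det ≠ 0 := fun z => ((Matrix.isUnit_iff_isUnit_det _).1 (h.unit z)).ne_zero
  obtain ⟨s, hs, hse, hsq⟩ := sqrt_path (fun y => (H.f y).det) H.cont.matrix_det
    (fun y => ((Matrix.isUnit_iff_isUnit_det _).1 (H.unit y)).ne_zero)
    (fun t z => by simp only [H.rel (t, z) (t, -z) ⟨rfl, Or.inr rfl⟩])
  have key : ∀ z, (s z * (h.f z).det) ^ 2 = (z : ℂ) ^ 2 := by
    intro z
    have h1 := hsq z
    simp only [H0, H1] at h1
    rw [sum_f, sum_f, inv_f, sum_f, one_f, Matrix.det_fromBlocks_zero₂₁, Matrix.det_fromBlocks_zero₂₁, Matrix.det_nonsing_inv, Matrix.det_fromBlocks_zero₂₁] at h1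
    simp only [one_f, Matrix.det_one, mul_one] at h1
    have h2 : (u0.f z).det = (z : ℂ) ^ 2 := by
      simp [u0, Matrix.det_fin_two_of]
    rw [h2, Ring.inverse_eq_inv'] at h1
    rw [mul_pow, h1]
    have := hd z
    field_simp
  have hh : Continuous fun z : Circle => s z * (h.f z).det * (z : ℂ)⁻¹ :=
    (hs.mul h.cont.matrix_det).mul (Continuous.inv₀ (by fun_prop) (fun z => z.coe_ne_zero))
  have hodd : ∀ z : Circle, s (-z) * (h.f (-z)).det * ((-z : Circle) : ℂ)⁻¹ = - (s z * (h.f z).det * (z : ℂ)⁻¹) := by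
    intro z
    rw [hse, ← h.rel z (-z) (Or.inr rfl)]
    simp
  have hpm : ∀ z : Circle, s z * (h.f z).det * (z : ℂ)⁻¹ = 1 ∨ s z * (h.f z).det * (z : ℂ)⁻¹ = -1 := by
    intro z
    rw [← sq_eq_one_iff]
    rw [mul_pow, key, ← mul_pow, mul_inv_cancel₀ z.coe_ne_zero, one_pow]
  have hre : Continuous fun z : Circle => (s z * (h.f z).det * (z : ℂ)⁻¹).re := Complex.continuous_re.comp hh
  have hconn : PreconnectedSpace Circle := inferInstance
  have h1 := hpm 1
  have hm := hodd 1
  have : ∃ a b : Circle, (s a * (h.f a).det * (a : ℂ)⁻¹).re = -1 ∧ (s b * (h.f b).det * (b : ℂ)⁻¹).re = 1 := by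
    rcases h1 with h1 | h1
    · exact ⟨-1, 1, by rw [hm, h1]; simp, by rw [h1]; simp⟩
    · exact ⟨1, -1, by rw [h1]; simp, by rw [hm, h1]; simp⟩
  obtain ⟨a, b, ha, hb⟩ := this
  obtain ⟨z, hz⟩ := mem_range_of_exists_le_of_exists_ge hre ⟨a, ha.le.trans (by norm_num : (-1:ℝ) ≤ 0)⟩ ⟨b, (by norm_num : (0:ℝ) ≤ 1).trans hb.ge⟩
  simp only at hz
  rcases hpm z with h | h <;> rw [h] at hz <;> simp at hz

end Base
end KT

namespace KT

open Matrix unitInterval Filter Topology Fam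
open ComplexConjugate

noncomputable section Final

/-- underlying matrix -/
def mx (A : SU 2) : Matrix (Fin 2) (Fin 2) ℂ := ((A : Matrix.unitaryGroup (Fin 2) ℂ) : Matrix (Fin 2) (Fin 2) ℂ)

theorem mx_inj {A B : SU 2} (h : mx A = mx B) : A = B := Subtype.ext (Subtype.ext h)
theorem mx_mul (A B : SU 2) : mx (A * B) = mx A * mx B := rfl
theorem mx_one : mx 1 = 1 := rfl
theorem mx_inv (A : SU 2) : mx A⁻¹ = (mx A)⁻¹ := by
  symm
  apply Matrix.inv_eq_right_inv
  rw [← mx_mul, mul_inv_cancel, mx_one]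
theorem mx_unit (A : SU 2) : IsUnit (mx A) :=
  isUnit_of_mul_eq_one (B := mx A⁻¹) (by rw [← mx_mul, mul_inv_cancel, mx_one])
theorem mx_cont : Continuous mx := continuous_subtype_val.comp continuous_subtype_val

theorem su_mem (p : Q3) : su p.1 ∈ Matrix.unitaryGroup (Fin 2) ℂ := by
  rw [Matrix.mem_unitaryGroup_iff]
  have h := p.2
  have hsum : p.1.1 * conj p.1.1 + p.1.2 * conj p.1.2 = 1 := by
    rw [Complex.mul_conj', Complex.mul_conj']; exact_mod_cast h
  ext i j
  fin_cases i <;> fin_cases j <;> simp [su, Matrix.mul_apply, Fin.sum_univ_two, Matrix.star_apply]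
  · linear_combination hsum
  · ring
  · ring
  · linear_combination hsum

/-- the special unitary element attached to a unit vector -/
def toSU (p : Q3) : SU 2 := ⟨⟨su p.1, su_mem p⟩, by
  change (su p.1).det = 1
  rw [su_det, ell_sq, p.2]; simp⟩

theorem mx_toSU (p : Q3) : mx (toSU p) = su p.1 := rfl

theorem toSU_cont : Continuous toSU :=
  ((su_cont.comp continuous_subtype_val).subtype_mk _).subtype_mk _

theorem mk_eq_of_neg {A B : SU 2} (h : mx B = - mx A) : (QuotientGroup.mk A : PU 2) = QuotientGroup.mk B := by
  rw [QuotientGroup.eq, Subgroup.mem_center_iff]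
  have hm : mx (A⁻¹ * B) = -1 := by
    rw [mx_mul, h, mul_neg, ← mx_mul, inv_mul_cancel, mx_one]
  intro g
  apply mx_inj
  rw [mx_mul g, mx_mul (A⁻¹ * B), hm]; simp

theorem mk_toSU {p q : Q3} (h : q.1 = p.1 ∨ q.1 = -p.1) : (QuotientGroup.mk (toSU p) : PU 2) = QuotientGroup.mk (toSU q) := by
  rcases h with h | h
  · rw [Subtype.ext h]
  · apply mk_eq_of_neg; rw [mx_toSU, mx_toSU, h, su_neg]

/-- commutator with a lift -/
def lc (g : SU 2) : PU 2 → SU 2 :=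
  Quotient.lift (fun b : SU 2 => g * b * g⁻¹ * b⁻¹) (by
    intro a b h
    have h' := QuotientGroup.leftRel_apply.1 h
    rw [Subgroup.mem_center_iff] at h'
    obtain ⟨z, rfl⟩ : ∃ z, b = a * z := ⟨a⁻¹ * b, by group⟩
    simp only [inv_mul_cancel_left] at h'
    have hz : ∀ g, g * z = z * g := h'
    have e : g * (a * z) * g⁻¹ * (a * z)⁻¹ = g * a * (z * g⁻¹) * z⁻¹ * a⁻¹ := by group
    change g * a * g⁻¹ * a⁻¹ = g * (a * z) * g⁻¹ * (a * z)⁻¹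
    rw [e, ← hz]; group)

theorem lc_mk (g b : SU 2) : lc g (QuotientGroup.mk b) = g * b * g⁻¹ * b⁻¹ := rfl

theorem lc_one (g : SU 2) : lc g 1 = 1 := by
  change lc g (QuotientGroup.mk 1) = 1
  rw [lc_mk]; group

theorem lc_cont : Continuous fun p : SU 2 × PU 2 => lc p.1 p.2 := by
  have hq : IsOpenQuotientMap (Prod.map (id : SU 2 → SU 2) (QuotientGroup.mk : SU 2 → PU 2)) :=
    IsOpenQuotientMap.id.prodMap QuotientGroup.isOpenQuotientMap_mk
  rw [← hq.continuous_comp_iff]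
  change Continuous fun p : SU 2 × SU 2 => p.1 * p.2 * p.1⁻¹ * p.2⁻¹
  fun_prop

attribute [irreducible] lc

theorem lc_cont2 {Y : Type} [TopologicalSpace Y] {f : Y → SU 2} {g : Y → PU 2} (hf : Continuous f) (hg : Continuous g) :
    Continuous fun y => mx (lc (f y) (g y)) := by
  have h : Continuous fun y => lc (f y) (g y) := Continuous.comp (g := fun p : SU 2 × PU 2 => lc p.1 p.2) lc_cont (hf.prodMk hg)
  exact mx_cont.comp h

theorem lc_neg {g g' : SU 2} (h : mx g' = - mx g) (b : PU 2) : lc g' b = lc g b := by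
  obtain ⟨b, rfl⟩ := QuotientGroup.mk_surjective b
  rw [lc_mk g' b, lc_mk g b]
  apply mx_inj
  simp only [mx_mul, mx_inv, h]
  rw [inv_neg_of (mx_unit g)]; simp

theorem lc_rel {p q : Q3} (h : q.1 = p.1 ∨ q.1 = -p.1) (b : PU 2) : lc (toSU p) b = lc (toSU q) b := by
  rcases h with h | h
  · rw [Subtype.ext h]
  · symm; apply lc_neg; rw [mx_toSU, mx_toSU, h, su_neg]

theorem ic_cont {G : Type} [Group G] [TopologicalSpace G] [IsTopologicalGroup G] :
    ∀ n : ℕ, Continuous fun g : Fin n → G => iteratedCommutator n g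
  | 0 => continuous_const
  | 1 => continuous_apply 0
  | n + 2 => by
    have ih := ic_cont (G := G) (n + 1)
    have h : Continuous fun g : Fin (n + 2) → G => iteratedCommutator (n + 1) fun i : Fin (n + 1) => g i.castSucc :=
      ih.comp (by fun_prop)
    have h' : Continuous fun g : Fin (n + 2) → G => g (Fin.last (n + 1)) := continuous_apply _
    exact ((h'.mul h).mul h'.inv).mul h.inv

theorem ic_one {G : Type} [Group G] : ∀ n : ℕ, iteratedCommutator n (fun _ => (1 : G)) = 1
  | 0 => rfl
  | 1 => rfl
  | n + 2 => by
    have ih := ic_one (G := G) (n + 1)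
    rw [iteratedCommutator, ih]; simp

instance : CompactSpace Q3 := by
  have : IsCompact {p : ℂ × ℂ | ‖p.1‖ ^ 2 + ‖p.2‖ ^ 2 = 1} := by
    apply Metric.isCompact_of_isClosed_isBounded
    · exact isClosed_eq (by fun_prop) continuous_const
    · refine (Metric.isBounded_iff_subset_closedBall 0).2 ⟨1, fun p hp => ?_⟩
      have hp' : ‖p.1‖ ^ 2 + ‖p.2‖ ^ 2 = 1 := hp
      rw [mem_closedBall_zero_iff, Prod.norm_def]
      apply max_le <;> nlinarith [norm_nonneg p.1, norm_nonneg p.2, sq_nonneg ‖p.1‖, sq_nonneg ‖p.2‖]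
  exact isCompact_iff_compactSpace.1 this

/-- the inductive package -/
def Stage (n : ℕ) : Prop := ∃ (X : Type) (_ : TopologicalSpace X) (_ : CompactSpace X) (_ : T2Space X)
  (r : X → X → Prop) (_ : ∀ x, r x x) (u : Fam r (Fin 2)) (θ : X → Fin n → PU 2),
  Continuous θ ∧ (∀ x y, r x y → θ x = θ y) ∧
  (∀ x, ∃ A : SU 2, ∃ c : ℂ, c ≠ 0 ∧ (QuotientGroup.mk A : PU 2) = iteratedCommutator n (θ x) ∧ u.f x = c • mx A) ∧
  ¬ ∃ k : K r, cls u = k + k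

theorem inv_smul_of {c : ℂ} (hc : c ≠ 0) {A : Matrix (Fin 2) (Fin 2) ℂ} (hA : IsUnit A) : (c • A)⁻¹ = c⁻¹ • A⁻¹ := by
  apply Matrix.inv_eq_right_inv
  rw [Matrix.smul_mul, Matrix.mul_smul, smul_smul, mul_inv_cancel₀ hc, one_smul,
    Matrix.mul_nonsing_inv _ ((Matrix.isUnit_iff_isUnit_det _).1 hA)]

theorem cE_eq {X : Type} [TopologicalSpace X] {r : X → X → Prop} (hr : ∀ x, r x x) (u : Fam r (Fin 2)) (x : X) (p : Q3)
    (A : SU 2) (c : ℂ) (hc : c ≠ 0) (h : u.f x = c • mx A) :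
    (u.cE hr).f (x, p) = mx (lc (toSU p) (QuotientGroup.mk A)) := by
  have e : (u.cE hr).f (x, p) = su p.1 * u.f x * (su p.1)⁻¹ * (u.f x)⁻¹ := rfl
  rw [e, h, lc_mk, inv_smul_of hc (mx_unit A)]
  simp only [mx_mul, mx_inv, mx_toSU]
  simp only [Matrix.mul_smul, Matrix.smul_mul, smul_smul]
  rw [inv_mul_cancel₀ hc, one_smul]

/-- circle in the sphere -/
def cQ (z : Circle) : Q3 := ⟨((z : ℂ), 0), by simp [Circle.norm_coe]⟩

theorem stage_one : Stage 1 := by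
  refine ⟨Circle, inferInstance, inferInstance, inferInstance, rB, fun x => Or.inl rfl, u0,
    fun z _ => QuotientGroup.mk (toSU (cQ z)), ?_, ?_, ?_, u0_not⟩
  · refine continuous_pi fun _ => ?_
    refine (QuotientGroup.continuous_mk).comp (toSU_cont.comp ?_)
    unfold cQ
    exact Continuous.subtype_mk (by fun_prop) _
  · intro x y h
    funext _
    apply mk_toSU
    rcases h with rfl | rfl
    · left; rfl
    · right; simp [cQ]
  · intro z
    refine ⟨toSU (cQ z), (z : ℂ), z.coe_ne_zero, rfl, ?_⟩
    rw [mx_toSU]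
    ext i j
    fin_cases i <;> fin_cases j <;> simp [u0, su, cQ, sq, Complex.mul_conj', Circle.norm_coe]

theorem stage_succ (n : ℕ) (h : Stage (n + 1)) : Stage (n + 2) := by
  obtain ⟨X, _, _, _, r, hr, u, θ, hθ, hθr, hA, hu⟩ := h
  refine ⟨X × Q3, inferInstance, inferInstance, inferInstance, rQ r, fun x => ⟨Or.inl rfl, Or.inl rfl⟩, u.cE hr,
    fun y => Fin.snoc (θ y.1) (QuotientGroup.mk (toSU y.2)), ?_, ?_, ?_, ?_⟩
  · exact Continuous.finSnoc (hθ.comp continuous_fst) (QuotientGroup.continuous_mk.comp (toSU_cont.comp continuous_snd))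
  · intro p q hpq
    have h1 : θ p.1 = θ q.1 := hθr _ _ (rQ_fst hr p q hpq)
    have h2 := mk_toSU hpq.2
    simp only [h1, h2]
  · rintro ⟨x, p⟩
    obtain ⟨A, c, hc, h1, h2⟩ := hA x
    refine ⟨lc (toSU p) (QuotientGroup.mk A), 1, one_ne_zero, ?_, ?_⟩
    · rw [lc_mk, iteratedCommutator]
      simp only [Fin.snoc_last, Fin.snoc_castSucc]
      rw [← h1]
      rfl
    · rw [one_smul]; exact cE_eq hr u x p A c hc h2
  · rintro ⟨k, hk⟩
    exact hu (step hr u k hk)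

theorem stage : ∀ n, Stage (n + 1)
  | 0 => stage_one
  | n + 1 => stage_succ n (stage n)

theorem final (n : ℕ) (hn : 1 ≤ n) (c : C((Fin n → PU 2), PU 2)) (hc : ∀ g : Fin n → PU 2, c g = iteratedCommutator n g)
    (y : PU 2) (H : c.Homotopic (ContinuousMap.const (Fin n → PU 2) y)) : False := by
  obtain ⟨m, rfl⟩ : ∃ m, n = m + 1 := ⟨n - 1, by omega⟩
  obtain ⟨X, _, _, _, r, hr, u, θ, hθ, hθr, hA, hu⟩ := stage m
  obtain ⟨H⟩ := H
  obtain ⟨B, hBd⟩ : ∃ B : I × (X × Q3) → PU 2, ∀ p, B p = H (p.1, θ p.2.1) * (H (p.1, fun _ => 1))⁻¹ := ⟨_, fun _ => rfl⟩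
  have hB : Continuous B := by
    have h1 : Continuous fun p : I × (X × Q3) => H (p.1, θ p.2.1) :=
      H.continuous.comp (continuous_fst.prodMk (hθ.comp (continuous_fst.comp continuous_snd)))
    have h2 : Continuous fun p : I × (X × Q3) => H (p.1, fun _ => 1) :=
      H.continuous.comp (continuous_fst.prodMk continuous_const)
    rw [show B = _ from funext hBd]
    exact h1.mul h2.inv
  have hm : Hmt (u.cE hr) 1 := by
    refine ⟨⟨fun p => mx (lc (toSU p.2.2) (B p)), ?_, fun p => mx_unit _, ?_⟩, ?_, ?_⟩
    · exact lc_cont2 (toSU_cont.comp (continuous_snd.comp continuous_snd)) hB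
    · intro p q hpq
      have h1 : θ p.2.1 = θ q.2.1 := hθr _ _ (rQ_fst hr _ _ hpq.2)
      have h2 : B p = B q := by simp only [hBd, h1, hpq.1]
      simp only [h2, lc_rel hpq.2.2]
    · rintro ⟨x, p⟩
      obtain ⟨A, a, ha, h1, h2⟩ := hA x
      rw [cE_eq hr u x p A a ha h2, h1]
      have : B (0, x, p) = iteratedCommutator (m + 1) (θ x) := by
        simp only [hBd, H.apply_zero, hc, ic_one]; simp
      simp only [this]
    · rintro ⟨x, p⟩
      have : B (1, x, p) = 1 := by
        simp only [hBd, H.apply_one, ContinuousMap.const_apply]; simp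
      simp only [this, lc_one, mx_one, one_f]
  have h0 : cls (u.cE hr) = 0 + 0 := by rw [cls_of_hmt hm, cls_one, add_zero]
  exact hu (step hr u 0 h0)

end Final
end KT

/-- **Theorem (Rao).** For every `n ≥ 1` the iterated commutator map
`cₙ : PU(2)ⁿ → PU(2)` is continuous and not null-homotopic. -/
theorem iteratedCommutator_PU2_not_nullHomotopic (n : ℕ) (hn : 1 ≤ n) :
    Continuous (fun g : Fin n → PU 2 => iteratedCommutator n g) ∧
    ∀ c : C((Fin n → PU 2), PU 2),
      (∀ g : Fin n → PU 2, c g = iteratedCommutator n g) →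
        ¬∃ y : PU 2, c.Homotopic (ContinuousMap.const (Fin n → PU 2) y) := by
  exact ⟨KT.ic_cont n, fun c hc ⟨y, H⟩ => KT.final n hn c hc y H⟩
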